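/- arXiv:2212.03227 — 2 statements merged into one kernel-verified Lean document; each statement's English description precedes it below -/
import Mathlib

section
/- For every positive integer k ≥ 2 and every real y > k, the sum over all integers n ≥ 1 whose smallest prime factor exceeds y of d_k(n²)/n² equals exp(O(k²/(y log y))), where d_k denotes the k-th divisor function. -/
/-- The `k`-th divisor function: the number of ways to write `n` as an ordered
product of `k` positive integers. -/
def dk (k n : ℕ) : ℕ :=
  Fintype.card {f : Fin k → Fin (n + 1) // ∏ i, ((f i : ℕ)) = n}

open Finset in
lemma dk_eq (k n : ℕ) (hn : n ≠ 0) : dk k n = (Nat.finMulAntidiag k n).card := by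
  unfold dk
  rw [← Fintype.card_coe]
  refine Fintype.card_congr ⟨fun f => ⟨fun i => (f.1 i : ℕ), ?_⟩, fun f => ⟨fun i => ⟨f.1 i, ?_⟩, ?_⟩, ?_, ?_⟩
  · rw [Nat.mem_finMulAntidiag]; exact ⟨f.2, hn⟩
  · exact Nat.lt_succ_of_le (Nat.le_of_dvd (Nat.pos_of_ne_zero hn) (Nat.dvd_of_mem_finMulAntidiag f.2 i))
  · exact Nat.prod_eq_of_mem_finMulAntidiag f.2
  · intro f; rfl
  · intro f; rfl

lemma exists_decomp (k : ℕ) : ∀ (f : Fin k → ℕ) (a b : ℕ), a ≠ 0 → b ≠ 0 → ∏ i, f i = a * b →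
    ∃ g h : Fin k → ℕ, f = g * h ∧ ∏ i, g i = a ∧ ∏ i, h i = b := by
  induction k with
  | zero =>
    intro f a b ha hb hf
    have h1 : a * b = 1 := by simpa using hf.symm
    have := Nat.eq_one_of_mul_eq_one_right h1
    have := Nat.eq_one_of_mul_eq_one_left h1
    exact ⟨f, f, Subsingleton.elim _ _, by simp [*], by simp [*]⟩
  | succ k ih =>
    intro f a b ha hb hf
    rw [Fin.prod_univ_succ] at hf
    obtain ⟨u, v, ⟨a', rfl⟩, ⟨b', rfl⟩, h0⟩ := exists_dvd_and_dvd_of_dvd_mul (Dvd.intro _ hf)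
    have hu : u ≠ 0 := left_ne_zero_of_mul ha
    have hv : v ≠ 0 := left_ne_zero_of_mul hb
    obtain ⟨g, h, hgh, hg, hh⟩ := ih (fun i => f i.succ) a' b' (right_ne_zero_of_mul ha)
      (right_ne_zero_of_mul hb) (by
        rw [h0] at hf
        apply Nat.eq_of_mul_eq_mul_left (Nat.pos_of_ne_zero (mul_ne_zero hu hv))
        rw [hf]; ring)
    refine ⟨Fin.cons u g, Fin.cons v h, ?_, ?_, ?_⟩
    · funext i
      refine Fin.cases ?_ (fun j => ?_) i
      · simp [h0]
      · simpa using congrFun hgh j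
    · simp [Fin.prod_univ_succ, hg]
    · simp [Fin.prod_univ_succ, hh]

lemma dk_mul_le (k a b : ℕ) (ha : a ≠ 0) (hb : b ≠ 0) : dk k (a * b) ≤ dk k a * dk k b := by
  rw [dk_eq _ _ ha, dk_eq _ _ hb, dk_eq _ _ (mul_ne_zero ha hb), ← Finset.card_product]
  apply Finset.card_le_card_of_surjOn (fun x : (Fin k → ℕ) × (Fin k → ℕ) => x.1 * x.2)
  intro f hf
  obtain ⟨g, h, hgh, hg, hh⟩ := exists_decomp k f a b ha hb
    (Nat.prod_eq_of_mem_finMulAntidiag (Finset.mem_coe.1 hf))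
  exact ⟨(g, h), by simp [Nat.mem_finMulAntidiag, *], hgh.symm⟩

lemma eq_mulSingle (k p : ℕ) (hp : p.Prime) (g : Fin k → ℕ) (hg : ∏ i, g i = p) :
    ∃ i, g = Pi.mulSingle i p := by
  have h1 : p ∣ ∏ i, g i := by rw [hg]
  obtain ⟨i, -, hi⟩ := (hp.prime.dvd_finsetProd_iff _).1 h1
  have h2 : g i = p := Nat.dvd_antisymm (hg ▸ Finset.dvd_prod_of_mem g (Finset.mem_univ i)) hi
  refine ⟨i, ?_⟩
  rw [← Finset.mul_prod_erase _ _ (Finset.mem_univ i), h2] at hg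
  have h3 : ∏ x ∈ Finset.univ.erase i, g x = 1 :=
    Nat.eq_of_mul_eq_mul_left hp.pos (by rw [hg, mul_one])
  rw [Finset.prod_eq_one_iff] at h3
  funext j
  by_cases hj : j = i
  · subst hj; simp [h2]
  · rw [Pi.mulSingle_eq_of_ne hj]; exact h3 j (by simp [hj])

lemma dk_prime_sq (k p : ℕ) (hp : p.Prime) : dk k (p ^ 2) ≤ (k + 1).choose 2 := by
  have h0 := hp.ne_zero
  rw [dk_eq _ _ (pow_ne_zero 2 h0)]
  have hc := Finset.card_sym2 (Finset.univ : Finset (Fin k))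
  rw [Finset.card_univ, Fintype.card_fin] at hc
  rw [← hc]
  apply Finset.card_le_card_of_surjOn (fun x : Sym2 (Fin k) => Sym2.lift
    ⟨fun i j => (Pi.mulSingle i p * Pi.mulSingle j p : Fin k → ℕ), fun i j => mul_comm _ _⟩ x)
  intro f hf
  obtain ⟨g, h, hgh, hg, hh⟩ := exists_decomp k f p p h0 h0
    (by rw [Nat.prod_eq_of_mem_finMulAntidiag (Finset.mem_coe.1 hf), sq])
  obtain ⟨i, rfl⟩ := eq_mulSingle k p hp g hg
  obtain ⟨j, rfl⟩ := eq_mulSingle k p hp h hh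
  exact ⟨s(i, j), by simp, by simp [hgh]⟩

lemma dk_one (k : ℕ) : dk k 1 = 1 := by
  rw [dk_eq _ _ one_ne_zero]
  rw [Nat.finMulAntidiag_one, Finset.card_singleton]

open ArithmeticFunction in
lemma dk_sq_le (k n : ℕ) (hn : n ≠ 0) : dk k (n ^ 2) ≤ (k + 1).choose 2 ^ (cardFactors n) := by
  induction n using induction_on_primes with
  | zero => exact absurd rfl hn
  | one => simp [dk_one]
  | prime_mul p a hp ih =>
    have ha : a ≠ 0 := right_ne_zero_of_mul hn
    rw [cardFactors_mul hp.ne_zero ha, cardFactors_apply_prime hp, mul_pow, pow_add, pow_one]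
    exact (dk_mul_le _ _ _ (pow_ne_zero 2 hp.ne_zero) (pow_ne_zero 2 ha)).trans
      (Nat.mul_le_mul (dk_prime_sq k p hp) (ih ha))

lemma prime_dyadic (y : ℝ) (hy : 2 ≤ y) (J : ℕ) :
    ∑ p ∈ Finset.Ioc ⌊y⌋₊ ⌊2 ^ J * y⌋₊ with p.Prime, Real.log p / (p : ℝ) ^ 2
      ≤ 4 * Real.log 4 / y * (1 - (1 / 2) ^ J) := by
  induction J with
  | zero => simp
  | succ J ih =>
    have hy0 : 0 < y := by linarith
    have h1 : ⌊y⌋₊ ≤ ⌊2 ^ J * y⌋₊ :=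
      Nat.floor_le_floor (le_mul_of_one_le_left hy0.le (one_le_pow₀ (by norm_num)))
    have h2 : ⌊2 ^ J * y⌋₊ ≤ ⌊2 ^ (J + 1) * y⌋₊ :=
      Nat.floor_le_floor (by gcongr <;> norm_num)
    rw [← Finset.Ioc_union_Ioc_eq_Ioc h1 h2, Finset.filter_union, Finset.sum_union]
    swap
    · exact Finset.disjoint_filter_filter (Finset.Ioc_disjoint_Ioc_of_le le_rfl)
    have h3 : ∑ p ∈ Finset.Ioc ⌊2 ^ J * y⌋₊ ⌊2 ^ (J + 1) * y⌋₊ with p.Prime,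
        Real.log p / (p : ℝ) ^ 2 ≤ Chebyshev.theta (2 ^ (J + 1) * y) / (2 ^ J * y) ^ 2 := by
      unfold Chebyshev.theta
      rw [Finset.sum_div]
      calc _ ≤ ∑ p ∈ Finset.Ioc ⌊2 ^ J * y⌋₊ ⌊2 ^ (J + 1) * y⌋₊ with p.Prime,
            Real.log p / (2 ^ J * y) ^ 2 := by
            apply Finset.sum_le_sum
            intro p hp
            simp only [Finset.mem_filter, Finset.mem_Ioc] at hp
            have := Nat.lt_of_floor_lt hp.1.1
            have := Real.log_natCast_nonneg p
            gcongr
        _ ≤ _ := by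
            apply Finset.sum_le_sum_of_subset_of_nonneg
            · exact Finset.filter_subset_filter _ (Finset.Ioc_subset_Ioc_left (Nat.zero_le _))
            · intro p _ _
              have := Real.log_natCast_nonneg p
              positivity
    have h4 := Chebyshev.theta_le_log4_mul_x (x := 2 ^ (J + 1) * y) (by positivity)
    have h5 : Chebyshev.theta (2 ^ (J + 1) * y) / (2 ^ J * y) ^ 2 ≤
        Real.log 4 * (2 ^ (J + 1) * y) / (2 ^ J * y) ^ 2 := by gcongr
    have h6 : Real.log 4 * (2 ^ (J + 1) * y) / (2 ^ J * y) ^ 2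
        = 4 * Real.log 4 / y * ((1 / 2) ^ J - (1 / 2) ^ (J + 1)) := by
      rw [one_div, inv_pow, inv_pow, pow_succ]
      field_simp
      ring
    have h7 : 4 * Real.log 4 / y * (1 - (1 / 2) ^ (J + 1)) =
      4 * Real.log 4 / y * (1 - (1 / 2) ^ J) +
        4 * Real.log 4 / y * ((1 / 2) ^ J - (1 / 2) ^ (J + 1)) := by ring
    linarith

lemma prime_tail (y : ℝ) (hy : 2 ≤ y) (N : ℕ) :
    ∑ p ∈ N.primesBelow with y < (p : ℕ), 1 / (p : ℝ) ^ 2 ≤ 4 * Real.log 4 / (y * Real.log y) := by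
  have hy0 : 0 < y := by linarith
  have hl : 0 < Real.log y := Real.log_pos (by linarith)
  have hJ : (N : ℝ) ≤ 2 ^ N * y := by
    have : (N : ℝ) ≤ 2 ^ N := by exact_mod_cast Nat.lt_two_pow_self.le
    nlinarith
  calc _ ≤ ∑ p ∈ N.primesBelow with y < (p : ℕ), Real.log p / (p : ℝ) ^ 2 / Real.log y := by
        apply Finset.sum_le_sum
        intro p hp
        simp only [Finset.mem_filter] at hp
        have : Real.log y ≤ Real.log p := Real.log_le_log hy0 hp.2.le
        rw [div_right_comm]
        gcongr
        rwa [one_le_div hl]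
    _ ≤ ∑ p ∈ Finset.Ioc ⌊y⌋₊ ⌊2 ^ N * y⌋₊ with p.Prime, Real.log p / (p : ℝ) ^ 2 / Real.log y := by
        apply Finset.sum_le_sum_of_subset_of_nonneg
        · intro p hp
          simp only [Finset.mem_filter, Nat.mem_primesBelow, Finset.mem_Ioc] at hp ⊢
          refine ⟨⟨(Nat.floor_lt hy0.le).2 hp.2, Nat.le_floor (le_trans ?_ hJ)⟩, hp.1.2⟩
          exact_mod_cast hp.1.1.le
        · intro p _ _
          have := Real.log_natCast_nonneg p
          positivity
    _ ≤ (4 * Real.log 4 / y * (1 - (1 / 2) ^ N)) / Real.log y := by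
        rw [← Finset.sum_div]
        gcongr
        exact prime_dyadic y hy N
    _ ≤ (4 * Real.log 4 / y * 1) / Real.log y := by
        have : (0:ℝ) ≤ (1 / 2) ^ N := by positivity
        have := Real.log_pos (show (1:ℝ) < 4 by norm_num)
        gcongr
        linarith
    _ = _ := by rw [mul_one, div_div]

/-- The completely multiplicative majorant. -/
noncomputable def maj (D y : ℝ) : ℕ →* ℝ where
  toFun n := open Classical in if (n ≠ 0 ∧ ∀ p : ℕ, p.Prime → p ∣ n → y < p) then
    D ^ (ArithmeticFunction.cardFactors n) / (n : ℝ) ^ 2 else 0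
  map_one' := by
    rw [if_pos]
    · simp
    · refine ⟨one_ne_zero, fun p hp h => absurd (Nat.dvd_one.1 h) hp.ne_one⟩
  map_mul' a b := by
    by_cases ha : (a ≠ 0 ∧ ∀ p : ℕ, p.Prime → p ∣ a → y < p)
    · by_cases hb : (b ≠ 0 ∧ ∀ p : ℕ, p.Prime → p ∣ b → y < p)
      · rw [if_pos ha, if_pos hb, if_pos, ArithmeticFunction.cardFactors_mul ha.1 hb.1, pow_add]
        · push_cast; rw [mul_pow, mul_div_mul_comm]
        · refine ⟨mul_ne_zero ha.1 hb.1, fun p hp h => ?_⟩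
          rcases hp.dvd_mul.1 h with h | h
          · exact ha.2 p hp h
          · exact hb.2 p hp h
      · rw [if_neg hb, if_neg, mul_zero]
        exact fun h => hb ⟨right_ne_zero_of_mul h.1, fun p hp hd => h.2 p hp (hd.mul_left _)⟩
    · rw [if_neg ha, if_neg, zero_mul]
      exact fun h => ha ⟨left_ne_zero_of_mul h.1, fun p hp hd => h.2 p hp (hd.mul_right _)⟩

lemma maj_pos (D y : ℝ) (n : ℕ) (h : n ≠ 0 ∧ ∀ p : ℕ, p.Prime → p ∣ n → y < p) :
    maj D y n = D ^ (ArithmeticFunction.cardFactors n) / (n : ℝ) ^ 2 := by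
  simp only [maj, MonoidHom.coe_mk, OneHom.coe_mk]
  rw [if_pos h]

lemma maj_neg (D y : ℝ) (n : ℕ) (h : ¬ (n ≠ 0 ∧ ∀ p : ℕ, p.Prime → p ∣ n → y < p)) :
    maj D y n = 0 := by
  simp only [maj, MonoidHom.coe_mk, OneHom.coe_mk]
  rw [if_neg h]

lemma maj_nonneg (D y : ℝ) (hD : 0 ≤ D) (n : ℕ) : 0 ≤ maj D y n := by
  by_cases h : (n ≠ 0 ∧ ∀ p : ℕ, p.Prime → p ∣ n → y < p)
  · rw [maj_pos _ _ _ h]; positivity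
  · rw [maj_neg _ _ _ h]

lemma maj_prime (D y : ℝ) (p : ℕ) (hp : p.Prime) :
    maj D y p = if y < p then D / (p : ℝ) ^ 2 else 0 := by
  split_ifs with h
  · rw [maj_pos, ArithmeticFunction.cardFactors_apply_prime hp, pow_one]
    refine ⟨hp.ne_zero, fun q hq hd => ?_⟩
    rw [(Nat.prime_dvd_prime_iff_eq hq hp).1 hd]; exact h
  · exact maj_neg _ _ _ fun h' => h (h'.2 p hp dvd_rfl)

lemma choose_cast (k : ℕ) : (((k + 1).choose 2 : ℕ) : ℝ) = (k : ℝ) * (k + 1) / 2 := by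
  rw [Nat.cast_choose_two]; push_cast; ring

lemma maj_prime_le (k : ℕ) (y : ℝ) (hy : (k : ℝ) < y) (p : ℕ) (hp : p.Prime) :
    maj ((k + 1).choose 2 : ℕ) y p ≤ 1 / 2 := by
  rw [maj_prime _ _ _ hp]
  split_ifs with h
  · have h1 : k + 1 ≤ p := by
      have : (k : ℝ) < p := hy.trans h
      exact_mod_cast this
    have h2 : (k : ℝ) + 1 ≤ p := by exact_mod_cast h1
    have hp0 : (0:ℝ) < p := by exact_mod_cast hp.pos
    have hk : (0:ℝ) ≤ k := by positivity
    rw [choose_cast, div_le_iff₀ (by positivity)]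
    nlinarith
  · norm_num

lemma prod_bound (k : ℕ) (hk : 2 ≤ k) (y : ℝ) (hy : (k : ℝ) < y) (N : ℕ) :
    ∏ p ∈ N.primesBelow, (1 - maj ((k + 1).choose 2 : ℕ) y p)⁻¹ ≤
      Real.exp (8 * Real.log 4 * k ^ 2 / (y * Real.log y)) := by
  have hk' : (2:ℝ) ≤ k := by exact_mod_cast hk
  have hD : (0:ℝ) ≤ ((k + 1).choose 2 : ℕ) := by positivity
  calc _ ≤ ∏ p ∈ N.primesBelow, Real.exp (2 * maj ((k + 1).choose 2 : ℕ) y p) := by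
        apply Finset.prod_le_prod
        · intro p hp
          have := maj_prime_le k y hy p (Nat.prime_of_mem_primesBelow hp)
          exact inv_nonneg.2 (by linarith)
        · intro p hp
          have h1 := maj_prime_le k y hy p (Nat.prime_of_mem_primesBelow hp)
          have h0 := maj_nonneg _ y hD p
          refine le_trans ?_ (Real.add_one_le_exp _)
          rw [inv_le_iff_one_le_mul₀ (by linarith)]
          nlinarith
    _ = Real.exp (∑ p ∈ N.primesBelow, 2 * maj ((k + 1).choose 2 : ℕ) y p) :=
        (Real.exp_sum _ _).symm
    _ = Real.exp (2 * ((k + 1).choose 2 : ℕ) *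
          ∑ p ∈ N.primesBelow with y < (p : ℕ), 1 / (p : ℝ) ^ 2) := by
        congr 1
        rw [Finset.sum_filter, Finset.mul_sum]
        apply Finset.sum_congr rfl
        intro p hp
        rw [maj_prime _ _ _ (Nat.prime_of_mem_primesBelow hp)]
        split_ifs <;> ring
    _ ≤ Real.exp (2 * (k : ℝ) ^ 2 * (4 * Real.log 4 / (y * Real.log y))) := by
        apply Real.exp_le_exp.2
        apply mul_le_mul _ (prime_tail y (by linarith) N) (Finset.sum_nonneg fun _ _ => by positivity)
          (by positivity)
        rw [choose_cast]; nlinarith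
    _ = _ := by congr 1; ring

lemma partial_bound (k : ℕ) (hk : 2 ≤ k) (y : ℝ) (hy : (k : ℝ) < y) (u : Finset ℕ) :
    ∑ n ∈ u, Set.indicator {n : ℕ | 1 ≤ n ∧ ∀ p : ℕ, p.Prime → p ∣ n → y < p}
          (fun n => (dk k (n ^ 2) : ℝ) / (n : ℝ) ^ 2) n ≤
      Real.exp (8 * Real.log 4 * k ^ 2 / (y * Real.log y)) := by
  have hD : (0:ℝ) ≤ ((k + 1).choose 2 : ℕ) := by positivity
  obtain ⟨N, hN⟩ : ∃ N, ∀ n ∈ u, n < N := ⟨u.sup id + 1, fun n hn =>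
    Nat.lt_succ_of_le (Finset.le_sup (f := id) hn)⟩
  obtain ⟨-, hs⟩ := EulerProduct.summable_and_hasSum_smoothNumbers_prod_primesBelow_geometric
    (f := maj ((k + 1).choose 2 : ℕ) y) (fun {p} hp => by
      rw [Real.norm_of_nonneg (maj_nonneg _ y hD p)]
      have := maj_prime_le k y hy p hp
      linarith) N
  have hs' := (hasSum_subtype_iff_indicator (f := fun n => maj ((k + 1).choose 2 : ℕ) y n)
    (s := N.smoothNumbers)).1 hs
  refine le_trans ?_ (prod_bound k hk y hy N)
  refine le_trans (Finset.sum_le_sum fun n hn => ?_) (sum_le_hasSum u (fun n _ =>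
    Set.indicator_nonneg (fun n _ => maj_nonneg _ y hD n) n) hs')
  by_cases h : n ∈ {n : ℕ | 1 ≤ n ∧ ∀ p : ℕ, p.Prime → p ∣ n → y < p}
  · have h' : n ≠ 0 ∧ ∀ p : ℕ, p.Prime → p ∣ n → y < p := ⟨Nat.one_le_iff_ne_zero.1 h.1, h.2⟩
    rw [Set.indicator_of_mem h, Set.indicator_of_mem, maj_pos _ _ _ h']
    · gcongr
      exact_mod_cast dk_sq_le k n h'.1
    · refine ⟨h'.1, fun p hp => ?_⟩
      exact (Nat.le_of_mem_primeFactorsList hp).trans_lt (hN n hn)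
  · rw [Set.indicator_of_notMem h]
    exact Set.indicator_nonneg (fun n _ => maj_nonneg _ y hD n) n


/-- For every integer `k ≥ 2` and real `y > k`, the sum of `d_k(n²)/n²` over the
integers `n` all of whose prime factors exceed `y` is `exp(O(k²/(y log y)))`. -/
theorem stmt_2 :
    ∃ C > 0, ∀ (k : ℕ), 2 ≤ k → ∀ (y : ℝ), (k : ℝ) < y →
      Real.exp (-(C * k ^ 2 / (y * Real.log y))) ≤
        (∑' n : ℕ, Set.indicator {n : ℕ | 1 ≤ n ∧ ∀ p : ℕ, p.Prime → p ∣ n → y < p}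
          (fun n => (dk k (n ^ 2) : ℝ) / (n : ℝ) ^ 2) n) ∧
      (∑' n : ℕ, Set.indicator {n : ℕ | 1 ≤ n ∧ ∀ p : ℕ, p.Prime → p ∣ n → y < p}
          (fun n => (dk k (n ^ 2) : ℝ) / (n : ℝ) ^ 2) n) ≤
        Real.exp (C * k ^ 2 / (y * Real.log y)) := by
  have hl4 := Real.log_pos (show (1:ℝ) < 4 by norm_num)
  refine ⟨8 * Real.log 4, by positivity, fun k hk y hy => ?_⟩
  have hk' : (2:ℝ) ≤ k := by exact_mod_cast hk
  have hl : 0 < Real.log y := Real.log_pos (by linarith)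
  have hy0 : 0 < y := by linarith
  have hnn : ∀ n, 0 ≤ Set.indicator {n : ℕ | 1 ≤ n ∧ ∀ p : ℕ, p.Prime → p ∣ n → y < p}
          (fun n => (dk k (n ^ 2) : ℝ) / (n : ℝ) ^ 2) n :=
    Set.indicator_nonneg (fun n _ => by positivity)
  have hsum := summable_of_sum_le hnn (partial_bound k hk y hy)
  refine ⟨?_, hsum.tsum_le_of_sum_le (partial_bound k hk y hy)⟩
  refine le_trans (Real.exp_le_one_iff.2 (neg_nonpos.2 (by positivity))) ?_
  refine le_trans (le_of_eq ?_) (hsum.le_tsum 1 fun n _ => hnn n)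
  rw [Set.indicator_of_mem]
  · simp [dk_one]
  · exact ⟨le_rfl, fun p hp h => absurd (Nat.dvd_one.1 h) hp.ne_one⟩
end

section
/- Let {ε_q} be any choice of signs ±1 indexed by primes, let a ∈ {1,3}, and let x be large with 3 ≤ y ≤ log log x. Then the number of primes p ≤ x with p ≡ a (mod 4) and (q/p) = ε_q for every prime q ≤ y equals π(x)/2^{π(y)+1} + O(x e^{−c√(log x)}) for some absolute constant c > 0. -/
section

open Complex Metric in
lemma aux_bc_logDeriv {g : ℂ → ℂ} {c : ℂ} {R M : ℝ} (hR : 0 < R) (hM : 0 < M)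
    (hg : DifferentiableOn ℂ g (ball c R)) (h0 : ∀ z ∈ ball c R, g z ≠ 0)
    (hb : ∀ z ∈ ball c R, ‖g z‖ ≤ Real.exp M * ‖g c‖) {z : ℂ} (hz : ‖z - c‖ ≤ 3 * R / 4) :
    ‖deriv g z / g z‖ ≤ 112 * M / R := by
  have hc : c ∈ ball c R := mem_ball_self hR
  have hdg : DifferentiableOn ℂ (fun z => deriv g z / g z) (ball c R) :=
    (hg.deriv isOpen_ball).div hg h0
  obtain ⟨h, hh⟩ := hdg.isExactOn_ball
  -- exp (h z - h c) * g c = g z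
  have hexp : ∀ w ∈ ball c R, g w = g c * Complex.exp (h w - h c) := by
    have hd : ∀ w ∈ ball c R, HasDerivAt (fun w => g w * Complex.exp (-(h w - h c))) 0 w := by
      intro w hw
      have h1 := (hg.differentiableAt (isOpen_ball.mem_nhds hw)).hasDerivAt
      have h2 := (((hh w hw).sub_const (h c)).neg).cexp
      have h4 := h0 w hw
      have h5 : g w * (deriv g w / g w) = deriv g w := by field_simp
      have h3 : HasDerivAt (fun w => g w * Complex.exp (-(h w - h c)))
        (deriv g w * Complex.exp (-(h w - h c)) +
          g w * (Complex.exp (-(h w - h c)) * -(deriv g w / g w))) w := h1.mul h2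
      refine h3.congr_deriv ?_
      linear_combination (-Complex.exp (-(h w - h c))) * h5
    intro w hw
    have hconst := (convex_ball c R).is_const_of_fderivWithin_eq_zero (𝕜 := ℂ)
      (f := fun w => g w * Complex.exp (-(h w - h c)))
      (fun w hw => (hd w hw).differentiableAt.differentiableWithinAt)
      (fun w hw => by
        rw [fderivWithin_of_isOpen isOpen_ball hw]
        have h9 := (hd w hw).hasFDerivAt.fderiv
        rw [h9]; ext; simp) hw hc
    simp only [sub_self, neg_zero, Complex.exp_zero, mul_one] at hconst
    rw [← hconst, mul_assoc, ← Complex.exp_add]; simp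
  have hre : ∀ w ∈ ball c R, (h w - h c).re ≤ M := by
    intro w hw
    have := hb w hw
    rw [hexp w hw, norm_mul, Complex.norm_exp, mul_comm] at this
    have hpos : 0 < ‖g c‖ := norm_pos_iff.mpr (h0 c hc)
    exact Real.exp_le_exp.mp (le_of_mul_le_mul_right this hpos)
  have hbc : ∀ w, ‖w - c‖ ≤ 7 * R / 8 → ‖h w - h c‖ ≤ 14 * M := by
    intro w hw
    have key := Complex.borelCaratheodory_zero (f := fun u => h (c + u) - h c) (R := R) (M := M)
      (z := w - c) hM ?_ ?_ hR ?_ (by simp)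
    · simp only [add_sub_cancel] at key
      refine key.trans ?_
      rw [div_le_iff₀ (by linarith)]
      nlinarith [norm_nonneg (w - c)]
    · intro u hu
      have hu' : c + u ∈ ball c R := by simpa [mem_ball, dist_eq_norm] using hu
      have h1 := (hh _ hu').differentiableAt
      have h2 : DifferentiableAt ℂ (fun u => h (c + u)) u := by
        apply DifferentiableAt.comp u h1; fun_prop
      exact (h2.sub_const _).differentiableWithinAt
    · intro u hu
      have hu' : c + u ∈ ball c R := by simpa [mem_ball, dist_eq_norm] using hu
      exact hre _ hu'
    · simp only [mem_ball, dist_zero_right]; linarith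
  have hzb : z ∈ ball c R := by rw [mem_ball, dist_eq_norm]; linarith
  have hderiv : deriv (fun w => h w - h c) z = deriv g z / g z := by
    rw [deriv_sub_const]; exact (hh z hzb).deriv
  rw [← hderiv]
  have := norm_deriv_le_of_forall_mem_sphere_norm_le (f := fun w => h w - h c) (c := z) (R := R/8)
    (C := 14 * M) (by linarith) ?_ ?_
  · refine this.trans (le_of_eq ?_)
    field_simp; norm_num
  · have hsub : closedBall z (R/8) ⊆ ball c R := by
      intro w hw
      rw [mem_closedBall, dist_eq_norm] at hw
      rw [mem_ball, dist_eq_norm]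
      calc ‖w - c‖ = ‖(w - z) + (z - c)‖ := by ring_nf
        _ ≤ _ := norm_add_le _ _
        _ < R := by linarith
    have : DifferentiableOn ℂ (fun w => h w - h c) (ball c R) := fun w hw =>
      ((hh w hw).differentiableAt.sub_const _).differentiableWithinAt
    exact DifferentiableOn.diffContOnCl_ball this hsub
  · intro w hw
    rw [mem_sphere, dist_eq_norm] at hw
    apply hbc
    calc ‖w - c‖ = ‖(w - z) + (z - c)‖ := by ring_nf
        _ ≤ _ := norm_add_le _ _
        _ ≤ 7 * R / 8 := by linarith

/-- remove one zero by a Blaschke factor -/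
lemma aux_blaschke {G : ℂ → ℂ} (hG : Differentiable ℂ G) {B : ℝ}
    (hB : ∀ z, ‖z‖ ≤ 1 → ‖G z‖ ≤ B) {ρ : ℂ} (hρ : ‖ρ‖ ≤ 1/2) (hz : G ρ = 0) (h0 : G 0 ≠ 0) :
    ∃ G' : ℂ → ℂ, Differentiable ℂ G' ∧ (∀ z, ‖z‖ ≤ 1 → ‖G' z‖ ≤ B) ∧ 2 * ‖G 0‖ ≤ ‖G' 0‖ ∧
      (∀ z, ‖z‖ ≤ 1/2 → G' z = 0 → G z = 0) ∧
      deriv G 0 / G 0 = (-1/ρ + (starRingEnd ℂ) ρ) + deriv G' 0 / G' 0 := by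
  have hρ0 : ρ ≠ 0 := by rintro rfl; exact h0 hz
  set D := dslope G ρ with hD
  have hDd : Differentiable ℂ D := by
    rw [← differentiableOn_univ]
    exact (Complex.differentiableOn_dslope Filter.univ_mem).mpr hG.differentiableOn
  have hGD : ∀ z, G z = (z - ρ) * D z := by
    intro z
    have := sub_smul_dslope G ρ z
    rw [hz, sub_zero, smul_eq_mul] at this
    exact this.symm
  set b := (starRingEnd ℂ) ρ with hb
  have hbn : ‖b‖ = ‖ρ‖ := by simp [hb]
  have hG'd : Differentiable ℂ (fun z => (1 - b * z) * D z) := by fun_prop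
  have hD0 : D 0 ≠ 0 := by
    intro h; apply h0; rw [hGD, h, mul_zero]
  refine ⟨fun z => (1 - b * z) * D z, hG'd, ?_, ?_, ?_, ?_⟩
  · intro z hz1
    have hmem : z ∈ closure (Metric.ball (0:ℂ) 1) := by
      rw [closure_ball _ one_ne_zero]; simpa using hz1
    refine Complex.norm_le_of_forall_mem_frontier_norm_le (U := Metric.ball (0:ℂ) 1)
      Metric.isBounded_ball hG'd.diffContOnCl ?_ hmem
    intro w hw
    rw [frontier_ball _ one_ne_zero] at hw
    have hw1 : ‖w‖ = 1 := by simpa using hw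
    have : ‖1 - b * w‖ = ‖w - ρ‖ := by
      have h1 : (1 : ℂ) - b * w = (starRingEnd ℂ) (w - ρ) * w := by
        have : (starRingEnd ℂ) w * w = 1 := by
          rw [Complex.conj_mul']; simp [hw1]
        rw [map_sub, sub_mul, this]
      rw [h1, norm_mul, Complex.norm_conj, hw1, mul_one]
    rw [norm_mul, this, ← norm_mul, ← hGD]
    exact hB w hw1.le
  · simp only [mul_zero, sub_zero, one_mul]
    rw [hGD 0, norm_mul]; simp only [zero_sub, norm_neg]
    nlinarith [norm_nonneg (D 0)]
  · intro z hz1 hz2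
    rcases mul_eq_zero.mp hz2 with h | h
    · exfalso
      have h1 : b * z = 1 := (sub_eq_zero.mp h).symm
      have : ‖b * z‖ = 1 := by rw [h1]; simp
      rw [norm_mul, hbn] at this
      nlinarith [norm_nonneg z, norm_nonneg ρ]
    · rw [hGD, h, mul_zero]
  · have h1 : HasDerivAt G (1 * D 0 + (0 - ρ) * deriv D 0) 0 := by
      have : G = fun z => (z - ρ) * D z := funext hGD
      rw [this]
      exact ((hasDerivAt_id (0:ℂ)).sub_const ρ).mul (hDd 0).hasDerivAt
    have h2 : HasDerivAt (fun z => (1 - b * z) * D z) ((-(b * 1)) * D 0 + (1 - b * 0) * deriv D 0) 0 :=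
      (((hasDerivAt_id (0:ℂ)).const_mul b).const_sub 1).mul (hDd 0).hasDerivAt
    rw [h1.deriv, h2.deriv, hGD 0]
    field_simp
    ring

lemma aux_re_blaschke {ρ : ℂ} (h1 : ‖ρ‖ ≤ 1/2) (h : ρ.re ≤ 0) :
    0 ≤ (-1/ρ + (starRingEnd ℂ) ρ).re := by
  by_cases h0 : ρ = 0
  · simp [h0]
  have hn : 0 < Complex.normSq ρ := Complex.normSq_pos.mpr h0
  have hle : Complex.normSq ρ ≤ 1 := by
    rw [Complex.normSq_eq_norm_sq]; nlinarith [norm_nonneg ρ]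
  have : (-1/ρ + (starRingEnd ℂ) ρ).re = (-ρ.re) * (1 / Complex.normSq ρ - 1) := by
    simp [Complex.div_re]; ring
  rw [this]
  apply mul_nonneg (by linarith)
  rw [sub_nonneg, le_div_iff₀ hn]; linarith

lemma aux_logDeriv_re {B b M : ℝ} (hb : 0 < b) (hM : 0 < M) (hBb : B ≤ Real.exp M * b) (n : ℕ) :
    ∀ G : ℂ → ℂ, Differentiable ℂ G → (∀ z, ‖z‖ ≤ 1 → ‖G z‖ ≤ B) → b ≤ ‖G 0‖ →
    B < ‖G 0‖ * 2 ^ n → (∀ z, ‖z‖ ≤ 1/2 → G z = 0 → z.re ≤ 0) →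
    -(224 * M) ≤ (deriv G 0 / G 0).re := by
  induction n with
  | zero =>
    intro G _ hB _ h _
    have := hB 0 (by simp)
    simp at h; linarith
  | succ n ih =>
    intro G hG hB hb' hBn hz
    by_cases hex : ∃ ρ, ‖ρ‖ ≤ 1/2 ∧ G ρ = 0
    · obtain ⟨ρ, hρ, hρz⟩ := hex
      have h0 : G 0 ≠ 0 := norm_pos_iff.mp (by linarith)
      obtain ⟨G', hd, hB', h2, hz', hder⟩ := aux_blaschke hG hB hρ hρz h0
      have := ih G' hd hB' (by linarith) (by
        calc B < ‖G 0‖ * 2 ^ (n+1) := hBn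
          _ = (2 * ‖G 0‖) * 2 ^ n := by ring
          _ ≤ _ := by gcongr) (fun z h1 h2 => hz z h1 (hz' z h1 h2))
      rw [hder, Complex.add_re]
      linarith [aux_re_blaschke hρ (hz ρ hρ hρz)]
    · push Not at hex
      have := aux_bc_logDeriv (g := G) (c := 0) (R := 1/2) (M := M) (by norm_num) hM
        hG.differentiableOn (fun z hz => hex z (by simpa using (Metric.mem_ball.mp hz).le))
        (fun z hz => by
          have h1 : ‖z‖ < 1/2 := by simpa using hz
          calc ‖G z‖ ≤ B := hB z (by linarith)
            _ ≤ Real.exp M * b := hBb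
            _ ≤ _ := by gcongr) (z := 0) (by norm_num)
      have h3 := Complex.abs_re_le_norm (deriv G 0 / G 0)
      have h4 := neg_abs_le (deriv G 0 / G 0).re
      have : 112 * M / (1/2) = 224 * M := by ring
      linarith

lemma aux_logDeriv_unit {G : ℂ → ℂ} {M : ℝ} (hM : 0 < M) (hG : Differentiable ℂ G) (h0 : G 0 ≠ 0)
    (hB : ∀ z, ‖z‖ ≤ 1 → ‖G z‖ ≤ Real.exp M * ‖G 0‖)
    (hz : ∀ z, ‖z‖ ≤ 1/2 → G z = 0 → z.re ≤ 0) :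
    -(224 * M) ≤ (deriv G 0 / G 0).re ∧
    ∀ ρ, ‖ρ‖ ≤ 1/2 → G ρ = 0 →
      (-1/ρ + (starRingEnd ℂ) ρ).re - 224 * M ≤ (deriv G 0 / G 0).re := by
  have hpos : 0 < ‖G 0‖ := norm_pos_iff.mpr h0
  have key : ∀ G' : ℂ → ℂ, Differentiable ℂ G' → (∀ z, ‖z‖ ≤ 1 → ‖G' z‖ ≤ Real.exp M * ‖G 0‖) →
      ‖G 0‖ ≤ ‖G' 0‖ → (∀ z, ‖z‖ ≤ 1/2 → G' z = 0 → z.re ≤ 0) →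
      -(224 * M) ≤ (deriv G' 0 / G' 0).re := by
    intro G' h1 h2 h3 h4
    obtain ⟨n, hn⟩ := pow_unbounded_of_one_lt (Real.exp M) (one_lt_two)
    exact aux_logDeriv_re hpos hM le_rfl n G' h1 h2 h3 (by
      calc Real.exp M * ‖G 0‖ < 2 ^ n * ‖G 0‖ := by gcongr
        _ ≤ 2 ^ n * ‖G' 0‖ := by gcongr
        _ = _ := mul_comm _ _) h4
  refine ⟨key G hG hB le_rfl hz, ?_⟩
  intro ρ hρ hρz
  obtain ⟨G', hd, hB', h2, hz', hder⟩ := aux_blaschke hG hB hρ hρz h0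
  have := key G' hd hB' (by linarith) (fun z h1 h2 => hz z h1 (hz' z h1 h2))
  have h9 : (deriv G 0 / G 0).re = (-1/ρ + (starRingEnd ℂ) ρ).re + (deriv G' 0 / G' 0).re := by
    rw [hder, Complex.add_re (-1/ρ + (starRingEnd ℂ) ρ)]
  linarith

/-- General centre, radius 1/2. -/
lemma aux_logDeriv_disc {f : ℂ → ℂ} {c : ℂ} {M : ℝ} (hM : 0 < M)
    (hf : Differentiable ℂ f) (h0 : f c ≠ 0)
    (hB : ∀ z, ‖z - c‖ ≤ 1/2 → ‖f z‖ ≤ Real.exp M * ‖f c‖)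
    (hz : ∀ z, ‖z - c‖ ≤ 1/4 → f z = 0 → z.re ≤ c.re) :
    -(448 * M) ≤ (deriv f c / f c).re ∧
    ∀ ρ : ℝ, 0 < ρ → ρ ≤ 1/4 → f (c - ρ) = 0 →
      1/ρ - 1 - 448 * M ≤ (deriv f c / f c).re := by
  set G : ℂ → ℂ := fun z => f (c + z / 2) with hG
  have hGd : Differentiable ℂ G := by
    intro z; exact (hf _).comp z (by fun_prop)
  have hn : ∀ z : ℂ, ‖c + z/2 - c‖ = ‖z‖ / 2 := by intro z; simp
  have hG0 : G 0 = f c := by simp [hG]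
  have hder : deriv G 0 = deriv f c / 2 := by
    have h1 : HasDerivAt (fun z : ℂ => c + z / 2) (1/2) 0 := by
      simpa using ((hasDerivAt_id (0:ℂ)).div_const 2).const_add c
    have h2 : HasDerivAt f (deriv f c) (c + 0 / 2) := by simpa using (hf c).hasDerivAt
    have h3 : HasDerivAt G (deriv f c * (1/2)) 0 := h2.comp 0 h1
    rw [h3.deriv]; ring
  obtain ⟨k1, k2⟩ := aux_logDeriv_unit (G := G) hM hGd (by rwa [hG0])
    (fun z h => by rw [hG0]; apply hB; rw [hn]; linarith)
    (fun z h hz' => by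
      have := hz (c + z/2) (by rw [hn]; linarith) hz'
      simp at this
      linarith)
  have hre : (deriv G 0 / G 0).re = (deriv f c / f c).re / 2 := by
    rw [hG0, hder]
    have : deriv f c / 2 / f c = (deriv f c / f c) / (2:ℝ) := by push_cast; ring
    rw [this, Complex.div_ofReal_re]
  rw [hre] at k1 k2
  refine ⟨by linarith, ?_⟩
  intro ρ hρ hρ4 hfz
  have := k2 (-(2 * ρ : ℝ)) (by
      rw [norm_neg, Complex.norm_real, Real.norm_of_nonneg (by linarith)]; linarith) (by
      simp only [hG]; rw [← hfz]; congr 1; push_cast; ring)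
  have e : (-1 / (-((2 * ρ : ℝ):ℂ)) + (starRingEnd ℂ) (-((2 * ρ : ℝ):ℂ))).re = 1 / (2 * ρ) - 2 * ρ := by
    rw [neg_div_neg_eq, map_neg, Complex.conj_ofReal, ← Complex.ofReal_one, ← Complex.ofReal_div,
      ← Complex.ofReal_neg, ← Complex.ofReal_add, Complex.ofReal_re]
    ring
  rw [e] at this
  have : 1 / ρ = 2 * (1/(2*ρ)) := by field_simp
  linarith

end

section

lemma aux_cpow_sub {w : ℂ} (hw : w.re ≤ 1) {a u : ℝ} (ha : 0 < a) (hu : a ≤ u) :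
    ‖(u : ℂ) ^ w - (a : ℂ) ^ w‖ ≤ ‖w‖ * a ^ (w.re - 1) * (u - a) := by
  have h := norm_image_sub_le_of_norm_deriv_le_segment' (f := fun x : ℝ => (x : ℂ) ^ w)
    (f' := fun x : ℝ => w * (x : ℂ) ^ (w - 1)) (a := a) (b := u) (C := ‖w‖ * a ^ (w.re - 1)) ?_ ?_ u
    ⟨hu, le_rfl⟩
  · exact h
  · intro x hx
    have hx0 : 0 < x := lt_of_lt_of_le ha hx.1
    by_cases hw0 : w = 0
    · subst hw0; simpa using (hasDerivWithinAt_const x (Set.Icc a u) (1:ℂ))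
    · have h1 : HasDerivAt (fun z : ℂ => z ^ w) (w * (x:ℂ) ^ (w - 1)) (x : ℂ) := by
        have := (hasDerivAt_id (x : ℂ)).cpow_const (c := w) (Or.inl (by simpa using hx0))
        simpa using this
      exact h1.comp_ofReal.hasDerivWithinAt
  · intro x hx
    have hx0 : 0 < x := lt_of_lt_of_le ha hx.1
    rw [norm_mul, Complex.norm_cpow_eq_rpow_re_of_pos hx0]
    simp only [Complex.sub_re, Complex.one_re]
    gcongr ?_ * ?_
    exact Real.rpow_le_rpow_of_nonpos ha hx.1 (by linarith)

lemma aux_cpow_sub_nat {w : ℂ} (hw : w.re ≤ 1) (n : ℕ) :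
    ‖((n + 1 : ℕ) : ℂ) ^ w - ((n + 2 : ℕ) : ℂ) ^ w‖ ≤ ‖w‖ * (n + 1 : ℝ) ^ (w.re - 1) := by
  have h := aux_cpow_sub hw (a := (n:ℝ) + 1) (u := n + 2) (by positivity) (by linarith)
  rw [norm_sub_rev]
  push_cast at h ⊢
  refine h.trans (le_of_eq ?_); ring

open Finset in
/-- Abel summation, finite. -/
lemma aux_abel (a b : ℕ → ℂ) (N : ℕ) :
    ∑ n ∈ range N, a n * b n = (∑ n ∈ range N, a n) * b N +
      ∑ n ∈ range N, (∑ k ∈ range (n+1), a k) * (b n - b (n+1)) := by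
  induction N with
  | zero => simp
  | succ N ih =>
    rw [sum_range_succ, ih, sum_range_succ _ N, sum_range_succ _ N, sum_range_succ a N]; ring

/-- The partial sums -/
noncomputable def auxS {q : ℕ} (χ : DirichletCharacter ℂ q) (n : ℕ) : ℂ :=
  ∑ k ∈ Finset.range (n+1), χ ((k+1 : ℕ))

lemma auxS_le_n {q : ℕ} (χ : DirichletCharacter ℂ q) (n : ℕ) : ‖auxS χ n‖ ≤ n + 1 := by
  unfold auxS
  refine (norm_sum_le _ _).trans ?_
  refine (Finset.sum_le_sum (fun k _ => DirichletCharacter.norm_le_one χ _)).trans ?_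
  simp

lemma auxS_le_q {q : ℕ} [NeZero q] {χ : DirichletCharacter ℂ q} (hχ : χ ≠ 1) (n : ℕ) :
    ‖auxS χ n‖ ≤ q := by
  have hper : ∀ m : ℕ, ∑ k ∈ Finset.range q, χ ((m + k + 1 : ℕ)) = 0 := by
    intro m
    have h0 : ∑ u : ZMod q, χ u = 0 := MulChar.sum_eq_zero_of_ne_one hχ
    rw [← h0]
    refine Finset.sum_bij' (fun k _ => ((m + k + 1 : ℕ) : ZMod q))
      (fun u _ => (u - (m + 1 : ℕ)).val) ?_ ?_ ?_ ?_ ?_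
    · simp
    · intro u _; simp [ZMod.val_lt]
    · intro k hk
      have : ((m + k + 1 : ℕ) : ZMod q) - (m + 1 : ℕ) = (k : ℕ) := by push_cast; ring
      rw [this, ZMod.val_natCast_of_lt (Finset.mem_range.mp hk)]
    · intro u _
      push_cast
      rw [ZMod.natCast_zmod_val]; ring
    · intro k _; rfl
  have hmul : ∀ j : ℕ, ∑ k ∈ Finset.range (q * j), χ ((k+1 : ℕ)) = 0 := by
    intro j
    induction j with
    | zero => simp
    | succ j ih => rw [mul_add, mul_one, Finset.sum_range_add, ih, zero_add]; exact hper _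
  unfold auxS
  have hd := Nat.div_add_mod (n+1) q
  rw [← hd, Finset.sum_range_add, hmul, zero_add]
  refine (norm_sum_le _ _).trans ?_
  refine (Finset.sum_le_sum (fun k _ => DirichletCharacter.norm_le_one χ _)).trans ?_
  simp only [Finset.sum_const, Finset.card_range, nsmul_eq_mul, mul_one]
  exact_mod_cast (Nat.mod_lt _ (Nat.pos_of_ne_zero (NeZero.ne q))).le

lemma auxS_le {q : ℕ} [NeZero q] {χ : DirichletCharacter ℂ q} (hχ : χ ≠ 1) (n : ℕ) {δ : ℝ}
    (h0 : 0 ≤ δ) (h1 : δ ≤ 1) : ‖auxS χ n‖ ≤ (n + 1 : ℝ) ^ (1 - δ) * (q : ℝ) ^ δ := by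
  have hx : 0 ≤ ‖auxS χ n‖ := norm_nonneg _
  calc ‖auxS χ n‖ = ‖auxS χ n‖ ^ (1 - δ) * ‖auxS χ n‖ ^ δ := by
        rcases hx.eq_or_lt with h | h
        · rw [← h]
          rcases h0.eq_or_lt with h' | h'
          · subst h'; simp
          · rw [Real.zero_rpow h'.ne', mul_zero]
        · rw [← Real.rpow_add h]; simp
    _ ≤ _ := by
        gcongr
        · exact auxS_le_n χ n
        · exact auxS_le_q hχ n

lemma aux_summable_rpow {δ : ℝ} (hδ : 0 < δ) : Summable (fun n : ℕ => (n + 1 : ℝ) ^ (-1 - δ)) := by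
  have h := (Real.summable_nat_rpow (p := -1 - δ)).mpr (by linarith)
  have := (summable_nat_add_iff 1).mpr h
  simpa using this

noncomputable def auxT {q : ℕ} (χ : DirichletCharacter ℂ q) (n : ℕ) (s : ℂ) : ℂ :=
  auxS χ n * (((n + 1 : ℕ) : ℂ) ^ (-s) - ((n + 2 : ℕ) : ℂ) ^ (-s))

lemma auxT_le {q : ℕ} [NeZero q] {χ : DirichletCharacter ℂ q} (hχ : χ ≠ 1) (n : ℕ) {δ : ℝ}
    (h0 : 0 < δ) (h1 : δ ≤ 1) {s : ℂ} {η : ℝ} (hs : 1 - δ + η ≤ s.re) (hη : 0 < η) :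
    ‖auxT χ n s‖ ≤ ‖s‖ * (q : ℝ) ^ δ * (n + 1 : ℝ) ^ (-1 - η) := by
  unfold auxT
  rw [norm_mul]
  have hA := auxS_le hχ n h0.le h1
  have hB := aux_cpow_sub_nat (w := -s) (by simp; linarith) n
  calc _ ≤ ((n + 1 : ℝ) ^ (1 - δ) * (q : ℝ) ^ δ) * (‖-s‖ * (n + 1 : ℝ) ^ ((-s).re - 1)) :=
        mul_le_mul hA hB (norm_nonneg _) (by positivity)
    _ = ‖s‖ * (q : ℝ) ^ δ * ((n + 1 : ℝ) ^ (1 - δ) * (n + 1 : ℝ) ^ (-s.re - 1)) := by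
        simp; ring
    _ ≤ _ := by
        gcongr
        rw [← Real.rpow_add (by positivity)]
        apply Real.rpow_le_rpow_of_exponent_le
        · linarith [(Nat.cast_nonneg n : (0:ℝ) ≤ n)]
        · linarith

lemma aux_LSeries_eq {q : ℕ} [NeZero q] {χ : DirichletCharacter ℂ q} (hχ : χ ≠ 1) {s : ℂ}
    (hs : 1 < s.re) : LSeries (fun n => χ n) s = ∑' n, auxT χ n s := by
  have hsum := DirichletCharacter.LSeriesSummable_of_one_lt_re χ hs
  have h1 : LSeries (fun n => χ n) s = ∑' n : ℕ, χ ((n+1 : ℕ)) * ((n+1 : ℕ) : ℂ) ^ (-s) := by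
    unfold LSeries
    rw [hsum.tsum_eq_zero_add]
    simp [LSeries.term_def, Complex.cpow_neg, div_eq_mul_inv]
  have hs1 : Summable (fun n : ℕ => χ ((n+1 : ℕ)) * ((n+1 : ℕ) : ℂ) ^ (-s)) := by
    have := (summable_nat_add_iff 1).mpr hsum
    refine this.congr ?_
    intro n
    rw [LSeries.term_of_ne_zero (by omega), Complex.cpow_neg, div_eq_mul_inv]
  have hs2 : Summable (fun n => auxT χ n s) := by
    refine Summable.of_norm_bounded
      (((aux_summable_rpow (δ := 1) one_pos)).mul_left (‖s‖ * (q : ℝ) ^ (1:ℝ))) (fun n => ?_)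
    exact auxT_le hχ n one_pos le_rfl (by linarith) one_pos
  have t1 := hs1.hasSum.tendsto_sum_nat
  have t2 := hs2.hasSum.tendsto_sum_nat
  have t3 : Filter.Tendsto (fun N : ℕ => (∑ n ∈ Finset.range N, χ ((n+1 : ℕ))) *
      ((N+1 : ℕ) : ℂ) ^ (-s)) Filter.atTop (nhds 0) := by
    have hz : Filter.Tendsto (fun N : ℕ => (q : ℝ) * ((N+1 : ℕ) : ℝ) ^ (-s.re)) Filter.atTop (nhds 0) := by
      have := (tendsto_rpow_neg_atTop (y := s.re) (by linarith)).comp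
        ((tendsto_natCast_atTop_atTop (R := ℝ)).comp (Filter.tendsto_add_atTop_nat 1))
      simpa using this.const_mul (q : ℝ)
    refine squeeze_zero_norm (fun N => ?_) hz
    rw [norm_mul, Complex.norm_natCast_cpow_of_pos (by omega)]
    simp only [Complex.neg_re]
    gcongr
    rcases N with _ | N
    · simp
    · exact auxS_le_q hχ N
  have t4 := t3.add t2
  rw [zero_add] at t4
  rw [h1]
  refine tendsto_nhds_unique t1 (t4.congr (fun N => ?_))
  exact (aux_abel (fun n => χ ((n+1 : ℕ))) (fun n => ((n+1 : ℕ) : ℂ) ^ (-s)) N).symm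

lemma aux_LFunction_eq {q : ℕ} [NeZero q] {χ : DirichletCharacter ℂ q} (hχ : χ ≠ 1) {s : ℂ}
    (hs : 0 < s.re) : DirichletCharacter.LFunction χ s = ∑' n, auxT χ n s := by
  have hopen : IsOpen {s : ℂ | 0 < s.re} := isOpen_lt continuous_const Complex.continuous_re
  have hpre : IsPreconnected {s : ℂ | 0 < s.re} := (convex_halfSpace_re_gt 0).isPreconnected
  have hd1 : AnalyticOnNhd ℂ (DirichletCharacter.LFunction χ) {s : ℂ | 0 < s.re} :=
    (DirichletCharacter.differentiable_LFunction hχ).differentiableOn.analyticOnNhd hopen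
  have hd2 : AnalyticOnNhd ℂ (fun s => ∑' n, auxT χ n s) {s : ℂ | 0 < s.re} := by
    refine DifferentiableOn.analyticOnNhd ?_ hopen
    intro z hz
    have hz0 : 0 < z.re := hz
    set U : Set ℂ := {w : ℂ | z.re / 2 < w.re} ∩ Metric.ball z 1 with hU
    have hUo : IsOpen U := (isOpen_lt continuous_const Complex.continuous_re).inter Metric.isOpen_ball
    have hzU : z ∈ U := ⟨by simp; linarith, by simp⟩
    have := Complex.differentiableOn_tsum_of_summable_norm (F := fun n w => auxT χ n w)
      (U := U) (u := fun n : ℕ => (‖z‖ + 1) * (q : ℝ) ^ (1:ℝ) * (n + 1 : ℝ) ^ (-1 - z.re/2))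
      ((aux_summable_rpow (by linarith)).mul_left _) ?_ hUo ?_
    · exact (this.differentiableAt (hUo.mem_nhds hzU)).differentiableWithinAt
    · intro n w _
      unfold auxT
      have h1 : ((n + 1 : ℕ) : ℂ) ≠ 0 := Nat.cast_ne_zero.mpr (by omega)
      have h2 : ((n + 2 : ℕ) : ℂ) ≠ 0 := Nat.cast_ne_zero.mpr (by omega)
      refine DifferentiableAt.differentiableWithinAt ?_
      refine (DifferentiableAt.sub ?_ ?_).const_mul _
      · exact differentiableAt_id.neg.const_cpow (Or.inl h1)
      · exact differentiableAt_id.neg.const_cpow (Or.inl h2)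
    · intro n w hw
      have hw1 : z.re / 2 < w.re := hw.1
      refine (auxT_le hχ n one_pos le_rfl (η := z.re/2) (by linarith) (by linarith)).trans ?_
      gcongr
      have : ‖w - z‖ < 1 := by simpa [dist_eq_norm] using hw.2
      calc ‖w‖ = ‖z + (w - z)‖ := by ring_nf
        _ ≤ _ := (norm_add_le _ _).trans (by linarith)
  refine hd1.eqOn_of_preconnected_of_eventuallyEq hd2 hpre (z₀ := 2) (by simp) ?_ hs
  have : {s : ℂ | 1 < s.re} ∈ nhds (2:ℂ) :=
    (isOpen_lt continuous_const Complex.continuous_re).mem_nhds (by simp)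
  filter_upwards [this] with w hw
  rw [DirichletCharacter.LFunction_eq_LSeries χ hw, aux_LSeries_eq hχ hw]

lemma aux_L_bound {δ : ℝ} (h0 : 0 < δ) (h1 : δ ≤ 1) : ∃ C > 0, ∀ (q : ℕ) [NeZero q]
    (χ : DirichletCharacter ℂ q), χ ≠ 1 → ∀ s : ℂ, 1 - δ/2 ≤ s.re →
    ‖DirichletCharacter.LFunction χ s‖ ≤ C * ‖s‖ * (q:ℝ) ^ δ := by
  have hs := aux_summable_rpow (δ := δ/2) (by linarith)
  refine ⟨∑' n : ℕ, (n + 1 : ℝ) ^ (-1 - δ/2), ?_, ?_⟩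
  · exact hs.tsum_pos (fun n => by positivity) 0 (by simp)
  · intro q _ χ hχ s hre
    rw [aux_LFunction_eq hχ (by linarith)]
    have := tsum_of_norm_bounded (f := fun n => auxT χ n s)
      (hs.mul_left (‖s‖ * (q:ℝ)^δ)).hasSum
      (fun n => auxT_le hχ n h0 h1 (η := δ/2) (by linarith) (by linarith))
    refine this.trans (le_of_eq ?_)
    rw [tsum_mul_left]; ring

end

section

noncomputable def auxZ (n : ℕ) (s : ℂ) : ℂ :=
  ((n + 2 : ℕ) : ℂ) ^ (1 - s) - ((n + 1 : ℕ) : ℂ) ^ (1 - s) + (s - 1) * ((n + 1 : ℕ) : ℂ) ^ (-s)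

lemma auxZ_le (n : ℕ) {s : ℂ} (hs : 0 < s.re) :
    ‖auxZ n s‖ ≤ ‖s - 1‖ * ‖s‖ * (n + 1 : ℝ) ^ (-1 - s.re) := by
  have h := norm_image_sub_le_of_norm_deriv_le_segment'
    (f := fun x : ℝ => (x : ℂ) ^ (1 - s) + (s - 1) * ((n + 1 : ℕ) : ℂ) ^ (-s) * (x : ℂ))
    (f' := fun x : ℝ => (1 - s) * ((x : ℂ) ^ (- s) - ((n + 1 : ℕ) : ℂ) ^ (-s)))
    (a := (n : ℝ) + 1) (b := n + 2) (C := ‖s - 1‖ * ‖s‖ * (n + 1 : ℝ) ^ (-1 - s.re)) ?_ ?_ (n + 2)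
    ⟨by linarith, le_rfl⟩
  · refine le_trans (le_of_eq ?_) (h.trans (le_of_eq ?_))
    · unfold auxZ; congr 1; push_cast; ring
    · ring
  · intro x hx
    have hx0 : 0 < x := lt_of_lt_of_le (by positivity) hx.1
    have h1 : HasDerivAt (fun z : ℂ => z ^ (1 - s)) ((1 - s) * (x:ℂ) ^ (-s)) (x : ℂ) := by
      have := (hasDerivAt_id (x : ℂ)).cpow_const (c := 1 - s) (Or.inl (by simpa using hx0))
      simpa using this
    have h2 : HasDerivAt (fun z : ℂ => (s - 1) * ((n + 1 : ℕ) : ℂ) ^ (-s) * z)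
      ((s - 1) * ((n + 1 : ℕ) : ℂ) ^ (-s)) (x : ℂ) := by
      simpa using (hasDerivAt_id (x : ℂ)).const_mul ((s - 1) * ((n + 1 : ℕ) : ℂ) ^ (-s))
    have h3 := (h1.fun_add h2).comp_ofReal.hasDerivWithinAt (s := Set.Icc ((n:ℝ)+1) (n+2))
    convert h3 using 1
    ring
  · intro x hx
    have h1 := aux_cpow_sub (w := -s) (by simp; linarith) (a := (n:ℝ) + 1) (u := x) (by positivity) hx.1
    rw [norm_mul, norm_sub_rev 1 s, mul_assoc]
    gcongr
    push_cast at h1 ⊢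
    refine h1.trans ?_
    simp only [norm_neg, Complex.neg_re]
    rw [show -s.re - 1 = -1 - s.re by ring]
    refine mul_le_of_le_one_right (by positivity) (by linarith [hx.2])

lemma aux_zeta1_eq_aux {s : ℂ} (hs : 1 < s.re) : riemannZeta₁ s = 1 + ∑' n, auxZ n s := by
  have hs1' : s ≠ 1 := by rintro rfl; simp at hs
  have hz : riemannZeta₁ s = (s - 1) * riemannZeta s := by
    rw [riemannZeta_eq_inv_sub_mul hs1']
    field_simp [sub_ne_zero.mpr hs1']
  have hsum2 : Summable (fun n => auxZ n s) := by
    refine Summable.of_norm_bounded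
      ((aux_summable_rpow (δ := s.re) (by linarith)).mul_left (‖s - 1‖ * ‖s‖)) (fun n => ?_)
    exact auxZ_le n (by linarith)
  have hsum1 : HasSum (fun n : ℕ => ((n + 1 : ℕ) : ℂ) ^ (-s)) (riemannZeta s) := by
    have h := zeta_eq_tsum_one_div_nat_add_one_cpow hs
    rw [h]
    have h2 : Summable (fun n : ℕ => 1 / ((n : ℂ) + 1) ^ s) := by
      have := (summable_nat_add_iff 1).mpr (Complex.summable_one_div_nat_cpow.mpr hs)
      simpa using this
    convert h2.hasSum using 2 with n
    rw [Complex.cpow_neg]; simp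
  have t1 := hsum1.tendsto_sum_nat
  have t2 := hsum2.hasSum.tendsto_sum_nat
  have t3 : Filter.Tendsto (fun N : ℕ => ((N+1 : ℕ) : ℂ) ^ (1-s)) Filter.atTop (nhds 0) := by
    rw [tendsto_zero_iff_norm_tendsto_zero]
    have := (tendsto_rpow_neg_atTop (y := s.re - 1) (by linarith)).comp
        ((tendsto_natCast_atTop_atTop (R := ℝ)).comp (Filter.tendsto_add_atTop_nat 1))
    refine this.congr (fun N => ?_)
    rw [Complex.norm_natCast_cpow_of_pos (by omega)]
    simp
  have t4 := (t3.add (t1.const_mul (s - 1))).sub_const 1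
  have : ∑' n, auxZ n s = 0 + (s - 1) * riemannZeta s - 1 := by
    refine tendsto_nhds_unique t2 (t4.congr (fun N => ?_))
    induction N with
    | zero => simp
    | succ N ih => rw [Finset.sum_range_succ, Finset.sum_range_succ, ← ih]; unfold auxZ; ring
  rw [hz, this]; ring

lemma aux_zeta1_eq {s : ℂ} (hs : 0 < s.re) : riemannZeta₁ s = 1 + ∑' n, auxZ n s := by
  have hopen : IsOpen {s : ℂ | 0 < s.re} := isOpen_lt continuous_const Complex.continuous_re
  have hpre : IsPreconnected {s : ℂ | 0 < s.re} := (convex_halfSpace_re_gt 0).isPreconnected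
  have hd1 : AnalyticOnNhd ℂ riemannZeta₁ {s : ℂ | 0 < s.re} :=
    differentiable_riemannZeta₁.differentiableOn.analyticOnNhd hopen
  have hd2 : AnalyticOnNhd ℂ (fun s => 1 + ∑' n, auxZ n s) {s : ℂ | 0 < s.re} := by
    refine DifferentiableOn.analyticOnNhd ?_ hopen
    intro z hz
    have hz0 : 0 < z.re := hz
    set U : Set ℂ := {w : ℂ | z.re / 2 < w.re} ∩ Metric.ball z 1 with hU
    have hUo : IsOpen U := (isOpen_lt continuous_const Complex.continuous_re).inter Metric.isOpen_ball
    have hzU : z ∈ U := ⟨by simp; linarith, by simp⟩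
    have := Complex.differentiableOn_tsum_of_summable_norm (F := fun n w => auxZ n w)
      (U := U) (u := fun n : ℕ => (‖z - 1‖ + 1) * (‖z‖ + 1) * (n + 1 : ℝ) ^ (-1 - z.re/2))
      ((aux_summable_rpow (by linarith)).mul_left _) ?_ hUo ?_
    · exact ((this.differentiableAt (hUo.mem_nhds hzU)).const_add 1).differentiableWithinAt
    · intro n w _
      unfold auxZ
      have h1 : ((n + 1 : ℕ) : ℂ) ≠ 0 := Nat.cast_ne_zero.mpr (by omega)
      have h2 : ((n + 2 : ℕ) : ℂ) ≠ 0 := Nat.cast_ne_zero.mpr (by omega)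
      refine DifferentiableAt.differentiableWithinAt ?_
      have e : DifferentiableAt ℂ (fun w : ℂ => 1 - w) w := by fun_prop
      have e' : DifferentiableAt ℂ (fun w : ℂ => w - 1) w := by fun_prop
      exact ((e.const_cpow (Or.inl h2)).sub (e.const_cpow (Or.inl h1))).add
        (e'.mul (differentiableAt_id.neg.const_cpow (Or.inl h1)))
    · intro n w hw
      have hw1 : z.re / 2 < w.re := hw.1
      have : ‖w - z‖ < 1 := by simpa [dist_eq_norm] using hw.2
      refine (auxZ_le n (by linarith)).trans ?_
      gcongr
      · calc ‖w - 1‖ = ‖(z - 1) + (w - z)‖ := by ring_nf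
          _ ≤ _ := (norm_add_le _ _).trans (by linarith)
      · calc ‖w‖ = ‖z + (w - z)‖ := by ring_nf
          _ ≤ _ := (norm_add_le _ _).trans (by linarith)
      · linarith [(Nat.cast_nonneg n : (0:ℝ) ≤ n)]
  refine hd1.eqOn_of_preconnected_of_eventuallyEq hd2 hpre (z₀ := 2) (by simp) ?_ hs
  have : {s : ℂ | 1 < s.re} ∈ nhds (2:ℂ) :=
    (isOpen_lt continuous_const Complex.continuous_re).mem_nhds (by simp)
  filter_upwards [this] with w hw
  exact aux_zeta1_eq_aux hw

lemma aux_zeta1_bound : ∃ C > 0, ∀ s : ℂ, 1/2 ≤ s.re →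
    ‖riemannZeta₁ s‖ ≤ 1 + C * (‖s - 1‖ * ‖s‖) := by
  have hs := aux_summable_rpow (δ := 1/2) (by norm_num)
  refine ⟨∑' n : ℕ, (n + 1 : ℝ) ^ (-1 - 1/2 : ℝ), ?_, ?_⟩
  · exact hs.tsum_pos (fun n => by positivity) 0 (by simp)
  · intro s hre
    rw [aux_zeta1_eq (by linarith)]
    have := tsum_of_norm_bounded (f := fun n => auxZ n s)
      (hs.mul_left (‖s - 1‖ * ‖s‖)).hasSum
      (fun n => (auxZ_le n (by linarith)).trans (by
        gcongr
        linarith [(Nat.cast_nonneg n : (0:ℝ) ≤ n)]))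
    refine (norm_add_le _ _).trans ?_
    rw [norm_one]
    gcongr
    refine this.trans (le_of_eq ?_)
    rw [tsum_mul_left]; ring

lemma aux_zeta_eq {s : ℂ} (hs : s ≠ 1) : riemannZeta s = riemannZeta₁ s / (s - 1) := by
  rw [riemannZeta_eq_inv_sub_mul hs]; field_simp

lemma aux_zeta_le : ∃ C > 0, ∀ σ : ℝ, 1 < σ → σ ≤ 2 → ‖riemannZeta σ‖ ≤ C / (σ - 1) := by
  obtain ⟨C, hC, h⟩ := aux_zeta1_bound
  refine ⟨1 + C * 2, by positivity, fun σ h1 h2 => ?_⟩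
  have hne : (σ : ℂ) ≠ 1 := by exact_mod_cast h1.ne'
  rw [aux_zeta_eq hne, norm_div]
  have e : ‖(σ : ℂ) - 1‖ = σ - 1 := by
    rw [← Complex.ofReal_one, ← Complex.ofReal_sub, Complex.norm_real, Real.norm_of_nonneg (by linarith)]
  rw [e]
  have hp : 0 < σ - 1 := by linarith
  gcongr
  refine (h σ (by simp; linarith)).trans ?_
  rw [e, Complex.norm_real, Real.norm_of_nonneg (by linarith)]
  gcongr
  nlinarith

lemma aux_zeta1_ne_zero {s : ℂ} (hs : 1 ≤ s.re) : riemannZeta₁ s ≠ 0 := by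
  by_cases h : s = 1
  · subst h; simp
  · have := riemannZeta_ne_zero_of_one_le_re hs
    rw [aux_zeta_eq h] at this
    intro h0; simp [h0] at this

lemma aux_zeta_logDeriv {s : ℂ} (hs : 1 < s.re) :
    deriv riemannZeta s / riemannZeta s = deriv riemannZeta₁ s / riemannZeta₁ s - 1 / (s - 1) := by
  have hs1 : s ≠ 1 := by rintro rfl; simp at hs
  have hev : riemannZeta =ᶠ[nhds s] fun s => riemannZeta₁ s / (s - 1) := by
    filter_upwards [isOpen_ne.mem_nhds hs1] with w hw using aux_zeta_eq hw
  have hd : deriv riemannZeta s = _ := hev.deriv_eq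
  have hd1 := (differentiable_riemannZeta₁ s).hasDerivAt
  have h2 := hd1.fun_div ((hasDerivAt_id s).sub_const 1) (sub_ne_zero.mpr hs1)
  simp only [id] at h2
  rw [hd, h2.deriv, aux_zeta_eq hs1]
  have := aux_zeta1_ne_zero hs.le
  have := sub_ne_zero.mpr hs1
  field_simp

open LSeries ArithmeticFunction in
lemma aux_Lam_sum : ∃ C > 0, ∀ σ : ℝ, 1 < σ → σ ≤ 2 →
    (-(deriv riemannZeta σ / riemannZeta σ)).re ≤ 1 / (σ - 1) + C := by
  have hcont : ContinuousOn (fun σ : ℝ => deriv riemannZeta₁ σ / riemannZeta₁ σ) (Set.Icc 1 2) := by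
    refine ContinuousOn.div ?_ ?_ ?_
    · have : Continuous (deriv riemannZeta₁) :=
        (differentiable_riemannZeta₁.contDiff (n := 1)).continuous_deriv le_rfl
      exact (this.comp Complex.continuous_ofReal).continuousOn
    · exact (differentiable_riemannZeta₁.continuous.comp Complex.continuous_ofReal).continuousOn
    · intro σ hσ
      exact aux_zeta1_ne_zero (by simpa using hσ.1)
  obtain ⟨C, hC⟩ := isCompact_Icc.exists_bound_of_continuousOn hcont
  refine ⟨|C| + 1, by positivity, fun σ h1 h2 => ?_⟩
  rw [aux_zeta_logDeriv (by simpa using h1)]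
  have h3 := hC σ ⟨h1.le, h2⟩
  have h4 := Complex.abs_re_le_norm (deriv riemannZeta₁ σ / riemannZeta₁ σ)
  have h5 := (abs_le.mp (h4.trans h3)).1
  have e : ((1 : ℂ) / ((σ : ℂ) - 1)).re = 1 / (σ - 1) := by
    rw [← Complex.ofReal_one, ← Complex.ofReal_sub, ← Complex.ofReal_div, Complex.ofReal_re]
  rw [Complex.neg_re, Complex.sub_re, e]
  linarith [le_abs_self C]

end

section

lemma aux_LSeries_norm_le {f : ℕ → ℂ} {g : ℕ → ℝ} (hfg : ∀ n, ‖f n‖ ≤ g n) {s : ℂ} {A : ℂ}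
    (hg : LSeriesHasSum (fun n => (g n : ℂ)) (s.re : ℂ) A) : ‖LSeries f s‖ ≤ A.re := by
  have h1 : HasSum (fun n => (LSeries.term (fun n => (g n : ℂ)) (s.re : ℂ) n).re) A.re :=
    Complex.hasSum_re hg
  refine tsum_of_norm_bounded h1 (fun n => ?_)
  rcases eq_or_ne n 0 with rfl | hn
  · simp
  · rw [LSeries.norm_term_eq, LSeries.term_of_ne_zero hn, if_neg hn]
    have hpos : (0:ℝ) < n := by exact_mod_cast Nat.pos_of_ne_zero hn
    have : ((g n : ℂ) / (n : ℂ) ^ (s.re : ℂ)).re = g n / (n:ℝ) ^ s.re := by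
      rw [← Complex.ofReal_natCast, ← Complex.ofReal_cpow hpos.le, ← Complex.ofReal_div,
        Complex.ofReal_re]
    rw [this]
    gcongr
    exact hfg n

lemma aux_L_lower : ∃ c > 0, ∀ (q : ℕ) [NeZero q] (χ : DirichletCharacter ℂ q) (s : ℂ),
    1 < s.re → s.re ≤ 2 → c * (s.re - 1) ≤ ‖DirichletCharacter.LFunction χ s‖ := by
  obtain ⟨C, hC, h⟩ := aux_zeta_le
  refine ⟨1 / C, by positivity, fun q _ χ s h1 h2 => ?_⟩
  rw [DirichletCharacter.LFunction_eq_LSeries χ h1]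
  have h3 := DirichletCharacter.LSeries.mul_mu_eq_one χ h1
  have h4 := aux_LSeries_norm_le (f := (fun n : ℕ => χ n) * fun n : ℕ => ((ArithmeticFunction.moebius n : ℤ) : ℂ))
    (g := fun _ => 1) (s := s) (A := riemannZeta (s.re)) ?_ ?_
  · have h5 : ‖LSeries (fun n => χ n) s‖ * ‖LSeries ((fun n : ℕ => χ n) * fun n : ℕ => ((ArithmeticFunction.moebius n : ℤ) : ℂ)) s‖ = 1 := by
      rw [← norm_mul, h3, norm_one]
    have h6 := h4.trans ((Complex.re_le_norm _).trans (h s.re h1 h2))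
    have hp : 0 < s.re - 1 := by linarith
    have h7 : 1 ≤ ‖LSeries (fun n => χ n) s‖ * (C / (s.re - 1)) := by
      refine h5.symm.le.trans ?_; gcongr
    rw [← mul_div_assoc, le_div_iff₀ hp] at h7
    rw [div_mul_eq_mul_div, div_le_iff₀ hC]; linarith
  · intro n
    simp only [Pi.mul_apply, norm_mul]
    have a1 := DirichletCharacter.norm_le_one χ n
    have a2 : ‖((ArithmeticFunction.moebius n : ℤ) : ℂ)‖ ≤ 1 := by
      rw [Complex.norm_intCast]
      exact_mod_cast ArithmeticFunction.abs_moebius_le_one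
    exact mul_le_one₀ a1 (norm_nonneg _) a2
  · have := LSeriesHasSum_one (s := (s.re : ℂ)) (by simpa using h1)
    simpa [Pi.one_def] using this

lemma aux_Lam_hasSum {s : ℂ} (hs : 1 < s.re) :
    LSeriesHasSum (fun n => ((ArithmeticFunction.vonMangoldt n : ℝ) : ℂ)) s
      (-(deriv riemannZeta s / riemannZeta s)) := by
  have h1 := ArithmeticFunction.LSeriesSummable_vonMangoldt hs
  have h2 := ArithmeticFunction.LSeries_vonMangoldt_eq_deriv_riemannZeta_div hs
  have := h1.LSeriesHasSum
  rw [h2] at this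
  rwa [← neg_div]

lemma aux_Lchi_hasSum {q : ℕ} [NeZero q] (χ : DirichletCharacter ℂ q) {s : ℂ} (hs : 1 < s.re) :
    LSeriesHasSum (fun n => χ n * ((ArithmeticFunction.vonMangoldt n : ℝ) : ℂ)) s
      (-(deriv (DirichletCharacter.LFunction χ) s / DirichletCharacter.LFunction χ s)) := by
  have h1 := DirichletCharacter.LSeriesSummable_twist_vonMangoldt χ hs
  have h2 := DirichletCharacter.LSeries_twist_vonMangoldt_eq χ hs
  have := h1.LSeriesHasSum
  rw [h2, ← DirichletCharacter.deriv_LFunction_eq_deriv_LSeries χ hs,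
    ← DirichletCharacter.LFunction_eq_LSeries χ hs] at this
  rw [← neg_div]
  exact this

lemma aux_341 {q : ℕ} [NeZero q] (χ : DirichletCharacter ℂ q) (hχ : χ.IsQuadratic) {σ : ℝ}
    (hσ : 1 < σ) (t : ℝ) :
    0 ≤ 3 * (-(deriv riemannZeta σ / riemannZeta σ)).re
      + 4 * (-(deriv (DirichletCharacter.LFunction χ) (σ + t * Complex.I) /
          DirichletCharacter.LFunction χ (σ + t * Complex.I))).re
      + (-(deriv riemannZeta (σ + (2 * t : ℝ) * Complex.I) /
          riemannZeta (σ + (2 * t : ℝ) * Complex.I))).re := by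
  have h1 := Complex.hasSum_re (aux_Lam_hasSum (s := σ) (by simpa using hσ))
  have h2 := Complex.hasSum_re (aux_Lchi_hasSum χ (s := σ + t * Complex.I) (by simpa using hσ))
  have h3 := Complex.hasSum_re (aux_Lam_hasSum (s := σ + (2 * t : ℝ) * Complex.I) (by simpa using hσ))
  have h4 := ((h1.mul_left 3).add (h2.mul_left 4)).add h3
  refine h4.nonneg (fun n => ?_)
  rcases eq_or_ne n 0 with rfl | hn
  · simp
  have hpos : (0:ℝ) < n := by exact_mod_cast Nat.pos_of_ne_zero hn
  have hpow : ∀ u : ℝ, ((n : ℂ) ^ ((σ : ℂ) + u * Complex.I))⁻¹ =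
      ((n : ℝ) ^ (-σ) : ℝ) * (Complex.exp ((-(u * Real.log n) : ℝ) * Complex.I)) := by
    intro u
    have hn' : (n : ℂ) ≠ 0 := by exact_mod_cast hn
    rw [← Complex.cpow_neg, neg_add, Complex.cpow_add _ _ hn', Complex.ofReal_cpow hpos.le]
    congr 1
    · push_cast; rfl
    · rw [Complex.cpow_def_of_ne_zero hn', ← Complex.ofReal_natCast, ← Complex.ofReal_log hpos.le]
      congr 1; push_cast; ring
  have hpow0 : ((n : ℂ) ^ (σ : ℂ))⁻¹ = ((n : ℝ) ^ (-σ) : ℝ) := by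
    have := hpow 0; simpa using this
  have hre : ∀ v : ℝ, (Complex.exp (v * Complex.I)).re = Real.cos v := Complex.exp_ofReal_mul_I_re
  have key : ∀ e : ℝ, (e = 0 ∨ e = 1 ∨ e = -1) → χ n = e →
    0 ≤ 3 * (LSeries.term (fun n => ((ArithmeticFunction.vonMangoldt n : ℝ) : ℂ)) σ n).re
      + 4 * (LSeries.term (fun n => χ n * ((ArithmeticFunction.vonMangoldt n : ℝ) : ℂ)) (σ + t * Complex.I) n).re
      + (LSeries.term (fun n => ((ArithmeticFunction.vonMangoldt n : ℝ) : ℂ)) (σ + (2 * t : ℝ) * Complex.I) n).re := by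
    intro e he hce
    rw [LSeries.term_of_ne_zero hn, LSeries.term_of_ne_zero hn, LSeries.term_of_ne_zero hn,
      div_eq_mul_inv, div_eq_mul_inv, div_eq_mul_inv, hpow0, hpow, hpow, hce]
    have r1 : ∀ a b v : ℝ, ((a : ℂ) * ((b : ℂ) * Complex.exp (v * Complex.I))).re = a * b * Real.cos v := by
      intro a b v
      rw [← mul_assoc, ← Complex.ofReal_mul, Complex.re_ofReal_mul, hre]
    rw [← Complex.ofReal_mul, ← Complex.ofReal_mul, Complex.ofReal_re, r1, r1]
    have hL : 0 ≤ ArithmeticFunction.vonMangoldt n := ArithmeticFunction.vonMangoldt_nonneg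
    have hB : 0 ≤ (n:ℝ) ^ (-σ) := by positivity
    have : -(2 * t * Real.log n) = 2 * (-(t * Real.log n)) := by ring
    rw [this, Real.cos_two_mul]
    set c := Real.cos (-(t * Real.log n))
    have hc := Real.abs_cos_le_one (-(t * Real.log n))
    have : 0 ≤ ArithmeticFunction.vonMangoldt n * (n:ℝ)^(-σ) * (3 + 4 * e * c + (2 * c^2 - 1)) := by
      refine mul_nonneg (mul_nonneg hL hB) ?_
      rcases he with rfl | rfl | rfl
      · nlinarith [sq_nonneg c]
      · nlinarith [sq_nonneg (c + 1)]
      · nlinarith [sq_nonneg (c - 1)]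
    linarith
  rcases hχ (n : ZMod q) with h | h | h
  · exact key 0 (by simp) (by simpa using h)
  · exact key 1 (by simp) (by simpa using h)
  · exact key (-1) (by simp) (by simpa using h)

end

section

/-- The value of the quadratic character attached to `D`. -/
def auxJ (D : ℤ) (n : ℕ) : ℤ := if Odd n then jacobiSym D n else 0

lemma auxJ_mul_right (D : ℤ) (m n : ℕ) : auxJ D (m * n) = auxJ D m * auxJ D n := by
  unfold auxJ
  by_cases hm : Odd m <;> by_cases hn : Odd n <;> simp [hm, hn, Nat.odd_mul]
  exact jacobiSym.mul_right' D (by rintro rfl; simp at hm) (by rintro rfl; simp at hn)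

lemma auxJ_mul_left (D E : ℤ) (n : ℕ) : auxJ (D * E) n = auxJ D n * auxJ E n := by
  unfold auxJ
  by_cases hn : Odd n <;> simp [hn, jacobiSym.mul_left]

lemma auxJ_trichotomy (D : ℤ) (n : ℕ) : auxJ D n = 0 ∨ auxJ D n = 1 ∨ auxJ D n = -1 := by
  unfold auxJ
  split_ifs
  · exact jacobiSym.trichotomy D n
  · simp

lemma auxJ_mod (D : ℤ) (hD : D ≠ 0) (n : ℕ) : auxJ D (n % (4 * D.natAbs)) = auxJ D n := by
  have hodd : Odd (n % (4 * D.natAbs)) ↔ Odd n := by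
    have h : n % (4 * D.natAbs) % 2 = n % 2 :=
      Nat.mod_mod_of_dvd n (Dvd.dvd.mul_right (by norm_num) _)
    rw [Nat.odd_iff, Nat.odd_iff, h]
  unfold auxJ
  by_cases h : Odd n
  · rw [if_pos h, if_pos (hodd.mpr h)]
    exact (jacobiSym.mod_right D h).symm
  · rw [if_neg h, if_neg (fun h' => h (hodd.mp h'))]

lemma auxChi_exists (D : ℤ) : ∃ χ : DirichletCharacter ℂ (4 * D.natAbs),
    D ≠ 0 → ∀ n : ℕ, χ n = ((auxJ D n : ℤ) : ℂ) := by
  by_cases hD : D = 0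
  · exact ⟨1, fun h => absurd hD h⟩
  have hDa : 0 < D.natAbs := Int.natAbs_pos.mpr hD
  have : NeZero (4 * D.natAbs) := ⟨by omega⟩
  refine ⟨{ toFun := fun u => ((auxJ D u.val : ℤ) : ℂ)
            map_one' := ?_
            map_mul' := ?_
            map_nonunit' := ?_ }, fun _ n => ?_⟩
  · rw [ZMod.val_one_eq_one_mod, auxJ_mod D hD]
    simp [auxJ]
  · intro u v
    rw [ZMod.val_mul, auxJ_mod D hD, auxJ_mul_right]
    push_cast; rfl
  · intro u hu
    change ((auxJ D u.val : ℤ) : ℂ) = 0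
    have h1 : ¬ Nat.Coprime u.val (4 * D.natAbs) := by
      intro h
      apply hu
      rw [← ZMod.natCast_zmod_val u]
      exact (ZMod.isUnit_iff_coprime _ _).mpr h
    have : auxJ D u.val = 0 := by
      unfold auxJ
      split_ifs with h
      · have : NeZero u.val := ⟨by intro h0; simp [h0] at h⟩
        rw [jacobiSym.eq_zero_iff_not_coprime]
        intro hc
        apply h1
        apply Nat.Coprime.mul_right
        · have : Nat.Coprime u.val 2 := (Nat.coprime_two_right).mpr h
          exact Nat.Coprime.mul_right (k := u.val) this this
        · rw [Int.gcd_comm] at hc; exact hc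
      · rfl
    rw [this]; simp
  · change ((auxJ D ((n : ZMod (4 * D.natAbs)).val) : ℤ) : ℂ) = _
    rw [ZMod.val_natCast, auxJ_mod D hD]

noncomputable def auxChi (D : ℤ) : DirichletCharacter ℂ (4 * D.natAbs) := (auxChi_exists D).choose

lemma auxChi_apply {D : ℤ} (hD : D ≠ 0) (n : ℕ) : auxChi D n = ((auxJ D n : ℤ) : ℂ) :=
  (auxChi_exists D).choose_spec hD n

lemma auxChi_mul {D E : ℤ} (hD : D ≠ 0) (hE : E ≠ 0) (n : ℕ) :
    auxChi (D * E) n = auxChi D n * auxChi E n := by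
  rw [auxChi_apply hD, auxChi_apply hE, auxChi_apply (mul_ne_zero hD hE), auxJ_mul_left]
  push_cast; rfl

lemma auxChi_isQuadratic {D : ℤ} (hD : D ≠ 0) : (auxChi D).IsQuadratic := by
  have hDa : 0 < D.natAbs := Int.natAbs_pos.mpr hD
  have : NeZero (4 * D.natAbs) := ⟨by omega⟩
  intro u
  rw [← ZMod.natCast_zmod_val u, auxChi_apply hD]
  rcases auxJ_trichotomy D u.val with h | h | h <;> rw [h] <;> simp

lemma auxChi_ne_one_of {D : ℤ} (hD : D ≠ 0) {n : ℕ} (h : auxJ D n = -1) : auxChi D ≠ 1 := by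
  intro h1
  have h2 := auxChi_apply hD n
  rw [h1, h] at h2
  by_cases hu : IsUnit (n : ZMod (4 * D.natAbs))
  · rw [MulChar.one_apply hu] at h2; norm_num at h2
  · rw [MulChar.map_nonunit _ hu] at h2; norm_num at h2

lemma auxJ_exists_prime {D : ℤ} (hD : Squarefree D) (h1 : D ≠ 1) (B : ℕ) :
    ∃ n : ℕ, B < n ∧ n.Prime ∧ auxJ D n = -1 := by
  have hD0 : D ≠ 0 := hD.ne_zero
  by_cases hp : ∃ p : ℕ, p.Prime ∧ Odd p ∧ (p : ℤ) ∣ D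
  · obtain ⟨p, hpp, hodd, m, rfl⟩ := hp
    have : Fact p.Prime := ⟨hpp⟩
    have hm0 : m ≠ 0 := right_ne_zero_of_mul hD0
    have hpm : ¬ (p : ℤ) ∣ m := by
      rintro ⟨k, rfl⟩
      have := hD (p : ℤ) ⟨k, by ring⟩
      rw [Int.isUnit_iff_natAbs_eq] at this
      simp at this
      exact hpp.one_lt.ne' this
    have hcop : Nat.Coprime p (4 * m.natAbs) := by
      rw [hpp.coprime_iff_not_dvd, hpp.dvd_mul]
      rintro (h | h)
      · have : p ∣ 2 := hpp.dvd_of_dvd_pow (n := 2) h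
        have := (Nat.prime_dvd_prime_iff_eq hpp Nat.prime_two).mp this
        subst this; exact absurd hodd (by decide)
      · exact hpm (Int.natCast_dvd.mpr h)
    obtain ⟨r, hr⟩ : ∃ r : ℕ, legendreSym p r = -1 := by
      obtain ⟨a, ha⟩ := FiniteField.exists_nonsquare (F := ZMod p) (by
        rw [ZMod.ringChar_zmod_n]; rintro rfl; exact absurd hodd (by decide))
      refine ⟨a.val, ?_⟩
      rw [legendreSym.eq_neg_one_iff]
      rwa [Int.cast_natCast, ZMod.natCast_zmod_val]
    obtain ⟨k, hk1, hk2⟩ := Nat.chineseRemainder hcop r 1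
    have hkc : Nat.Coprime k (p * (4 * m.natAbs)) := by
      apply Nat.Coprime.mul_right
      · rw [Nat.coprime_comm, hpp.coprime_iff_not_dvd]
        intro h
        have h3 : p ∣ r := (hk1.dvd_iff dvd_rfl).mp h
        have : legendreSym p r = 0 := by
          rw [legendreSym.eq_zero_iff]; simpa using (ZMod.natCast_eq_zero_iff r p).mpr h3
        rw [this] at hr; norm_num at hr
      · have := hk2.gcd_eq
        simpa [Nat.Coprime] using this
    obtain ⟨n, hn, hnp, hnk⟩ := Nat.forall_exists_prime_gt_and_modEq (max B 2)
      (q := p * (4 * m.natAbs)) (a := k) (by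
        have := hpp.pos; have := Int.natAbs_pos.mpr hm0; positivity) hkc
    have hn2 : 2 < n := lt_of_le_of_lt (le_max_right _ _) hn
    have hnodd : Odd n := hnp.odd_of_ne_two (by omega)
    refine ⟨n, lt_of_le_of_lt (le_max_left _ _) hn, hnp, ?_⟩
    have hn1 : n ≡ 1 [MOD 4 * m.natAbs] := (hnk.of_mul_left _).trans hk2
    have hnr : n ≡ r [MOD p] := (hnk.of_mul_right _).trans hk1
    have hn4 : n % 4 = 1 := hn1.of_mul_right _
    rw [auxJ_mul_left]
    have e1 : auxJ m n = 1 := by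
      rw [← auxJ_mod m hm0, hn1, auxJ_mod m hm0]; simp [auxJ]
    have e2 : auxJ p n = -1 := by
      unfold auxJ
      rw [if_pos hnodd, jacobiSym.quadratic_reciprocity_one_mod_four' hodd hn4, jacobiSym.mod_left,
        show (n : ℤ) % p = r % p from by exact_mod_cast hnr, ← jacobiSym.mod_left,
        ← jacobiSym.legendreSym.to_jacobiSym, hr]
    rw [e1, e2]; norm_num
  · have h2 : D = -1 ∨ D = 2 ∨ D = -2 := by
      have hpow : D.natAbs = 1 ∨ D.natAbs = 2 := by
        have hsq : Squarefree D.natAbs := Int.squarefree_natAbs.mpr hD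
        have hdiv : ∀ {p : ℕ}, p.Prime → p ∣ D.natAbs → p = 2 := by
          intro p hpp hd
          by_contra hne
          exact hp ⟨p, hpp, hpp.odd_of_ne_two hne, Int.natCast_dvd.mpr hd⟩
        have := Nat.eq_prime_pow_of_unique_prime_dvd (Int.natAbs_ne_zero.mpr hD0) hdiv
        have h3 := hsq.natFactorization_le_one 2
        rw [this] at h3 ⊢
        rw [Nat.factorization_pow, Nat.Prime.factorization Nat.prime_two] at h3
        simp at h3
        interval_cases (D.natAbs.primeFactorsList.length)
        · left; simp
        · right; simp
      omega
    rcases h2 with rfl | h2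
    · obtain ⟨n, hn, hnp, hnk⟩ := Nat.forall_exists_prime_gt_and_modEq (max B 2)
        (q := 4) (a := 3) (by norm_num) (by norm_num)
      refine ⟨n, lt_of_le_of_lt (le_max_left _ _) hn, hnp, ?_⟩
      have hnk' : n % 4 = 3 := hnk
      have hodd : Odd n := by rw [Nat.odd_iff]; omega
      unfold auxJ
      rw [if_pos hodd, jacobiSym.at_neg_one hodd, ZMod.χ₄_nat_three_mod_four hnk']
    · obtain ⟨n, hn, hnp, hnk⟩ := Nat.forall_exists_prime_gt_and_modEq (max B 2)
        (q := 8) (a := 5) (by norm_num) (by norm_num)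
      refine ⟨n, lt_of_le_of_lt (le_max_left _ _) hn, hnp, ?_⟩
      have hnk' : n % 8 = 5 := hnk
      have hodd : Odd n := by rw [Nat.odd_iff]; omega
      unfold auxJ
      rw [if_pos hodd]
      rcases h2 with rfl | rfl
      · rw [jacobiSym.at_two hodd, ZMod.χ₈_nat_eq_if_mod_eight]; 
        rw [if_neg (by omega), if_neg (by omega)]
      · rw [jacobiSym.at_neg_two hodd, ZMod.χ₈'_nat_eq_if_mod_eight]
        rw [if_neg (by omega), if_neg (by omega)]

lemma auxChi_ne_one {D : ℤ} (hD : Squarefree D) (h1 : D ≠ 1) : auxChi D ≠ 1 := by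
  obtain ⟨n, -, -, hn⟩ := auxJ_exists_prime hD h1 0
  exact auxChi_ne_one_of hD.ne_zero hn

lemma auxChi_mul_ne_one {D E : ℤ} (hD : Squarefree D) (hE : Squarefree E) (h : D ≠ E) :
    auxChi (D * E) ≠ 1 := by
  have hg0 : 0 < Int.gcd D E := Int.gcd_pos_of_ne_zero_left _ hD.ne_zero
  obtain ⟨d, e, hde, h1, h2⟩ := Int.exists_gcd_one hg0
  set g : ℤ := (Int.gcd D E : ℤ) with hg
  have hgne : g ≠ 0 := by rw [hg]; exact_mod_cast hg0.ne'
  have hsq : Squarefree (d * e) := by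
    have hc : IsCoprime d e := Int.isCoprime_iff_gcd_eq_one.mpr hde
    rw [squarefree_mul_iff]
    exact ⟨hc.isRelPrime, hD.squarefree_of_dvd ⟨g, h1⟩, hE.squarefree_of_dvd ⟨g, h2⟩⟩
  have hne : d * e ≠ 1 := by
    intro h3
    apply h
    rw [h1, h2]
    rcases Int.eq_one_or_neg_one_of_mul_eq_one' h3 with ⟨rfl, rfl⟩ | ⟨rfl, rfl⟩ <;> rfl
  obtain ⟨n, hn, hnp, hj⟩ := auxJ_exists_prime hsq hne (max g.natAbs 2)
  have hnodd : Odd n := hnp.odd_of_ne_two (by omega)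
  refine auxChi_ne_one_of (mul_ne_zero hD.ne_zero hE.ne_zero) (n := n) ?_
  rw [h1, h2, show d * g * (e * g) = (d * e) * (g * g) by ring, auxJ_mul_left, auxJ_mul_left g g, hj]
  have : auxJ g n * auxJ g n = 1 := by
    unfold auxJ
    rw [if_pos hnodd, ← sq]
    apply jacobiSym.sq_one
    have : Nat.Coprime n g.natAbs := by
      rw [hnp.coprime_iff_not_dvd]
      intro hd
      have := Nat.le_of_dvd (Int.natAbs_pos.mpr hgne) hd
      omega
    rw [Int.gcd_comm]; simpa [Int.gcd] using this
  rw [this]; norm_num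

end

section

open scoped ComplexOrder in
lemma aux_sign {F D : ℂ → ℂ} {x : ℂ} (hF : AnalyticAt ℂ F x) (hD : AnalyticAt ℂ D x)
    (hd : deriv F =ᶠ[nhds x] fun z => -(F z * D z)) (h0 : 0 ≤ F x)
    (hDs : ∀ k : ℕ, 0 ≤ (-1) ^ k * iteratedDeriv k D x) (m : ℕ) :
    0 ≤ (-1) ^ m * iteratedDeriv m F x := by
  induction m using Nat.strong_induction_on with
  | _ m ih =>
    rcases m with _ | m
    · simpa using h0
    · rw [iteratedDeriv_succ', hd.iteratedDeriv_eq]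
      have e : (fun z => -(F z * D z)) = -(fun z => F z * D z) := rfl
      rw [e, iteratedDeriv_neg, iteratedDeriv_fun_mul hF.contDiffAt hD.contDiffAt]
      have : (-1 : ℂ) ^ (m+1) * -(∑ i ∈ Finset.range (m + 1), ((m.choose i : ℕ) : ℂ) * iteratedDeriv i F x *
          iteratedDeriv (m - i) D x) = ∑ i ∈ Finset.range (m + 1), ((m.choose i : ℕ) : ℂ) *
          ((-1) ^ i * iteratedDeriv i F x) * ((-1) ^ (m-i) * iteratedDeriv (m - i) D x) := by
        rw [pow_succ, mul_assoc, neg_one_mul, neg_neg, Finset.mul_sum]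
        refine Finset.sum_congr rfl (fun i hi => ?_)
        have hi' : i ≤ m := by simpa [Nat.lt_succ_iff] using hi
        rw [show (-1 : ℂ) ^ m = (-1) ^ i * (-1) ^ (m - i) by rw [← pow_add]; congr 1; omega]
        ring
      rw [this]
      refine Finset.sum_nonneg (fun i hi => ?_)
      have hi' : i ≤ m := by simpa [Nat.lt_succ_iff] using hi
      refine mul_nonneg (mul_nonneg ?_ (ih i (by omega))) (hDs _)
      exact_mod_cast Nat.zero_le _

lemma aux_iteratedDeriv_inv (m : ℕ) : iteratedDeriv m (fun s : ℂ => (s - 1)⁻¹) 2 =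
    (-1) ^ m * (m.factorial : ℂ) := by
  have h1 : iteratedDeriv m (fun s : ℂ => (s - 1)⁻¹) 2 = _ :=
    congrFun (iteratedDeriv_comp_sub_const m (Inv.inv : ℂ → ℂ) 1) 2
  rw [h1]
  rw [iteratedDeriv_eq_iterate, iter_deriv_inv]
  norm_num

lemma aux_estermann {G : ℂ → ℂ} (hG : Differentiable ℂ G) {c0 K : ℝ} (hK : 0 < K)
    (hGK : ∀ z, ‖z - 2‖ ≤ 4/3 → ‖G z‖ ≤ K)
    (hpos : ∀ m : ℕ, 0 ≤ ((-1) ^ m * iteratedDeriv m (fun s => G s / (s - 1)) 2).re)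
    (h0 : c0 ≤ (G 2).re) {s : ℝ} (hs1 : 7/8 ≤ s) (hs2 : s < 1) {M : ℕ} (hM1 : 1 ≤ M)
    (hM : 40 * K * (27/32) ^ M ≤ c0 / 2) (hneg : 0 ≤ (G s).re) :
    c0 / 2 * (1 - s) ≤ (G 1).re * (2 - s) ^ M := by
  set lam := (G 1).re with hlam
  set H : ℂ → ℂ := dslope G 1 with hH
  have hHd : Differentiable ℂ H := by
    rw [← differentiableOn_univ, hH, Complex.differentiableOn_dslope Filter.univ_mem]
    exact hG.differentiableOn
  have hHne : ∀ z : ℂ, z ≠ 1 → H z = (G z - G 1) / (z - 1) := by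
    intro z hz
    rw [hH, dslope_of_ne _ hz, slope_def_field]
  set r : ℝ := 2 - s with hr
  have hr1 : 1 < r := by linarith
  have hr2 : r ≤ 9/8 := by linarith
  set h : ℕ → ℝ := fun m => ((m.factorial : ℂ)⁻¹ * ((-1) ^ m * iteratedDeriv m H 2)).re with hh
  have hsum : HasSum (fun m => h m * r ^ m) (H s).re := by
    have := Complex.hasSum_re (Complex.hasSum_taylorSeries_of_entire hHd 2 s)
    refine this.congr_fun (fun m => ?_)
    have e : ((s : ℂ) - 2) ^ m = (-1) ^ m * ((r ^ m : ℝ) : ℂ) := by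
      rw [hr]; push_cast; rw [← mul_pow]; congr 1; ring
    simp only [smul_eq_mul, hh]
    rw [e, ← Complex.re_mul_ofReal]
    congr 1; ring
  have hbound : ∀ m, |h m| ≤ 6 * K * (3/4) ^ m := by
    intro m
    have h1 : ‖iteratedDeriv m H 2‖ ≤ m.factorial * (6 * K) / (4/3) ^ m := by
      refine Complex.norm_iteratedDeriv_le_of_forall_mem_sphere_norm_le m (by norm_num)
        hHd.diffContOnCl (fun z hz => ?_)
      have hz' : ‖z - 2‖ = 4/3 := by simpa [dist_eq_norm] using hz
      have hz1 : 1/3 ≤ ‖z - 1‖ := by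
        have : ‖z - 2‖ ≤ ‖z - 1‖ + ‖(1:ℂ)‖ := by
          calc ‖z - 2‖ = ‖(z - 1) - 1‖ := by ring_nf
            _ ≤ _ := norm_sub_le _ _
        rw [norm_one] at this; linarith
      have hne : z ≠ 1 := by rintro rfl; simp at hz1; linarith
      rw [hHne z hne, norm_div, div_le_iff₀ (by linarith)]
      have a1 := hGK z hz'.le
      have a2 := hGK 1 (by norm_num)
      have := norm_sub_le (G z) (G 1)
      nlinarith
    have h2 : |h m| ≤ ‖(m.factorial : ℂ)⁻¹ * ((-1) ^ m * iteratedDeriv m H 2)‖ := Complex.abs_re_le_norm _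
    refine h2.trans ?_
    have hf : (0:ℝ) < m.factorial := by exact_mod_cast m.factorial_pos
    rw [norm_mul, norm_mul, norm_pow, norm_neg, norm_one, one_pow, one_mul, norm_inv,
      Complex.norm_natCast, inv_mul_le_iff₀ hf]
    refine h1.trans (le_of_eq ?_)
    rw [show (3/4 : ℝ) = (4/3)⁻¹ by norm_num, inv_pow]; ring
  have hF : ∀ m, iteratedDeriv m (fun s => G s / (s - 1)) 2 =
      iteratedDeriv m H 2 + G 1 * ((-1) ^ m * (m.factorial : ℂ)) := by
    intro m
    have hev : (fun s => G s / (s - 1)) =ᶠ[nhds 2] fun s => H s + G 1 * (s - 1)⁻¹ := by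
      filter_upwards [isOpen_ne.mem_nhds (show (2:ℂ) ≠ 1 by norm_num)] with z hz
      rw [hHne z hz, div_eq_mul_inv, div_eq_mul_inv]; ring
    have hc : ContDiffAt ℂ m (fun s : ℂ => (s - 1)⁻¹) 2 :=
      (contDiffAt_id.sub contDiffAt_const).inv (by norm_num)
    rw [hev.iteratedDeriv_eq, iteratedDeriv_fun_add hHd.contDiff.contDiffAt (contDiffAt_const.mul hc),
      iteratedDeriv_const_mul _ hc, aux_iteratedDeriv_inv]
  have hb : ∀ m, 0 ≤ h m + lam := by
    intro m
    have h1 := hpos m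
    have hf : (0:ℝ) < m.factorial := by exact_mod_cast m.factorial_pos
    have hf' : (m.factorial : ℂ) ≠ 0 := by exact_mod_cast hf.ne'
    have e1 : ((-1 : ℂ) ^ m * (-1) ^ m) = 1 := by rw [← mul_pow]; simp
    have e : h m + lam = ((m.factorial : ℝ))⁻¹ *
        ((-1) ^ m * iteratedDeriv m (fun s => G s / (s - 1)) 2).re := by
      rw [← Complex.re_ofReal_mul, hF, hh, hlam, ← Complex.add_re]
      congr 1
      push_cast
      rw [show (m.factorial : ℂ)⁻¹ * ((-1) ^ m * (iteratedDeriv m H 2 + G 1 * ((-1) ^ m * (m.factorial : ℂ))))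
        = (m.factorial : ℂ)⁻¹ * ((-1) ^ m * iteratedDeriv m H 2) +
          ((m.factorial : ℂ)⁻¹ * m.factorial) * ((-1) ^ m * (-1) ^ m) * G 1 by ring, e1,
          inv_mul_cancel₀ hf']
      ring
    rw [e]; positivity
  have hb0 : c0 ≤ h 0 + lam := by
    have : h 0 = (G 2).re - lam := by
      simp only [hh, hlam]
      simp [hHne 2 (by norm_num)]
      norm_num
    linarith
  -- split
  have hsplit : (H s).re = ∑ m ∈ Finset.range M, h m * r ^ m + ∑' m, h (m + M) * r ^ (m + M) := by
    rw [← hsum.tsum_eq, hsum.summable.sum_add_tsum_nat_add M]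
  have htail : -(c0 / 2) ≤ ∑' m, h (m + M) * r ^ (m + M) := by
    have hg : HasSum (fun m : ℕ => 6 * K * (27/32) ^ M * (27/32 : ℝ) ^ m)
        (6 * K * (27/32) ^ M * (1 - 27/32)⁻¹) :=
      (hasSum_geometric_of_lt_one (by norm_num) (by norm_num)).mul_left _
    have := tsum_of_norm_bounded (f := fun m => h (m + M) * r ^ (m + M)) hg (fun m => ?_)
    · have h2 := (abs_le.mp ((Real.norm_eq_abs _).symm.le.trans this)).1
      have : 6 * K * (27/32 : ℝ) ^ M * (1 - 27/32)⁻¹ ≤ 40 * K * (27/32) ^ M := by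
        have : 0 ≤ K * (27/32 : ℝ) ^ M := by positivity
        norm_num; nlinarith
      linarith
    · rw [norm_mul, Real.norm_eq_abs, Real.norm_of_nonneg (by positivity)]
      calc |h (m + M)| * r ^ (m + M) ≤ (6 * K * (3/4) ^ (m + M)) * (9/8) ^ (m + M) := by
            gcongr
            exact hbound _
        _ = 6 * K * (27/32) ^ (m + M) := by rw [mul_assoc, ← mul_pow]; norm_num
        _ = _ := by rw [pow_add]; ring
  have hhead : c0 - lam * ((r ^ M - 1) / (r - 1)) ≤ ∑ m ∈ Finset.range M, h m * r ^ m := by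
    rw [← geom_sum_eq hr1.ne', Finset.mul_sum, sub_le_iff_le_add, ← Finset.sum_add_distrib]
    have h1 : c0 ≤ h 0 * r ^ 0 + lam * r ^ 0 := by simpa using hb0
    refine h1.trans ?_
    refine Finset.single_le_sum (f := fun m => h m * r ^ m + lam * r ^ m) (fun m _ => ?_)
      (Finset.mem_range.mpr hM1)
    have := hb m
    rw [← add_mul]; positivity
  have hHs : (H s).re = (lam - (G s).re) / (1 - s) := by
    have hne : (s : ℂ) ≠ 1 := by exact_mod_cast hs2.ne
    rw [hHne _ hne, show ((s : ℂ) - 1) = ((s - 1 : ℝ) : ℂ) by push_cast; rfl, Complex.div_ofReal_re,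
      Complex.sub_re, ← neg_div_neg_eq, neg_sub, neg_sub]
  have h1s : 0 < 1 - s := by linarith
  have : c0 / 2 - lam * ((r ^ M - 1) / (r - 1)) ≤ (lam - (G s).re) / (1 - s) := by linarith
  rw [show r - 1 = 1 - s by rw [hr]; ring] at this
  rw [le_div_iff₀ h1s] at this
  have e : (c0 / 2 - lam * ((r ^ M - 1) / (1 - s))) * (1 - s) = c0/2*(1-s) - lam * (r^M - 1) := by
    field_simp
  rw [e] at this
  linarith

end

section
open DirichletCharacter

lemma aux_quad_real {q : ℕ} {χ : DirichletCharacter ℂ q} (hq : χ.IsQuadratic) (u : ZMod q) :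
    ∃ e : ℝ, (e = 0 ∨ e = 1 ∨ e = -1) ∧ χ u = e := by
  rcases hq u with h | h | h
  · exact ⟨0, by simp, by simpa using h⟩
  · exact ⟨1, by simp, by simpa using h⟩
  · exact ⟨-1, by simp, by simpa using h⟩

lemma aux_natpow (n : ℕ) (σ : ℝ) : (n : ℂ) ^ (-(σ : ℂ)) = (((n : ℝ) ^ (-σ) : ℝ) : ℂ) := by
  rw [Complex.ofReal_cpow (Nat.cast_nonneg n)]; push_cast; rfl

lemma aux_real {q : ℕ} [NeZero q] {χ : DirichletCharacter ℂ q} (hq : χ.IsQuadratic) (h1 : χ ≠ 1)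
    {σ : ℝ} (hσ : 0 < σ) : (LFunction χ σ).im = 0 := by
  rw [aux_LFunction_eq h1 (by simpa using hσ)]
  have : ∀ n, auxT χ n σ = (((auxT χ n σ).re : ℝ) : ℂ) := by
    intro n
    have : (auxT χ n σ).im = 0 := by
      unfold auxT
      rw [aux_natpow, aux_natpow, ← Complex.ofReal_sub, Complex.im_mul_ofReal]
      have : (auxS χ n).im = 0 := by
        unfold auxS
        rw [Complex.im_sum]
        refine Finset.sum_eq_zero (fun k _ => ?_)
        obtain ⟨e, -, he⟩ := aux_quad_real hq ((k + 1 : ℕ) : ZMod q)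
        rw [he]; simp
      rw [this, zero_mul]
    exact Complex.ext rfl (by simpa using this)
  rw [tsum_congr this, ← Complex.ofReal_tsum, Complex.ofReal_im]

open scoped ComplexOrder in
lemma aux_pos_gt_one {q : ℕ} [NeZero q] {χ : DirichletCharacter ℂ q} (hq : χ.IsQuadratic)
    {σ : ℝ} (hσ : 1 < σ) : 0 < LFunction χ σ := by
  have hs : 1 < (σ : ℂ).re := by simpa using hσ
  have h1 := LSeries_eulerProduct_hasProd χ hs
  have h2 : LFunction χ σ ≠ 0 := by
    rw [LFunction_eq_LSeries χ hs]; exact LSeries_ne_zero_of_one_lt_re χ hs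
  refine lt_of_le_of_ne ?_ h2.symm
  rw [LFunction_eq_LSeries χ hs]
  refine isClosed_Ici.mem_of_tendsto h1 (Filter.Eventually.of_forall (fun S => ?_))
  change (0:ℂ) ≤ ∏ p ∈ S, (1 - χ ((p : ℕ) : ZMod q) * ((p : ℕ) : ℂ) ^ (-(σ : ℂ)))⁻¹
  refine Finset.prod_nonneg (fun p _ => ?_)
  obtain ⟨e, he, hce⟩ := aux_quad_real hq ((p : ℕ) : ZMod q)
  rw [hce, aux_natpow, ← Complex.ofReal_mul, ← Complex.ofReal_one, ← Complex.ofReal_sub,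
    ← Complex.ofReal_inv]
  have hp1 : (p : ℝ) ^ (-σ) ≤ 1 := by
    apply Real.rpow_le_one_of_one_le_of_nonpos
    · exact_mod_cast p.2.one_lt.le
    · linarith
  have hp0 : 0 ≤ (p : ℝ) ^ (-σ) := by positivity
  have : 0 ≤ (1 - e * (p : ℝ) ^ (-σ))⁻¹ := by
    rw [inv_nonneg]
    rcases he with rfl | rfl | rfl <;> linarith
  exact_mod_cast this

open scoped ComplexOrder in
lemma aux_pos {q : ℕ} [NeZero q] {χ : DirichletCharacter ℂ q} (hq : χ.IsQuadratic) (h1 : χ ≠ 1)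
    {β : ℝ} (hβ : 0 < β) (hz : ∀ σ : ℝ, β ≤ σ → σ < 1 → LFunction χ σ ≠ 0) {σ : ℝ} (hσ : β ≤ σ) :
    0 < LFunction χ σ := by
  have him := aux_real hq h1 (hβ.trans_le hσ)
  rcases lt_or_ge 1 σ with h | h
  · exact aux_pos_gt_one hq h
  rw [Complex.pos_iff]
  refine ⟨?_, him.symm⟩
  by_contra hcon
  push Not at hcon
  have h2 := (Complex.pos_iff.mp (aux_pos_gt_one hq (σ := 2) (by norm_num))).1
  have hcont : Continuous (fun x : ℝ => (LFunction χ x).re) :=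
    Complex.continuous_re.comp ((differentiable_LFunction h1).continuous.comp Complex.continuous_ofReal)
  obtain ⟨x, hx, hx0⟩ := intermediate_value_Icc (by linarith : σ ≤ 2) hcont.continuousOn
    (show (0:ℝ) ∈ Set.Icc _ _ from ⟨hcon, h2.le⟩)
  have hx0' : LFunction χ x = 0 := Complex.ext hx0 (aux_real hq h1 (by linarith [hx.1]))
  rcases lt_or_ge x 1 with h3 | h3
  · exact hz x (hσ.trans hx.1) h3 hx0'
  · exact LFunction_ne_zero_of_one_le_re χ (Or.inl h1) (by simpa using h3) hx0'

end

section
open DirichletCharacter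

noncomputable def auxG {q1 q2 q3 : ℕ} [NeZero q1] [NeZero q2] [NeZero q3] (χ1 : DirichletCharacter ℂ q1)
    (χ2 : DirichletCharacter ℂ q2) (χ3 : DirichletCharacter ℂ q3) (s : ℂ) : ℂ :=
  riemannZeta₁ s * (LFunction χ1 s * LFunction χ2 s * LFunction χ3 s)

open scoped ComplexOrder in
lemma aux_siegel_sign {q1 q2 q3 : ℕ} [NeZero q1] [NeZero q2] [NeZero q3] {χ1 : DirichletCharacter ℂ q1}
    {χ2 : DirichletCharacter ℂ q2} {χ3 : DirichletCharacter ℂ q3} (hq1 : χ1.IsQuadratic)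
    (hq2 : χ2.IsQuadratic) (hq3 : χ3.IsQuadratic) (h1 : χ1 ≠ 1) (h2 : χ2 ≠ 1) (h3 : χ3 ≠ 1)
    (hmul : ∀ n : ℕ, χ3 n = χ1 n * χ2 n) (m : ℕ) :
    0 ≤ (-1) ^ m * iteratedDeriv m (fun s => auxG χ1 χ2 χ3 s / (s - 1)) 2 := by
  set F : ℂ → ℂ := fun s => auxG χ1 χ2 χ3 s / (s - 1) with hF
  set a : ℕ → ℂ := fun n => (((ArithmeticFunction.vonMangoldt n : ℝ) : ℂ) +
    χ1 n * ((ArithmeticFunction.vonMangoldt n : ℝ) : ℂ)) + (χ2 n * ((ArithmeticFunction.vonMangoldt n : ℝ) : ℂ)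
     + χ3 n * ((ArithmeticFunction.vonMangoldt n : ℝ) : ℂ)) with ha
  have hasum : ∀ s : ℂ, 1 < s.re → LSeriesHasSum a s
      ((-(deriv riemannZeta s / riemannZeta s) + -(deriv (LFunction χ1) s / LFunction χ1 s))
      + (-(deriv (LFunction χ2) s / LFunction χ2 s) + -(deriv (LFunction χ3) s / LFunction χ3 s))) := by
    intro s hs
    exact ((aux_Lam_hasSum hs).add (aux_Lchi_hasSum χ1 hs)).add
      ((aux_Lchi_hasSum χ2 hs).add (aux_Lchi_hasSum χ3 hs))
  have hane : 0 ≤ a := by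
    intro n
    have hL : 0 ≤ ArithmeticFunction.vonMangoldt n := ArithmeticFunction.vonMangoldt_nonneg
    obtain ⟨e1, he1, hc1⟩ := aux_quad_real hq1 (n : ZMod q1)
    obtain ⟨e2, he2, hc2⟩ := aux_quad_real hq2 (n : ZMod q2)
    have : a n = ((ArithmeticFunction.vonMangoldt n * ((1 + e1) * (1 + e2)) : ℝ) : ℂ) := by
      simp only [ha]; rw [hmul, hc1, hc2]; push_cast; ring
    rw [this]
    have g1 : 0 ≤ 1 + e1 := by rcases he1 with rfl | rfl | rfl <;> norm_num
    have g2 : 0 ≤ 1 + e2 := by rcases he2 with rfl | rfl | rfl <;> norm_num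
    have : 0 ≤ ArithmeticFunction.vonMangoldt n * ((1 + e1) * (1 + e2)) := by positivity
    change (0:ℂ) ≤ _
    exact_mod_cast this
  have habs : LSeries.abscissaOfAbsConv a ≤ (1 : ℝ) := by
    refine LSeries.abscissaOfAbsConv_le_of_forall_lt_LSeriesSummable (fun y hy => ?_)
    exact (hasum y (by simpa using hy)).LSeriesSummable
  have hlt : LSeries.abscissaOfAbsConv a < ((2:ℝ) : EReal) :=
    lt_of_le_of_lt habs (by exact_mod_cast one_lt_two)
  have hopen : {s : ℂ | 1 < s.re} ∈ nhds (2:ℂ) :=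
    (isOpen_lt continuous_const Complex.continuous_re).mem_nhds (by simp)
  have hdG : Differentiable ℂ (auxG χ1 χ2 χ3) := by
    have e0 := differentiable_riemannZeta₁
    have e1 := differentiable_LFunction h1
    have e2 := differentiable_LFunction h2
    have e3 := differentiable_LFunction h3
    unfold auxG; exact e0.mul ((e1.mul e2).mul e3)
  refine aux_sign (F := F) (D := LSeries a) (x := 2) ?_ ?_ ?_ ?_ ?_ m
  · exact (hdG.analyticAt 2).div (analyticAt_id.sub analyticAt_const) (by norm_num)
  · have := LSeries_analyticOnNhd a
    exact this 2 (by simpa using hlt)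
  · filter_upwards [hopen] with s hs
    have hs : 1 < s.re := hs
    have hs1 : s ≠ 1 := by rintro rfl; simp at hs
    rw [(hasum s hs).LSeries_eq]
    have hev : F =ᶠ[nhds s] fun s => riemannZeta s * (LFunction χ1 s * LFunction χ2 s * LFunction χ3 s) := by
      filter_upwards [isOpen_ne.mem_nhds hs1] with z hz
      simp only [hF, auxG]
      rw [aux_zeta_eq hz]; ring
    rw [hev.deriv_eq, hev.eq_of_nhds]
    have d0 := (differentiableAt_riemannZeta hs1).hasDerivAt
    have d1 := (differentiable_LFunction h1 s).hasDerivAt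
    have d2 := (differentiable_LFunction h2 s).hasDerivAt
    have d3 := (differentiable_LFunction h3 s).hasDerivAt
    have d := d0.fun_mul ((d1.fun_mul d2).fun_mul d3)
    rw [d.deriv]
    have n0 := riemannZeta_ne_zero_of_one_le_re hs.le
    have n1 := LFunction_ne_zero_of_one_le_re χ1 (Or.inl h1) hs.le
    have n2 := LFunction_ne_zero_of_one_le_re χ2 (Or.inl h2) hs.le
    have n3 := LFunction_ne_zero_of_one_le_re χ3 (Or.inl h3) hs.le
    field_simp
    ring
  · have e0 : 0 < riemannZeta (2:ℝ) := riemannZeta_pos_of_one_lt (by norm_num)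
    have e1 := aux_pos_gt_one hq1 (σ := 2) (by norm_num)
    have e2 := aux_pos_gt_one hq2 (σ := 2) (by norm_num)
    have e3 := aux_pos_gt_one hq3 (σ := 2) (by norm_num)
    have : F 2 = riemannZeta (2:ℝ) * (LFunction χ1 (2:ℝ) * LFunction χ2 (2:ℝ) * LFunction χ3 (2:ℝ)) := by
      simp only [hF, auxG]
      rw [aux_zeta_eq (by norm_num)]; push_cast; norm_num
    rw [this]
    exact (mul_pos e0 (mul_pos (mul_pos e1 e2) e3)).le
  · intro k
    exact_mod_cast LSeries.iteratedDeriv_alternating hane hlt k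

open scoped ComplexOrder in
lemma aux_siegel_two : ∃ c0 > 0, ∀ (q1 q2 q3 : ℕ) [NeZero q1] [NeZero q2] [NeZero q3]
    (χ1 : DirichletCharacter ℂ q1)
    (χ2 : DirichletCharacter ℂ q2) (χ3 : DirichletCharacter ℂ q3), χ1.IsQuadratic →
    χ2.IsQuadratic → χ3.IsQuadratic → c0 ≤ (auxG χ1 χ2 χ3 2).re := by
  obtain ⟨c, hc, h⟩ := aux_L_lower
  have e0 : 0 < riemannZeta (2:ℝ) := riemannZeta_pos_of_one_lt (by norm_num)
  refine ⟨‖riemannZeta (2:ℝ)‖ * (c * c * c), by have := norm_pos_iff.mpr e0.ne'; positivity, ?_⟩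
  intro q1 q2 q3 _ _ _ χ1 χ2 χ3 hq1 hq2 hq3
  have e1 := aux_pos_gt_one hq1 (σ := 2) (by norm_num)
  have e2 := aux_pos_gt_one hq2 (σ := 2) (by norm_num)
  have e3 := aux_pos_gt_one hq3 (σ := 2) (by norm_num)
  have : auxG χ1 χ2 χ3 2 = riemannZeta (2:ℝ) * (LFunction χ1 (2:ℝ) * LFunction χ2 (2:ℝ) * LFunction χ3 (2:ℝ)) := by
    simp only [auxG]
    rw [aux_zeta_eq (by norm_num)]; push_cast; norm_num
  have hp := mul_pos e0 (mul_pos (mul_pos e1 e2) e3)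
  rw [this, Complex.re_eq_norm.mpr hp.le, norm_mul, norm_mul, norm_mul]
  have f1 := h q1 χ1 (2:ℝ) (by norm_num) (by norm_num)
  have f2 := h q2 χ2 (2:ℝ) (by norm_num) (by norm_num)
  have f3 := h q3 χ3 (2:ℝ) (by norm_num) (by norm_num)
  have e : c * (((2:ℝ):ℂ).re - 1) = c := by rw [Complex.ofReal_re]; ring
  rw [e] at f1 f2 f3
  gcongr

lemma aux_siegel_bound : ∃ C > 0, ∀ (q1 q2 q3 : ℕ) [NeZero q1] [NeZero q2] [NeZero q3]
    (χ1 : DirichletCharacter ℂ q1)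
    (χ2 : DirichletCharacter ℂ q2) (χ3 : DirichletCharacter ℂ q3), χ1 ≠ 1 → χ2 ≠ 1 → χ3 ≠ 1 →
    ∀ z : ℂ, ‖z - 2‖ ≤ 4/3 → ‖auxG χ1 χ2 χ3 z‖ ≤ C * (q1 * q2 * q3) := by
  obtain ⟨C, hC, h⟩ := aux_L_bound (δ := 1) one_pos le_rfl
  obtain ⟨C', hC', h'⟩ := aux_zeta1_bound
  refine ⟨(1 + C' * (3 * 4)) * (C * 4) ^ 3, by positivity, ?_⟩
  intro q1 q2 q3 _ _ _ χ1 χ2 χ3 h1 h2 h3 z hz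
  have hzn : ‖z‖ ≤ 4 := by
    calc ‖z‖ = ‖(z - 2) + 2‖ := by ring_nf
      _ ≤ ‖z - 2‖ + ‖(2:ℂ)‖ := norm_add_le _ _
      _ ≤ 4 := by rw [Complex.norm_two]; linarith
  have hzn1 : ‖z - 1‖ ≤ 3 := by
    calc ‖z - 1‖ = ‖(z - 2) + 1‖ := by ring_nf
      _ ≤ ‖z - 2‖ + ‖(1:ℂ)‖ := norm_add_le _ _
      _ ≤ 3 := by rw [norm_one]; linarith
  have hre : 1/2 ≤ z.re := by
    have := (abs_le.mp ((Complex.abs_re_le_norm (z - 2)).trans hz)).1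
    simp at this; linarith
  have b : ∀ (q : ℕ) [NeZero q] (χ : DirichletCharacter ℂ q), χ ≠ 1 → ‖LFunction χ z‖ ≤ C * 4 * q := by
    intro q _ χ hχ
    refine (h q χ hχ z (by linarith)).trans ?_
    rw [Real.rpow_one]; gcongr
  have b0 : ‖riemannZeta₁ z‖ ≤ 1 + C' * (3 * 4) := (h' z hre).trans (by gcongr)
  unfold auxG
  rw [norm_mul, norm_mul, norm_mul]
  calc _ ≤ (1 + C' * (3 * 4)) * ((C * 4 * q1) * (C * 4 * q2) * (C * 4 * q3)) := by
        gcongr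
        · exact b q1 χ1 h1
        · exact b q2 χ2 h2
        · exact b q3 χ3 h3
    _ = _ := by ring

end

section
open DirichletCharacter

instance auxNZ (D : ℤ) [NeZero D] : NeZero (4 * D.natAbs) :=
  ⟨by have := NeZero.ne D; omega⟩

lemma aux_siegel_ineq : ∃ κ : ℝ, 0 < κ ∧ κ ≤ 1/8 ∧ (∀ σ : ℝ, 1 - κ ≤ σ → σ ≤ 1 → 0 < (riemannZeta₁ σ).re) ∧
    ∀ (q1 : ℕ) [NeZero q1] (χ1 : DirichletCharacter ℂ q1), χ1.IsQuadratic → χ1 ≠ 1 →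
    ∀ β : ℝ, 1 - κ ≤ β → β < 1 → ∃ c > 0, ∀ (q2 q3 : ℕ) [NeZero q2] [NeZero q3]
    (χ2 : DirichletCharacter ℂ q2) (χ3 : DirichletCharacter ℂ q3), χ2.IsQuadratic → χ2 ≠ 1 →
    χ3.IsQuadratic → χ3 ≠ 1 → (∀ n : ℕ, χ3 n = χ1 n * χ2 n) → q3 ≤ q1 * q2 →
    0 ≤ (auxG χ1 χ2 χ3 β).re → c * (q2:ℝ) ^ (-(1/10:ℝ)) ≤ (auxG χ1 χ2 χ3 1).re := by
  obtain ⟨c0, hc0, h2⟩ := aux_siegel_two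
  obtain ⟨C, hC, hb⟩ := aux_siegel_bound
  set r := Real.log (32/27) with hr
  have hr0 : 0 < r := Real.log_pos (by norm_num)
  have hcont : Continuous (fun σ : ℝ => (riemannZeta₁ σ).re) :=
    Complex.continuous_re.comp (differentiable_riemannZeta₁.continuous.comp Complex.continuous_ofReal)
  have h1 : 0 < (riemannZeta₁ (1:ℝ)).re := by simp [riemannZeta₁_one]
  obtain ⟨d, hd, hd'⟩ := Metric.eventually_nhds_iff.mp
    ((hcont.tendsto 1).eventually (lt_mem_nhds h1))
  refine ⟨min (min (1/8) (r/20)) (d/2), by positivity, (min_le_left _ _).trans (min_le_left _ _), ?_, ?_⟩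
  · intro σ h1 h2
    apply hd'
    rw [Real.dist_eq, abs_lt]
    have := min_le_right (min (1/8) (r/20)) (d/2)
    constructor <;> linarith
  intro q1 _ χ1 hq1 hχ1 β hβ hβ1
  have k1 : 1 - β ≤ 1/8 := by
    have := (min_le_left (min (1/8) (r/20)) (d/2)).trans (min_le_left _ _); linarith
  have k2 : 1 - β ≤ r/20 := by
    have := (min_le_left (min (1/8) (r/20)) (d/2)).trans (min_le_right _ _); linarith
  set B : ℝ := max 1 (80 * C * q1 ^ 2 / c0) with hB
  have hB1 : 1 ≤ B := le_max_left _ _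
  refine ⟨c0 / 2 * (1 - β) * Real.exp (-(Real.log B / 20 + 1)), by
    have : 0 < 1 - β := by linarith
    positivity, ?_⟩
  intro q2 q3 _ _ χ2 χ3 hq2 hχ2 hq3 hχ3 hmul hq hG
  have hQ1 : (1:ℝ) ≤ q1 := by exact_mod_cast NeZero.one_le
  have hQ2 : (1:ℝ) ≤ q2 := by exact_mod_cast NeZero.one_le
  have hQ3 : (1:ℝ) ≤ q3 := by exact_mod_cast NeZero.one_le
  have hqr : (q3:ℝ) ≤ q1 * q2 := by exact_mod_cast hq
  set K : ℝ := C * (q1 * q2 * q3) with hK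
  have hK0 : 0 < K := by positivity
  set M : ℕ := ⌈Real.log (B * q2 ^ 2) / r⌉₊ + 1 with hM
  have hX1 : 1 ≤ B * (q2:ℝ) ^ 2 := by nlinarith [one_le_pow₀ hQ2 (n := 2)]
  have hX0 : 0 < B * (q2:ℝ) ^ 2 := by linarith
  have hl0 : 0 ≤ Real.log (B * q2 ^ 2) := Real.log_nonneg hX1
  have hMlow : Real.log (B * q2 ^ 2) ≤ M * r := by
    have := Nat.le_ceil (Real.log (B * q2 ^ 2) / r)
    rw [div_le_iff₀ hr0] at this
    rw [hM]; push_cast; nlinarith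
  have hMup : (M:ℝ) ≤ Real.log (B * q2 ^ 2) / r + 2 := by
    have := Nat.ceil_lt_add_one (a := Real.log (B * q2 ^ 2) / r) (by positivity)
    rw [hM]; push_cast; linarith
  have hKX : 80 * K / c0 ≤ B * q2 ^ 2 := by
    have : 80 * C * q1 ^ 2 / c0 ≤ B := le_max_right _ _
    calc 80 * K / c0 ≤ 80 * (C * (q1 * q2 * (q1 * q2))) / c0 := by rw [hK]; gcongr
      _ = (80 * C * q1 ^ 2 / c0) * q2 ^ 2 := by ring
      _ ≤ _ := by gcongr
  have hpow : B * (q2:ℝ) ^ 2 ≤ (32/27) ^ M := by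
    rw [← Real.log_le_log_iff hX0 (by positivity), Real.log_pow]; exact hMlow
  have hM' : 40 * K * (27/32) ^ M ≤ c0 / 2 := by
    have e : ((27:ℝ)/32) ^ M = ((32/27) ^ M)⁻¹ := by rw [← inv_pow]; norm_num
    rw [e, ← div_eq_mul_inv, div_le_iff₀ (by positivity)]
    have := hKX.trans hpow
    rw [div_le_iff₀ hc0] at this
    linarith
  have hd : Differentiable ℂ (auxG χ1 χ2 χ3) := by
    have e0 := differentiable_riemannZeta₁
    have e1 := differentiable_LFunction hχ1
    have e2 := differentiable_LFunction hχ2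
    have e3 := differentiable_LFunction hχ3
    unfold auxG; exact e0.mul ((e1.mul e2).mul e3)
  have key := aux_estermann hd hK0 (hb q1 q2 q3 χ1 χ2 χ3 hχ1 hχ2 hχ3)
    (fun m => (Complex.le_def.mp (aux_siegel_sign hq1 hq2 hq3 hχ1 hχ2 hχ3 hmul m)).1)
    (h2 q1 q2 q3 χ1 χ2 χ3 hq1 hq2 hq3) (s := β) (by linarith) hβ1 (M := M) (by omega) hM' hG
  have hp : (2 - β) ^ M ≤ Real.exp (Real.log B / 20 + 1) * (q2:ℝ) ^ (1/10:ℝ) := by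
    have e1 : 2 - β ≤ Real.exp (1 - β) := by have := Real.add_one_le_exp (1 - β); linarith
    calc (2 - β) ^ M ≤ Real.exp (1 - β) ^ M := by gcongr; linarith
      _ = Real.exp (M * (1 - β)) := by rw [← Real.exp_nat_mul]
      _ ≤ Real.exp (Real.log B / 20 + 1 + Real.log q2 * (1/10)) := by
          apply Real.exp_le_exp.mpr
          have e2 : Real.log (B * q2 ^ 2) = Real.log B + 2 * Real.log q2 := by
            rw [Real.log_mul (by positivity) (by positivity), Real.log_pow]; norm_num
          calc (M:ℝ) * (1 - β) ≤ (Real.log (B * q2 ^ 2) / r + 2) * (1 - β) := by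
                have : 0 ≤ 1 - β := by linarith
                gcongr
            _ = Real.log (B * q2 ^ 2) / r * (1 - β) + 2 * (1 - β) := by ring
            _ ≤ Real.log (B * q2 ^ 2) / r * (r/20) + 2 * (1/8) := by gcongr
            _ = Real.log (B * q2 ^ 2) / 20 + 1/4 := by field_simp; ring
            _ ≤ _ := by rw [e2]; linarith
      _ = _ := by rw [Real.exp_add _ (Real.log q2 * (1/10)), Real.rpow_def_of_pos (by linarith)]
  have hpos : 0 < (2 - β) ^ M := by have : 0 < 2 - β := by linarith
                                    positivity
  have hG1 : 0 ≤ (auxG χ1 χ2 χ3 1).re := by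
    by_contra hcon
    push Not at hcon
    have : 0 ≤ c0 / 2 * (1 - β) := by
      have : 0 ≤ 1 - β := by linarith
      positivity
    nlinarith
  have k := key.trans (mul_le_mul_of_nonneg_left hp hG1)
  rw [Real.exp_neg, Real.rpow_neg (by positivity), mul_assoc, ← mul_inv, ← div_eq_mul_inv,
    div_le_iff₀ (by positivity)]
  exact k

open scoped ComplexOrder in
lemma aux_siegel : ∃ c > 0, ∀ (E : ℤ) [NeZero E], Squarefree E → E ≠ 1 →
    c * ((4 * E.natAbs : ℕ) : ℝ) ^ (-(3/20:ℝ)) ≤ ‖LFunction (auxChi E) 1‖ := by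
  obtain ⟨κ, hκ, hκ8, hz, hmain⟩ := aux_siegel_ineq
  obtain ⟨C, hC, hb⟩ := aux_L_bound (δ := 1/20) (by norm_num) (by norm_num)
  have key : ∃ (D : ℤ) (_ : NeZero D) (β : ℝ), Squarefree D ∧ D ≠ 1 ∧ 1 - κ ≤ β ∧ β < 1 ∧
      ∀ (E : ℤ) [NeZero E], Squarefree E → E ≠ 1 → E ≠ D →
      0 ≤ (auxG (auxChi D) (auxChi E) (auxChi (D * E)) β).re := by
    by_cases hex : ∃ (D : ℤ) (_ : NeZero D) (β : ℝ), Squarefree D ∧ D ≠ 1 ∧ 1 - κ ≤ β ∧ β < 1 ∧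
      LFunction (auxChi D) β = 0
    · obtain ⟨D, _, β, h1, h2, h3, h4, h5⟩ := hex
      refine ⟨D, inferInstance, β, h1, h2, h3, h4, fun E _ _ _ _ => ?_⟩
      simp [auxG, h5]
    · push Not at hex
      have hs1 : Squarefree (-1:ℤ) := (isUnit_one.neg).squarefree
      have hnz : NeZero (-1:ℤ) := ⟨by norm_num⟩
      refine ⟨-1, hnz, 1 - κ, hs1, by norm_num, le_rfl, by linarith, fun E _ hE hE1 hE2 => ?_⟩
      have hpos : ∀ (D : ℤ) [NeZero D], Squarefree D → D ≠ 1 → 0 < LFunction (auxChi D) ((1 - κ : ℝ):ℂ) := by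
        intro D _ hD hD1
        exact aux_pos (auxChi_isQuadratic (NeZero.ne D)) (auxChi_ne_one hD hD1) (β := 1 - κ) (by linarith)
          (fun σ h1 h2 => hex D inferInstance σ hD hD1 h1 h2) le_rfl
      have hE' : Squarefree (-1 * E) := by
        have : -1 * E = -E := by ring
        rw [this]; exact (Associated.neg_left (Associated.refl E)).squarefree_iff.mpr hE
      have p := mul_pos (mul_pos (hpos (-1) hs1 (by norm_num)) (hpos E hE hE1))
        (hpos (-1 * E) hE' (by intro h; apply hE2; linarith))
      unfold auxG
      rw [Complex.mul_re, ← (Complex.pos_iff.mp p).2]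
      have := mul_pos (hz (1 - κ) le_rfl (by linarith)) (Complex.pos_iff.mp p).1
      simpa using this.le
  obtain ⟨D, _, β, hD, hD1, hβ, hβ1, hG⟩ := key
  obtain ⟨c, hc, hm⟩ := hmain (4 * D.natAbs) (auxChi D) (auxChi_isQuadratic (NeZero.ne D))
    (auxChi_ne_one hD hD1) β hβ hβ1
  set l := ‖LFunction (auxChi D) 1‖ with hl
  have hl0 : 0 < l := norm_pos_iff.mpr (LFunction_apply_one_ne_zero (auxChi_ne_one hD hD1))
  set Q : ℝ := ((4 * D.natAbs : ℕ) : ℝ) with hQ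
  have hQ1 : 1 ≤ Q := by rw [hQ]; exact_mod_cast NeZero.one_le
  refine ⟨min l (c / (l * (C * Q ^ (1/20:ℝ)))), by positivity, fun E _ hE hE1 => ?_⟩
  set q : ℝ := ((4 * E.natAbs : ℕ) : ℝ) with hq
  have hq1 : 1 ≤ q := by rw [hq]; exact_mod_cast NeZero.one_le
  by_cases hED : E = D
  · subst hED
    calc _ ≤ l * 1 := by
          gcongr
          · exact min_le_left _ _
          · exact Real.rpow_le_one_of_one_le_of_nonpos hq1 (by norm_num)
      _ = l := mul_one l
      _ ≤ _ := le_of_eq rfl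
  have h3 : auxChi (D * E) ≠ 1 := auxChi_mul_ne_one hD hE (Ne.symm hED)
  have hle : 4 * (D * E).natAbs ≤ (4 * D.natAbs) * (4 * E.natAbs) := by
    rw [Int.natAbs_mul]; nlinarith [Nat.zero_le (D.natAbs * E.natAbs)]
  have h := hm _ _ (auxChi E) (auxChi (D * E)) (auxChi_isQuadratic (NeZero.ne E)) (auxChi_ne_one hE hE1)
    (auxChi_isQuadratic (NeZero.ne _)) h3 (fun n => auxChi_mul (NeZero.ne D) (NeZero.ne E) n) hle (hG E hE hE1 hED)
  have hb3 : ‖LFunction (auxChi (D * E)) 1‖ ≤ C * (Q ^ (1/20:ℝ) * q ^ (1/20:ℝ)) := by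
    refine (hb _ _ h3 1 (by norm_num)).trans ?_
    rw [norm_one, mul_one, ← Real.mul_rpow (by linarith) (by linarith)]
    gcongr
    rw [hQ, hq]; exact_mod_cast hle
  have h' := h.trans (Complex.re_le_norm _)
  unfold auxG at h'
  rw [riemannZeta₁_one, one_mul, norm_mul, norm_mul] at h'
  have h'' : c * q ^ (-(1/10:ℝ)) ≤ l * ‖LFunction (auxChi E) 1‖ * (C * (Q ^ (1/20:ℝ) * q ^ (1/20:ℝ))) :=
    h'.trans (by gcongr)
  calc _ ≤ c / (l * (C * Q ^ (1/20:ℝ))) * q ^ (-(3/20:ℝ)) := by gcongr; exact min_le_right _ _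
    _ = (c * q ^ (-(1/10:ℝ))) * q ^ (-(1/20:ℝ)) / (l * (C * Q ^ (1/20:ℝ))) := by
        rw [mul_assoc, ← Real.rpow_add (by linarith)]; norm_num; ring
    _ ≤ (l * ‖LFunction (auxChi E) 1‖ * (C * (Q ^ (1/20:ℝ) * q ^ (1/20:ℝ)))) * q ^ (-(1/20:ℝ)) / (l * (C * Q ^ (1/20:ℝ))) := by
        gcongr
    _ = ‖LFunction (auxChi E) 1‖ * (q ^ (1/20:ℝ) * q ^ (-(1/20:ℝ))) := by field_simp
    _ = _ := by rw [← Real.rpow_add (by linarith)]; norm_num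

end

section
open DirichletCharacter

lemma aux_near_one : ∃ c > 0, ∀ (E : ℤ) [NeZero E], Squarefree E → E ≠ 1 → ∀ s : ℂ,
    ‖s - 1‖ < c * ((4 * E.natAbs : ℕ) : ℝ) ^ (-(1/5:ℝ)) → LFunction (auxChi E) s ≠ 0 := by
  obtain ⟨c, hc, h⟩ := aux_siegel
  obtain ⟨C, hC, hb⟩ := aux_L_bound (δ := 1/20) (by norm_num) (by norm_num)
  refine ⟨min (c / (160 * C)) (1/40), by positivity, fun E _ hE hE1 s hs h0 => ?_⟩
  set q : ℝ := ((4 * E.natAbs : ℕ) : ℝ) with hq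
  have hq1 : 1 ≤ q := by rw [hq]; exact_mod_cast NeZero.one_le
  have hχ := auxChi_ne_one hE hE1
  have hbd : ∀ z ∈ Metric.ball (1:ℂ) (1/40), ‖LFunction (auxChi E) z‖ ≤ C * 2 * q ^ (1/20:ℝ) := by
    intro z hz
    rw [Metric.mem_ball, dist_eq_norm] at hz
    have h1 := (abs_lt.mp ((Complex.abs_re_le_norm (z - 1)).trans_lt hz)).1
    rw [Complex.sub_re, Complex.one_re] at h1
    have h2 : ‖z‖ ≤ 2 := by
      have := norm_le_norm_sub_add z 1
      rw [norm_one] at this; linarith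
    refine (hb _ _ hχ z (by linarith)).trans ?_
    gcongr
  have hp : q ^ (-(1/5:ℝ)) ≤ 1 := Real.rpow_le_one_of_one_le_of_nonpos hq1 (by norm_num)
  have hs' : s ∈ Metric.ball (1:ℂ) (1/40) := by
    rw [Metric.mem_ball, dist_eq_norm]
    refine hs.trans_le ?_
    calc _ ≤ (1/40:ℝ) * 1 := by gcongr; exact min_le_right _ _
      _ = 1/40 := by ring
  have h1m : (1:ℂ) ∈ Metric.ball (1:ℂ) (1/40) := Metric.mem_ball_self (by norm_num)
  have key := Complex.dist_le_div_mul_dist_of_mapsTo_ball (f := LFunction (auxChi E)) (c := 1) (z := s)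
    (R₁ := 1/40) (R₂ := 2 * (C * 2 * q ^ (1/20:ℝ))) (differentiable_LFunction hχ).differentiableOn
    (fun z hz => by
      rw [Metric.mem_closedBall]
      refine (dist_le_norm_add_norm _ _).trans ?_
      linarith [hbd z hz, hbd 1 h1m]) hs'
  rw [h0, dist_zero_left, dist_eq_norm] at key
  have h2 := (h E hE hE1).trans key
  have h3 : 2 * (C * 2 * q ^ (1/20:ℝ)) / (1/40) * ‖s - 1‖ < 2 * (C * 2 * q ^ (1/20:ℝ)) / (1/40) *
      (c / (160 * C) * q ^ (-(1/5:ℝ))) := by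
    gcongr
    refine hs.trans_le ?_
    gcongr
    exact min_le_left _ _
  have h4 : 2 * (C * 2 * q ^ (1/20:ℝ)) / (1/40) * (c / (160 * C) * q ^ (-(1/5:ℝ))) =
      c * (q ^ (1/20:ℝ) * q ^ (-(1/5:ℝ))) := by field_simp; norm_num
  rw [h4, ← Real.rpow_add (by linarith)] at h3
  rw [show (1/20:ℝ) + -(1/5) = -(3/20) by norm_num] at h3
  linarith

lemma aux_ev (K : ℝ) (n : ℕ) : ∀ᶠ l : ℝ in Filter.atTop, K * l ^ n ≤ Real.exp l := by
  have := (Real.tendsto_pow_mul_exp_neg_atTop_nhds_zero n).const_mul K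
  rw [mul_zero] at this
  filter_upwards [this.eventually (gt_mem_nhds one_pos)] with l hl
  rw [← mul_assoc, Real.exp_neg, ← div_eq_mul_inv, div_lt_one (Real.exp_pos _)] at hl
  exact hl.le

set_option maxHeartbeats 1000000 in
lemma aux_zfr_t (c : ℝ) (hc : 0 < c) : ∀ᶠ l : ℝ in Filter.atTop, ∀ (q : ℕ) [NeZero q]
    (χ : DirichletCharacter ℂ q), χ.IsQuadratic → χ ≠ 1 → (q:ℝ) ≤ l ^ 4 → ∀ β t : ℝ,
    1 - 1/128000 / l ≤ β → c * l ^ (-(4/5:ℝ)) ≤ |t| → |t| ≤ Real.exp (2 * l) →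
    LFunction χ (β + t * Complex.I) ≠ 0 := by
  obtain ⟨c', hc', hlow⟩ := aux_L_lower
  obtain ⟨C, hC, hb⟩ := aux_L_bound (δ := 1) one_pos le_rfl
  obtain ⟨C2, hC2, hb2⟩ := aux_zeta1_bound
  obtain ⟨C3, hC3, hLam⟩ := aux_Lam_sum
  obtain ⟨a, ha⟩ : ∃ a : ℝ, a = 1/16000 := ⟨_, rfl⟩
  have ha0 : 0 < a := by rw [ha]; norm_num
  filter_upwards [Filter.eventually_ge_atTop 1, aux_ev (4 * C / (c' * a)) 5,
    aux_ev ((1 + 30 * C2) / (c' * a ^ 2)) 2, Filter.eventually_ge_atTop ((3 * C3 + 4) / 100),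
    (tendsto_rpow_atTop (y := 2/5) (by norm_num)).eventually_ge_atTop (a / (400 * c ^ 2))]
    with l hl e2 e3 e5 e4
  intro q _ χ hq hχ hql β t hβ ht0 ht1 h0
  have hl0 : 0 < l := by linarith
  have hβ1 : β < 1 := by
    by_contra hcon
    exact LFunction_ne_zero_of_one_le_re χ (Or.inl hχ) (by simpa using hcon) h0
  have ha1 := ha.le
  have hal : a / l ≤ a := div_le_self ha0.le hl
  have hal0 : 0 < a / l := by positivity
  set σ : ℝ := 1 + a / l with hσ
  have hσ1 : 1 < σ := by linarith
  have hσ2 : σ ≤ 3/2 := by linarith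
  have hexp1 : 1 ≤ Real.exp (2 * l) := Real.one_le_exp (by linarith)
  have h341 := aux_341 χ hq hσ1 t
  have hA := hLam σ hσ1 (by linarith)
  -- the L part
  have hcre : ((σ:ℂ) + t * Complex.I).re = σ := by simp
  have hcn : ‖(σ:ℂ) + t * Complex.I‖ ≤ 3/2 + Real.exp (2 * l) := by
    refine (norm_add_le _ _).trans ?_
    rw [norm_mul, Complex.norm_I, Complex.norm_real, Complex.norm_real, Real.norm_eq_abs, Real.norm_eq_abs,
      abs_of_pos (by linarith)]
    linarith
  have hB := aux_logDeriv_disc (f := LFunction χ) (c := σ + t * Complex.I) (M := 3 * l) (by positivity)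
    (differentiable_LFunction hχ) (LFunction_ne_zero_of_one_le_re χ (Or.inl hχ) (by rw [hcre]; exact hσ1.le))
    (by
      intro z hz
      have h1 := (abs_le.mp ((Complex.abs_re_le_norm _).trans hz)).1
      rw [Complex.sub_re, hcre] at h1
      have h2 : ‖z‖ ≤ 4 * Real.exp (2 * l) := by
        have := norm_le_norm_sub_add z (σ + t * Complex.I); linarith
      have h3 := hlow q χ (σ + t * Complex.I) (by rw [hcre]; exact hσ1) (by rw [hcre]; linarith)
      rw [hcre] at h3
      have h4 : σ - 1 = a / l := by rw [hσ]; ring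
      rw [h4] at h3
      have h5 := hb q χ hχ z (by linarith)
      rw [Real.rpow_one] at h5
      calc _ ≤ C * (4 * Real.exp (2 * l)) * l ^ 4 := h5.trans (by gcongr)
        _ = Real.exp (2 * l) * (4 * C / (c' * a) * l ^ 5) * (c' * (a / l)) := by field_simp
        _ ≤ Real.exp (2 * l) * Real.exp l * (c' * (a / l)) := by gcongr
        _ = Real.exp (3 * l) * (c' * (a / l)) := by rw [← Real.exp_add]; ring_nf
        _ ≤ _ := by gcongr)
    (by
      intro z _ hz
      rw [hcre]
      by_contra hcon
      exact LFunction_ne_zero_of_one_le_re χ (Or.inl hχ) (by linarith) hz)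
  have hρ0 : 0 < σ - β := by linarith
  have hρ1 : σ - β ≤ 9/8 * (a / l) := by
    have : 1/128000 / l = a / l / 8 := by rw [ha]; ring
    linarith
  have hB2 := hB.2 (σ - β) hρ0 (by linarith) (by
    rw [← h0]; congr 1; push_cast; ring)
  -- the zeta part
  have hcre' : ((σ:ℂ) + (2 * t : ℝ) * Complex.I).re = σ := by simp
  have hcn' : ‖(σ:ℂ) + (2 * t : ℝ) * Complex.I‖ ≤ 3/2 + 2 * Real.exp (2 * l) := by
    refine (norm_add_le _ _).trans ?_
    rw [norm_mul, Complex.norm_I, Complex.norm_real, Complex.norm_real, Real.norm_eq_abs, Real.norm_eq_abs,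
      abs_of_pos (by linarith), abs_mul, abs_two]
    linarith
  have hne1 : (σ:ℂ) + (2 * t : ℝ) * Complex.I ≠ 1 := by
    intro h; rw [h] at hcre'; simp at hcre'; linarith
  have hD := (aux_logDeriv_disc (f := riemannZeta₁) (c := σ + (2 * t : ℝ) * Complex.I) (M := 5 * l) (by positivity)
    differentiable_riemannZeta₁ (aux_zeta1_ne_zero (by rw [hcre']; exact hσ1.le))
    (by
      intro z hz
      have h1 := (abs_le.mp ((Complex.abs_re_le_norm _).trans hz)).1
      rw [Complex.sub_re, hcre'] at h1
      have h2 : ‖z‖ ≤ 5 * Real.exp (2 * l) := by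
        have := norm_le_norm_sub_add z (σ + (2 * t : ℝ) * Complex.I); linarith
      have h2' : ‖z - 1‖ ≤ 6 * Real.exp (2 * l) := by
        have := norm_sub_le z 1
        rw [norm_one] at this; linarith
      have h3 := hlow 1 1 (σ + (2 * t : ℝ) * Complex.I) (by rw [hcre']; exact hσ1) (by rw [hcre']; linarith)
      rw [hcre', LFunction_modOne_eq, aux_zeta_eq hne1, norm_div, le_div_iff₀ (norm_pos_iff.mpr (sub_ne_zero.mpr hne1))] at h3
      have h4 : σ - 1 = a / l := by rw [hσ]; ring
      have h6 : a / l ≤ ‖(σ:ℂ) + (2 * t : ℝ) * Complex.I - 1‖ := by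
        refine le_trans ?_ (Complex.re_le_norm _)
        rw [Complex.sub_re, hcre', Complex.one_re, h4]
      rw [h4] at h3
      have h5 := hb2 z (by linarith)
      calc _ ≤ 1 + C2 * (6 * Real.exp (2 * l) * (5 * Real.exp (2 * l))) := h5.trans (by gcongr)
        _ ≤ Real.exp (2 * l) * Real.exp (2 * l) + C2 * (6 * Real.exp (2 * l) * (5 * Real.exp (2 * l))) := by
            gcongr; nlinarith
        _ = Real.exp (2 * l) * Real.exp (2 * l) * ((1 + 30 * C2) / (c' * a ^ 2) * l ^ 2) * (c' * (a / l) * (a / l)) := by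
            field_simp; ring
        _ ≤ Real.exp (2 * l) * Real.exp (2 * l) * Real.exp l * (c' * (a / l) * (a / l)) := by gcongr
        _ = Real.exp (5 * l) * (c' * (a / l) * (a / l)) := by rw [← Real.exp_add, ← Real.exp_add]; ring_nf
        _ ≤ Real.exp (5 * l) * (c' * (a / l) * ‖(σ:ℂ) + (2 * t : ℝ) * Complex.I - 1‖) := by gcongr
        _ ≤ _ := by gcongr)
    (by
      intro z _ hz
      rw [hcre']
      by_contra hcon
      exact aux_zeta1_ne_zero (by linarith) hz)).1
  have hpole : (1 / ((σ:ℂ) + (2 * t : ℝ) * Complex.I - 1)).re ≤ 100 * l := by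
    rw [one_div, Complex.inv_re]
    have h1 : ((σ:ℂ) + (2 * t : ℝ) * Complex.I - 1).re = a / l := by
      rw [Complex.sub_re, hcre', Complex.one_re, hσ]; ring
    have h2 : ((σ:ℂ) + (2 * t : ℝ) * Complex.I - 1).im = 2 * t := by simp
    rw [Complex.normSq_apply, h1, h2]
    have ht2 : c ^ 2 * l ^ (-(8/5:ℝ)) ≤ t ^ 2 := by
      rw [← sq_abs t]
      calc _ = (c * l ^ (-(4/5:ℝ))) ^ 2 := by
            rw [mul_pow, ← Real.rpow_natCast (l ^ (-(4/5:ℝ))), ← Real.rpow_mul hl0.le]; norm_num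
        _ ≤ _ := by gcongr
    have hpos : 0 < c ^ 2 * l ^ (-(8/5:ℝ)) := by positivity
    rw [div_le_iff₀ (by nlinarith)]
    have h4 : a / l ≤ 100 * l * (4 * (c ^ 2 * l ^ (-(8/5:ℝ)))) := by
      rw [div_le_iff₀ hl0]
      have : 100 * l * (4 * (c ^ 2 * l ^ (-(8/5:ℝ)))) * l = 400 * c ^ 2 * (l ^ (2:ℝ) * l ^ (-(8/5:ℝ))) := by
        rw [Real.rpow_two]; ring
      rw [this, ← Real.rpow_add hl0]
      norm_num
      rw [div_le_iff₀ (by positivity)] at e4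
      linarith
    refine h4.trans ?_
    gcongr
    nlinarith [mul_self_nonneg (a / l)]
  have hzz := congrArg Complex.re (aux_zeta_logDeriv (s := (σ:ℂ) + (2 * t : ℝ) * Complex.I) (by rw [hcre']; exact hσ1))
  rw [Complex.sub_re] at hzz
  simp only [Complex.neg_re] at h341 hA
  have hs : 1 / (σ - 1) = l / a := by rw [show σ - 1 = a / l by rw [hσ]; ring, one_div_div]
  rw [hs] at hA
  have hfin : 4 * (1 / (σ - β)) ≤ 3 * (l / a) + 8000 * l := by linarith
  have h8 : 8000 * l = l / a / 2 := by rw [ha]; ring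
  have h9 : 8 / 9 * (l / a) ≤ 1 / (σ - β) := by
    rw [le_div_iff₀ hρ0]
    calc _ ≤ 8 / 9 * (l / a) * (9/8 * (a / l)) := by gcongr
      _ = 1 := by field_simp
  have h10 : 0 < l / a := by positivity
  linarith

lemma aux_zfr : ∀ᶠ l : ℝ in Filter.atTop, ∀ (E : ℤ) [NeZero E], Squarefree E → E ≠ 1 →
    ((4 * E.natAbs : ℕ) : ℝ) ≤ l ^ 4 → ∀ s : ℂ,
    1 - 1/128000 / l ≤ s.re → |s.im| ≤ Real.exp (2 * l) → LFunction (auxChi E) s ≠ 0 := by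
  obtain ⟨c, hc, h⟩ := aux_near_one
  filter_upwards [aux_zfr_t (c / 2) (by positivity), Filter.eventually_ge_atTop 1,
    (tendsto_rpow_atTop (y := 1/5) (by norm_num)).eventually_ge_atTop (1/128000 * 4 / c)] with l hl hl1 hl2
  intro E _ hE hE1 hq s hs ht
  have hl0 : 0 < l := by linarith
  by_cases ht0 : c / 2 * l ^ (-(4/5:ℝ)) ≤ |s.im|
  · have := hl _ (auxChi E) (auxChi_isQuadratic (NeZero.ne E)) (auxChi_ne_one hE hE1) hq s.re s.im hs ht0 ht
    rwa [Complex.re_add_im] at this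
  by_cases hs1 : 1 ≤ s.re
  · exact LFunction_ne_zero_of_one_le_re _ (Or.inl (auxChi_ne_one hE hE1)) hs1
  push Not at ht0 hs1
  apply h E hE hE1 s
  have h1 : ‖s - 1‖ ≤ (1 - s.re) + |s.im| := by
    refine (Complex.norm_le_abs_re_add_abs_im _).trans (le_of_eq ?_)
    rw [Complex.sub_re, Complex.sub_im, Complex.one_re, Complex.one_im, sub_zero, abs_sub_comm, abs_of_nonneg (by linarith)]
  have h2 : 1/128000 / l ≤ c / 4 * l ^ (-(4/5:ℝ)) := by
    rw [div_le_iff₀ hl0]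
    have : c / 4 * l ^ (-(4/5:ℝ)) * l = c / 4 * l ^ (1/5:ℝ) := by
      conv_lhs => rw [mul_assoc, ← Real.rpow_add_one hl0.ne']
      norm_num
    rw [this]
    rw [div_le_iff₀ hc] at hl2
    linarith
  have hq1 : (1:ℝ) ≤ ((4 * E.natAbs : ℕ) : ℝ) := by exact_mod_cast NeZero.one_le
  have h3 : l ^ (-(4/5:ℝ)) ≤ ((4 * E.natAbs : ℕ) : ℝ) ^ (-(1/5:ℝ)) := by
    calc l ^ (-(4/5:ℝ)) = (l ^ 4) ^ (-(1/5:ℝ)) := by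
          rw [← Real.rpow_natCast, ← Real.rpow_mul hl0.le]; norm_num
      _ ≤ _ := Real.rpow_le_rpow_of_nonpos (by linarith) hq (by norm_num)
  have h4 : 0 < l ^ (-(4/5:ℝ)) := by positivity
  calc _ < c / 4 * l ^ (-(4/5:ℝ)) + c / 2 * l ^ (-(4/5:ℝ)) := by linarith
    _ ≤ c * l ^ (-(4/5:ℝ)) := by nlinarith
    _ ≤ _ := by gcongr

end

section
open DirichletCharacter

lemma aux_LL : ∀ᶠ l : ℝ in Filter.atTop, ∀ (E : ℤ) [NeZero E], Squarefree E → E ≠ 1 →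
    ((4 * E.natAbs : ℕ) : ℝ) ≤ l ^ 4 → ∀ s : ℂ,
    1 - 1/256000 / l ≤ s.re → s.re ≤ 1 + 1/128000 / l → |s.im| ≤ Real.exp l →
    LFunction (auxChi E) s ≠ 0 ∧
    ‖deriv (LFunction (auxChi E)) s / LFunction (auxChi E) s‖ ≤ 168 * 128000 * l ^ 2 := by
  obtain ⟨c', hc', hlow⟩ := aux_L_lower
  obtain ⟨C, hC, hb⟩ := aux_L_bound (δ := 1) one_pos le_rfl
  obtain ⟨a, ha⟩ : ∃ a : ℝ, a = 1/128000 := ⟨_, rfl⟩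
  have ha0 : 0 < a := by rw [ha]; norm_num
  have ha1 := ha.le
  filter_upwards [aux_zfr, Filter.eventually_ge_atTop 1, aux_ev (4 * C / (c' * a)) 5] with l hl hl1 e2
  intro E _ hE hE1 hq s hs1 hs2 ht
  have hl0 : 0 < l := by linarith
  have hχ := auxChi_ne_one hE hE1
  have h256 : 1/256000 / l = a / l / 2 := by rw [ha]; ring
  rw [h256] at hs1
  rw [← ha] at hs2 hl
  have hal : a / l ≤ a := div_le_self ha0.le hl1
  have hal0 : 0 < a / l := by positivity
  have hexp2 : 1 + Real.exp l ≤ Real.exp (2 * l) := by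
    have h1 : Real.exp (2 * l) = Real.exp l * Real.exp l := by rw [← Real.exp_add]; ring_nf
    have h2 := Real.add_one_le_exp l
    rw [h1]; nlinarith
  refine ⟨hl E hE hE1 hq s (by linarith) (by linarith), ?_⟩
  set c : ℂ := (1 + a / l : ℝ) + s.im * Complex.I with hc
  have hcre : c.re = 1 + a / l := by simp [hc]
  have hcim : c.im = s.im := by simp [hc]
  have hcn : ‖c‖ ≤ 2 + Real.exp l := by
    refine (Complex.norm_le_abs_re_add_abs_im c).trans ?_
    rw [hcre, hcim, abs_of_pos (by linarith)]; linarith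
  have key := aux_bc_logDeriv (g := LFunction (auxChi E)) (c := c) (R := 2 * (a / l)) (M := 3 * l)
    (by positivity) (by positivity) (differentiable_LFunction hχ).differentiableOn
    (by
      intro z hz
      rw [Metric.mem_ball, dist_eq_norm] at hz
      have h1 := (abs_lt.mp ((Complex.abs_re_le_norm _).trans_lt hz)).1
      have h2 := ((Complex.abs_im_le_norm _).trans_lt hz)
      rw [Complex.sub_re, hcre] at h1
      rw [Complex.sub_im, hcim] at h2
      have h3 := abs_sub_abs_le_abs_sub z.im s.im
      exact hl E hE hE1 hq z (by linarith) (by linarith))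
    (by
      intro z hz
      rw [Metric.mem_ball, dist_eq_norm] at hz
      have h1 := (abs_lt.mp ((Complex.abs_re_le_norm _).trans_lt hz)).1
      rw [Complex.sub_re, hcre] at h1
      have h2 : ‖z‖ ≤ 4 * Real.exp (2 * l) := by
        have := norm_le_norm_sub_add z c; linarith [Real.exp_pos l]
      have h3 := hlow _ (auxChi E) c (by rw [hcre]; linarith) (by rw [hcre]; linarith)
      rw [hcre, add_sub_cancel_left] at h3
      have h5 := hb _ _ hχ z (by linarith)
      rw [Real.rpow_one] at h5
      calc _ ≤ C * (4 * Real.exp (2 * l)) * l ^ 4 := h5.trans (by gcongr)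
        _ = Real.exp (2 * l) * (4 * C / (c' * a) * l ^ 5) * (c' * (a / l)) := by field_simp
        _ ≤ Real.exp (2 * l) * Real.exp l * (c' * (a / l)) := by gcongr
        _ = Real.exp (3 * l) * (c' * (a / l)) := by rw [← Real.exp_add]; ring_nf
        _ ≤ _ := by gcongr)
    (z := s) (by
      have : s - c = ((s.re - (1 + a / l) : ℝ) : ℂ) := by
        apply Complex.ext <;> simp [hc]
      rw [this, Complex.norm_real, Real.norm_eq_abs, abs_le]
      constructor <;> linarith)
  refine key.trans (le_of_eq ?_)
  rw [ha]; field_simp; ring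

lemma aux_mellin {s : ℂ} (hs : 0 < s.re) : HasMellin (fun x : ℝ => (Set.Ioc 0 1).indicator (fun _ : ℝ => (1:ℂ)) x -
    (Set.Ioc 0 1).indicator (fun t : ℝ => (t:ℂ) ^ (1:ℂ)) x) s (1 / (s * (s + 1))) := by
  have h1 := hasMellin_one_Ioc hs
  have h2 := hasMellin_cpow_Ioc 1 (s := s) (by simp; linarith)
  have h := hasMellin_sub h1.1 h2.1
  rw [h1.2, h2.2] at h
  have hs0 : s ≠ 0 := by rintro rfl; simp at hs
  have hs1 : s + 1 ≠ 0 := by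
    intro h; have := congrArg Complex.re h; simp at this; linarith
  have e : 1 / s - 1 / (s + 1) = 1 / (s * (s + 1)) := by
    rw [div_sub_div _ _ hs0 hs1]; ring
  rwa [e] at h

lemma aux_kernel_le {κ : ℝ} (hκ : 0 ≤ κ) (t : ℝ) :
    ‖(1:ℂ) / ((κ + t * Complex.I) * ((κ + t * Complex.I) + 1))‖ ≤ 1 / (κ ^ 2 + t ^ 2) := by
  have e : ∀ k : ℝ, ‖(k:ℂ) + t * Complex.I‖ = √(k ^ 2 + t ^ 2) := fun k => Complex.norm_add_mul_I k t
  have e1 : (κ + t * Complex.I) + 1 = ((κ + 1 : ℝ) : ℂ) + t * Complex.I := by push_cast; ring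
  rw [e1, norm_div, norm_one, norm_mul, e, e]
  by_cases h : κ ^ 2 + t ^ 2 = 0
  · simp [h]
  have hp : 0 < κ ^ 2 + t ^ 2 := lt_of_le_of_ne (by positivity) (Ne.symm h)
  apply one_div_le_one_div_of_le hp
  calc κ ^ 2 + t ^ 2 = √(κ ^ 2 + t ^ 2) * √(κ ^ 2 + t ^ 2) := (Real.mul_self_sqrt hp.le).symm
    _ ≤ _ := by gcongr; linarith

lemma aux_kernel_int {κ : ℝ} (hκ : 1 ≤ κ) : MeasureTheory.Integrable
    (fun t : ℝ => (1:ℂ) / ((κ + t * Complex.I) * ((κ + t * Complex.I) + 1))) := by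
  refine integrable_inv_one_add_sq.mono' ?_ ?_
  · apply Continuous.aestronglyMeasurable
    refine Continuous.div continuous_const (by fun_prop) (fun t => ?_)
    refine mul_ne_zero ?_ ?_ <;>
    · intro h; have := congrArg Complex.re h; simp at this; linarith
  · filter_upwards with t
    refine (aux_kernel_le (by linarith) t).trans ?_
    rw [one_div]
    gcongr
    nlinarith

lemma aux_perron_one {κ : ℝ} (hκ : 1 ≤ κ) {y : ℝ} (hy : 0 < y) :
    ∫ t : ℝ, (y:ℂ) ^ (-(κ + t * Complex.I)) * (1 / ((κ + t * Complex.I) * ((κ + t * Complex.I) + 1))) =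
      2 * Real.pi * (max (1 - y) 0 : ℝ) := by
  have hm : ∀ t : ℝ, _ := fun t => (aux_mellin (s := (κ + t * Complex.I)) (by simp; linarith)).2
  have h := mellinInv_mellin_eq κ (fun x : ℝ => (Set.Ioc 0 1).indicator (fun _ : ℝ => (1:ℂ)) x -
    (Set.Ioc 0 1).indicator (fun t : ℝ => (t:ℂ) ^ (1:ℂ)) x) hy (aux_mellin (by simp; linarith)).1
    (by
      unfold Complex.VerticalIntegrable
      simp_rw [hm]
      exact aux_kernel_int hκ)
    (by
      have : ContinuousAt (fun x : ℝ => ((max (1 - x) 0 : ℝ) : ℂ)) y := by fun_prop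
      refine this.congr ?_
      filter_upwards [lt_mem_nhds hy] with x hx
      by_cases hx1 : x ≤ 1
      · simp [hx, hx1]
      · simp [hx1, (not_le.mp hx1).le])
  have hv : (fun x : ℝ => (Set.Ioc 0 1).indicator (fun _ : ℝ => (1:ℂ)) x -
    (Set.Ioc 0 1).indicator (fun t : ℝ => (t:ℂ) ^ (1:ℂ)) x) y = ((max (1 - y) 0 : ℝ) : ℂ) := by
    by_cases hx1 : y ≤ 1
    · simp [hy, hx1]
    · simp [hx1, (not_le.mp hx1).le]
  unfold mellinInv at h
  have h := h.trans hv
  simp_rw [hm, smul_eq_mul] at h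
  rw [← h]
  have hp : (Real.pi : ℂ) ≠ 0 := by exact_mod_cast Real.pi_ne_zero
  have h2 : 2 * (Real.pi : ℂ) * ((1 / (2 * Real.pi) : ℝ) : ℂ) = 1 := by push_cast; field_simp
  rw [Complex.real_smul, ← mul_assoc, h2, one_mul]

lemma aux_perron {q : ℕ} [NeZero q] (χ : DirichletCharacter ℂ q) {κ : ℝ} (hκ : 1 < κ) {u : ℝ} (hu : 0 < u) :
    2 * Real.pi * ∑ n ∈ Finset.range (⌊u⌋₊ + 1), χ n * ((ArithmeticFunction.vonMangoldt n : ℝ) : ℂ) * (1 - n / u : ℝ) =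
    ∫ t : ℝ, -(deriv (LFunction χ) (κ + t * Complex.I) / LFunction χ (κ + t * Complex.I)) *
      ((u:ℂ) ^ (κ + t * Complex.I) * (1 / ((κ + t * Complex.I) * ((κ + t * Complex.I) + 1)))) := by
  set f : ℕ → ℂ := fun n => χ n * ((ArithmeticFunction.vonMangoldt n : ℝ) : ℂ) with hf
  have hf0 : f 0 = 0 := by simp [hf]
  have hre : ∀ t : ℝ, ((κ:ℂ) + t * Complex.I).re = κ := by intro t; simp
  have hs : ∀ t : ℝ, LSeriesHasSum f (κ + t * Complex.I) _ := fun t =>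
    aux_Lchi_hasSum χ (by rw [hre]; exact hκ)
  set G : ℝ → ℂ := fun t => (u:ℂ) ^ (κ + t * Complex.I) * (1 / ((κ + t * Complex.I) * ((κ + t * Complex.I) + 1))) with hG
  have hu0 : (u:ℂ) ≠ 0 := by exact_mod_cast hu.ne'
  have hcu : Continuous (fun t : ℝ => (u:ℂ) ^ (κ + t * Complex.I)) :=
    Continuous.const_cpow (by fun_prop) (Or.inl hu0)
  have hnt : ∀ n (t : ℝ), ‖LSeries.term f (κ + t * Complex.I) n‖ = ‖LSeries.term f κ n‖ := by
    intro n t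
    rw [LSeries.norm_term_eq, LSeries.norm_term_eq, hre, Complex.ofReal_re]
  have hun : ∀ t : ℝ, ‖(u:ℂ) ^ (κ + t * Complex.I)‖ = u ^ κ := by
    intro t; rw [Complex.norm_cpow_eq_rpow_re_of_pos hu, hre]
  have hint : ∀ n, MeasureTheory.Integrable (fun t : ℝ => LSeries.term f (κ + t * Complex.I) n * G t) := by
    intro n
    refine MeasureTheory.Integrable.bdd_mul (c := ‖LSeries.term f κ n‖) ?_ ?_ ?_
    · refine MeasureTheory.Integrable.bdd_mul (c := u ^ κ) (aux_kernel_int hκ.le) hcu.aestronglyMeasurable ?_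
      filter_upwards with t using (hun t).le
    · apply Continuous.aestronglyMeasurable
      by_cases hn : n = 0
      · subst hn; simp only [LSeries.term_zero]; exact continuous_const
      · simp only [LSeries.term_of_ne_zero hn]
        have hn0 : (n:ℂ) ≠ 0 := by exact_mod_cast hn
        refine Continuous.div continuous_const (Continuous.const_cpow (by fun_prop) (Or.inl hn0)) (fun t => ?_)
        simp [Complex.cpow_eq_zero_iff, hn0]
    · filter_upwards with t using (hnt n t).le
  have key := MeasureTheory.hasSum_integral_of_summable_integral_norm hint (by
    have : ∀ n, ∫ t : ℝ, ‖LSeries.term f (κ + t * Complex.I) n * G t‖ = ‖LSeries.term f κ n‖ * ∫ t : ℝ, ‖G t‖ := by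
      intro n
      rw [← MeasureTheory.integral_const_mul]
      congr 1; ext t; rw [norm_mul, hnt]
    simp_rw [this]
    have h0 := hs 0
    simp only [Complex.ofReal_zero, zero_mul, add_zero] at h0
    exact h0.LSeriesSummable.norm.mul_right _)
  have hR : (fun t : ℝ => ∑' n, LSeries.term f (κ + t * Complex.I) n * G t) = fun t : ℝ =>
      -(deriv (LFunction χ) (κ + t * Complex.I) / LFunction χ (κ + t * Complex.I)) * G t := by
    ext t
    rw [tsum_mul_right, (hs t).tsum_eq]
  rw [hR] at key
  have hL : ∀ n : ℕ, ∫ t : ℝ, LSeries.term f (κ + t * Complex.I) n * G t = f n * (2 * Real.pi * (max (1 - n / u) 0 : ℝ)) := by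
    intro n
    by_cases hn : n = 0
    · subst hn; simp [hf0]
    have hn0 : (0:ℝ) < n := by exact_mod_cast Nat.pos_of_ne_zero hn
    rw [← aux_perron_one hκ.le (div_pos hn0 hu), ← MeasureTheory.integral_const_mul]
    congr 1; ext t
    rw [LSeries.term_of_ne_zero hn, hG]
    have : ((n / u : ℝ) : ℂ) ^ (-(κ + t * Complex.I)) = (u:ℂ) ^ (κ + t * Complex.I) / (n:ℂ) ^ (κ + t * Complex.I) := by
      rw [Complex.cpow_neg, Complex.ofReal_div, Complex.div_cpow_ofReal_nonneg hn0.le hu.le, inv_div, Complex.ofReal_natCast]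
    rw [this]; ring
  simp_rw [hL] at key
  refine Eq.trans ?_ (key.unique (hasSum_sum_of_ne_finset_zero (s := Finset.range (⌊u⌋₊ + 1)) ?_)).symm
  rw [Finset.mul_sum]
  · refine Finset.sum_congr rfl (fun n hn => ?_)
    have : (n:ℝ) ≤ u := (Nat.le_floor_iff hu.le).mp (Nat.lt_succ_iff.mp (Finset.mem_range.mp hn))
    rw [max_eq_left (by rw [sub_nonneg, div_le_one hu]; exact this)]
    ring
  · intro n hn
    have : u < n := by
      rw [Finset.mem_range, not_lt] at hn
      exact Nat.lt_of_floor_lt hn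
    rw [max_eq_right (by rw [sub_nonpos, one_le_div hu]; exact this.le)]
    simp

end

section
open DirichletCharacter

lemma aux_tail {T : ℝ} (hT : 0 < T) : Real.pi / 2 - Real.arctan T ≤ 1 / T := by
  rw [← Real.arctan_inv_of_pos hT, one_div]
  have h := Real.le_tan (x := Real.arctan T⁻¹) (Real.arctan_nonneg.mpr (by positivity)) (Real.arctan_lt_pi_div_two _)
  rwa [Real.tan_arctan] at h

open MeasureTheory in
lemma aux_contour {F : ℂ → ℂ} {κ κ' T B u : ℝ} (h1 : 1/2 ≤ κ') (h2 : κ' ≤ κ) (h3 : 1 ≤ κ) (h4 : κ - κ' ≤ 1)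
    (hT : 1 ≤ T) (hB : 0 ≤ B) (hu : 1 ≤ u)
    (hd : ∀ s : ℂ, κ' ≤ s.re → s.re ≤ κ → |s.im| ≤ T → DifferentiableAt ℂ F s ∧ ‖F s‖ ≤ B)
    (hc : Continuous (fun t : ℝ => F (κ + t * Complex.I))) (hb : ∀ t : ℝ, ‖F (κ + t * Complex.I)‖ ≤ B) :
    ‖∫ t : ℝ, F (κ + t * Complex.I) * ((u:ℂ) ^ (κ + t * Complex.I) *
      (1 / ((κ + t * Complex.I) * ((κ + t * Complex.I) + 1))))‖ ≤ B * (4 * u ^ κ / T + 16 * u ^ κ') := by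
  have hu0 : 0 < u := by linarith
  have huc : (u:ℂ) ≠ 0 := by exact_mod_cast hu0.ne'
  set G : ℂ → ℂ := fun s => F s * ((u:ℂ) ^ s * (1 / (s * (s + 1)))) with hG
  have hGn : ∀ x t : ℝ, 0 ≤ x → ‖F (x + t * Complex.I)‖ ≤ B → ‖G (x + t * Complex.I)‖ ≤ B * u ^ x * (1 / (x ^ 2 + t ^ 2)) := by
    intro x t hx hF
    simp only [hG]
    rw [norm_mul, norm_mul, Complex.norm_cpow_eq_rpow_re_of_pos hu0, mul_assoc]
    have : ((x:ℂ) + t * Complex.I).re = x := by simp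
    rw [this]
    have := aux_kernel_le hx t
    gcongr
  have hκn : ∀ t : ℝ, ‖G (κ + t * Complex.I)‖ ≤ B * u ^ κ * (1 + t ^ 2)⁻¹ := by
    intro t
    refine (hGn κ t (by linarith) (hb t)).trans ?_
    rw [one_div]
    gcongr
    nlinarith
  have hGi : Integrable (fun t : ℝ => G (κ + t * Complex.I)) := by
    refine (integrable_inv_one_add_sq.const_mul (B * u ^ κ)).mono' ?_ (Filter.Eventually.of_forall hκn)
    apply Continuous.aestronglyMeasurable
    refine hc.mul ((Continuous.const_cpow (by fun_prop) (Or.inl huc)).mul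
      (Continuous.div continuous_const (by fun_prop) (fun t => ?_)))
    refine mul_ne_zero ?_ ?_ <;>
    · intro h; have := congrArg Complex.re h; simp at this; linarith
  have hsplit : ∫ t : ℝ, G (κ + t * Complex.I) = (∫ t in Set.Iic (-T), G (κ + t * Complex.I)) +
      ((∫ t in (-T)..T, G (κ + t * Complex.I)) + ∫ t in Set.Ioi T, G (κ + t * Complex.I)) := by
    rw [intervalIntegral.integral_interval_add_Ioi hGi.integrableOn hGi.integrableOn,
      intervalIntegral.integral_Iic_add_Ioi hGi.integrableOn hGi.integrableOn]
  have ht1 : ‖∫ t in Set.Iic (-T), G (κ + t * Complex.I)‖ ≤ B * u ^ κ * (1 / T) := by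
    refine (norm_integral_le_of_norm_le (integrable_inv_one_add_sq.const_mul (B * u ^ κ)).integrableOn
      (Filter.Eventually.of_forall hκn)).trans ?_
    rw [integral_const_mul, integral_Iic_inv_one_add_sq, Real.arctan_neg]
    gcongr
    linarith [aux_tail (T := T) (by linarith)]
  have ht2 : ‖∫ t in Set.Ioi T, G (κ + t * Complex.I)‖ ≤ B * u ^ κ * (1 / T) := by
    refine (norm_integral_le_of_norm_le (integrable_inv_one_add_sq.const_mul (B * u ^ κ)).integrableOn
      (Filter.Eventually.of_forall hκn)).trans ?_
    rw [integral_const_mul, integral_Ioi_inv_one_add_sq]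
    gcongr
    linarith [aux_tail (T := T) (by linarith)]
  have hrect := Complex.integral_boundary_rect_eq_zero_of_differentiableOn G (κ' + (-T : ℝ) * Complex.I) (κ + T * Complex.I) (by
    intro s hs
    rw [Complex.mem_reProdIm] at hs
    simp only [Complex.add_re, Complex.ofReal_re, Complex.mul_re, Complex.I_re, mul_zero, Complex.ofReal_im,
      Complex.I_im, mul_one, sub_self, add_zero, Complex.add_im, Complex.mul_im, zero_add] at hs
    rw [Set.uIcc_of_le h2, Set.uIcc_of_le (by linarith)] at hs
    have hdf := (hd s hs.1.1 hs.1.2 (abs_le.mpr hs.2)).1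
    have hsre : 0 < s.re := by linarith [hs.1.1]
    refine (hdf.mul (DifferentiableAt.mul ?_ ?_)).differentiableWithinAt
    · exact differentiableAt_id.const_cpow (Or.inl huc)
    · refine (differentiableAt_const _).div (differentiableAt_id.mul (differentiableAt_id.add_const _)) ?_
      refine mul_ne_zero ?_ ?_ <;>
      · intro h; have := congrArg Complex.re h; simp at this; linarith)
  simp only [Complex.add_re, Complex.ofReal_re, Complex.mul_re, Complex.I_re, mul_zero, Complex.ofReal_im,
      Complex.I_im, mul_one, sub_self, add_zero, Complex.add_im, Complex.mul_im, zero_add] at hrect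
  have hh : ∀ T' : ℝ, |T'| = T → ‖∫ x in κ'..κ, G (x + T' * Complex.I)‖ ≤ B * u ^ κ * (1 / T) := by
    intro T' hT'
    have := intervalIntegral.norm_integral_le_of_norm_le_const (a := κ') (b := κ)
      (f := fun x : ℝ => G (x + T' * Complex.I)) (C := B * u ^ κ * (1 / T)) (by
        intro x hx
        rw [Set.uIoc_of_le h2] at hx
        refine (hGn x T' (by linarith [hx.1]) (hd _ (by simpa using hx.1.le) (by simpa using hx.2) (by simpa using hT'.le)).2).trans ?_
        have : 1 / (x ^ 2 + T' ^ 2) ≤ 1 / T := by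
          rw [← sq_abs T', hT']
          apply one_div_le_one_div_of_le (by linarith)
          nlinarith [sq_nonneg x]
        have := hx.2
        gcongr)
    refine this.trans ?_
    rw [abs_of_nonneg (by linarith)]
    exact mul_le_of_le_one_right (by positivity) h4
  have hleft : ‖∫ y in (-T)..T, G (κ' + y * Complex.I)‖ ≤ B * u ^ κ' * 16 := by
    have := intervalIntegral.norm_integral_le_of_norm_le (a := -T) (b := T) (μ := volume)
      (f := fun y : ℝ => G (κ' + y * Complex.I)) (g := fun y => B * u ^ κ' * 4 * (1 + y ^ 2)⁻¹) (by linarith)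
      (by
        refine Filter.Eventually.of_forall (fun y hy => ?_)
        refine (hGn κ' y (by linarith) (hd _ (by simp) (by simpa using h2) (by
          simpa using abs_le.mpr ⟨hy.1.le, hy.2⟩)).2).trans ?_
        rw [mul_assoc _ 4]
        gcongr
        rw [← div_eq_mul_inv, div_le_div_iff₀ (by nlinarith [sq_nonneg y]) (by positivity)]
        nlinarith [sq_nonneg y])
      ((integrable_inv_one_add_sq.const_mul _).intervalIntegrable)
    refine this.trans ?_
    rw [intervalIntegral.integral_const_mul, integral_inv_one_add_sq, mul_assoc (B * u ^ κ')]
    have h5 := Real.arctan_lt_pi_div_two T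
    have h6 := Real.neg_pi_div_two_lt_arctan (-T)
    have h7 := Real.pi_lt_four
    have : (4:ℝ) * (Real.arctan T - Real.arctan (-T)) ≤ 16 := by linarith
    gcongr
  have hmid : ‖∫ t in (-T)..T, G (κ + t * Complex.I)‖ ≤ B * u ^ κ * (1 / T) + B * u ^ κ * (1 / T) + B * u ^ κ' * 16 := by
    have e : Complex.I • ∫ t in (-T)..T, G (κ + t * Complex.I) =
       ((∫ x in κ'..κ, G (x + (T:ℝ) * Complex.I)) - (∫ x in κ'..κ, G (x + (-T:ℝ) * Complex.I))) +
        Complex.I • ∫ y in (-T)..T, G (κ' + y * Complex.I) := by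
      linear_combination hrect
    have e2 := congrArg norm e
    rw [norm_smul, Complex.norm_I, one_mul] at e2
    rw [e2]
    refine (norm_add_le _ _).trans (add_le_add ((norm_sub_le _ _).trans (add_le_add ?_ ?_)) ?_)
    · exact hh T (abs_of_pos (by linarith))
    · exact hh (-T) (by rw [abs_neg, abs_of_pos (by linarith)])
    · rw [norm_smul, Complex.norm_I, one_mul]; exact hleft
  change ‖∫ t : ℝ, G (κ + t * Complex.I)‖ ≤ _
  rw [hsplit]
  refine (norm_add_le _ _).trans ((add_le_add ht1 ((norm_add_le _ _).trans (add_le_add hmid ht2))).trans (le_of_eq ?_))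
  ring

lemma aux_S1 : ∃ K > 0, ∀ᶠ l : ℝ in Filter.atTop, ∀ (E : ℤ) [NeZero E], Squarefree E → E ≠ 1 →
    ((4 * E.natAbs : ℕ) : ℝ) ≤ l ^ 4 → ∀ u : ℝ, 1 ≤ u → u ≤ 2 * Real.exp (l ^ 2) →
    ‖∑ n ∈ Finset.range (⌊u⌋₊ + 1), auxChi E n * ((ArithmeticFunction.vonMangoldt n : ℝ) : ℂ) * (1 - n / u : ℝ)‖ ≤
     K * (l ^ 2 * Real.exp (l ^ 2) * Real.exp (-(1/256000 * l))) := by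
  obtain ⟨C, hC, hLam⟩ := aux_Lam_sum
  refine ⟨(168 * 128000 + C) * (8 * Real.exp 2 + 32), by positivity, ?_⟩
  filter_upwards [aux_LL, Filter.eventually_ge_atTop 128000] with l hl hl1
  intro E _ hE hE1 hq u hu1 hu2
  have hχ := auxChi_ne_one hE hE1
  have hl0 : 0 < l := by linarith
  have hi : 0 < 1 / l ^ 2 := by positivity
  have hi1 : 1 / l ^ 2 ≤ 1/128000 / l := by
    rw [div_le_div_iff₀ (by positivity) hl0]; nlinarith
  have hi2 : 1/128000 / l ≤ 1/4 := by
    rw [div_le_iff₀ hl0]; linarith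
  have hi3 : 0 < 1/256000 / l := by positivity
  have hi4 : 1/256000 / l = 1/128000 / l / 2 := by ring
  have hB : (1:ℝ) / ((1 + 1 / l ^ 2) - 1) + C ≤ (168 * 128000 + C) * l ^ 2 := by
    rw [add_sub_cancel_left, one_div_one_div]
    nlinarith [one_le_pow₀ (by linarith : (1:ℝ) ≤ l) (n := 2)]
  have hB2 : 168 * 128000 * l ^ 2 ≤ (168 * 128000 + C) * l ^ 2 := by gcongr; linarith
  have hre : ∀ t : ℝ, (((1 + 1 / l ^ 2 : ℝ):ℂ) + t * Complex.I).re = 1 + 1 / l ^ 2 := by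
    intro t; rw [Complex.add_re, Complex.ofReal_re]; simp
  have hnz : ∀ t : ℝ, LFunction (auxChi E) (((1 + 1 / l ^ 2 : ℝ):ℂ) + t * Complex.I) ≠ 0 := fun t =>
    LFunction_ne_zero_of_one_le_re _ (Or.inl hχ) (by rw [hre]; linarith)
  have hp := aux_perron (auxChi E) (κ := 1 + 1 / l ^ 2) (by linarith) (u := u) (by linarith)
  have hcon := aux_contour (F := fun s => -(deriv (LFunction (auxChi E)) s / LFunction (auxChi E) s))
    (κ := 1 + 1 / l ^ 2) (κ' := 1 - 1/256000 / l) (T := Real.exp l) (B := (168 * 128000 + C) * l ^ 2) (u := u)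
    (by linarith) (by linarith) (by linarith) (by linarith) (Real.one_le_exp hl0.le) (by positivity) hu1
    (by
      intro s hs1 hs2 hs3
      obtain ⟨h1, h2⟩ := hl E hE hE1 hq s hs1 (by linarith) hs3
      refine ⟨?_, by rw [norm_neg]; linarith⟩
      exact (((differentiable_LFunction hχ).deriv s).div (differentiable_LFunction hχ s) h1).neg)
    (by
      have hc1 : Continuous (fun t : ℝ => ((1 + 1 / l ^ 2 : ℝ):ℂ) + t * Complex.I) := by fun_prop
      exact (((differentiable_LFunction hχ).deriv.continuous.comp hc1).div
        ((differentiable_LFunction hχ).continuous.comp hc1) hnz).neg)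
    (by
      intro t
      have hs : 1 < (((1 + 1 / l ^ 2 : ℝ):ℂ) + t * Complex.I).re := by rw [hre]; linarith
      have h1 := aux_Lchi_hasSum (auxChi E) hs
      rw [← h1.LSeries_eq]
      have h2 := aux_Lam_hasSum (s := ((1 + 1 / l ^ 2 : ℝ):ℂ)) (by rw [Complex.ofReal_re]; linarith)
      rw [← hre t] at h2
      refine (aux_LSeries_norm_le (g := fun n => ArithmeticFunction.vonMangoldt n) (fun n => ?_) h2).trans ?_
      · rw [norm_mul, Complex.norm_real, Real.norm_of_nonneg ArithmeticFunction.vonMangoldt_nonneg]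
        exact mul_le_of_le_one_left ArithmeticFunction.vonMangoldt_nonneg (DirichletCharacter.norm_le_one _ _)
      · rw [hre]
        exact (hLam _ (by linarith) (by linarith)).trans hB)
  rw [← hp] at hcon
  have hpi : ‖(2 * Real.pi : ℂ)‖ = 2 * Real.pi := by
    rw [norm_mul, Complex.norm_real, Complex.norm_two, Real.norm_of_nonneg Real.pi_pos.le]
  rw [norm_mul, hpi] at hcon
  have hpi1 : (1:ℝ) ≤ 2 * Real.pi := by linarith [Real.pi_gt_three]
  refine (le_mul_of_one_le_left (norm_nonneg _) hpi1).trans (hcon.trans ?_)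
  have hl2 : Real.log 2 ≤ 1 := by linarith [Real.log_two_lt_d9]
  have hX : 0 < 2 * Real.exp (l ^ 2) := by positivity
  have hlogX : Real.log (2 * Real.exp (l ^ 2)) = Real.log 2 + l ^ 2 := by
    rw [Real.log_mul (by norm_num) (Real.exp_pos _).ne', Real.log_exp]
  have hexp : Real.exp (-l) ≤ Real.exp (-(1/256000 * l)) := Real.exp_le_exp.mpr (by linarith)
  have g1 : u ^ (1 + 1 / l ^ 2) ≤ 2 * Real.exp (l ^ 2) * Real.exp 2 := by
    calc u ^ (1 + 1 / l ^ 2) ≤ (2 * Real.exp (l ^ 2)) ^ (1 + 1 / l ^ 2) := by gcongr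
      _ = 2 * Real.exp (l ^ 2) * Real.exp (Real.log (2 * Real.exp (l ^ 2)) * (1 / l ^ 2)) := by
          rw [Real.rpow_add hX, Real.rpow_one, Real.rpow_def_of_pos hX (1 / l ^ 2)]
      _ ≤ _ := by
          gcongr
          rw [hlogX, mul_one_div, div_le_iff₀ (by positivity)]
          nlinarith [one_le_pow₀ (by linarith : (1:ℝ) ≤ l) (n := 2)]
  have g2 : u ^ (1 - 1/256000 / l) ≤ 2 * Real.exp (l ^ 2) * Real.exp (-(1/256000 * l)) := by
    calc u ^ (1 - 1/256000 / l) ≤ (2 * Real.exp (l ^ 2)) ^ (1 - 1/256000 / l) := by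
          gcongr
          linarith
      _ = 2 * Real.exp (l ^ 2) * Real.exp (Real.log (2 * Real.exp (l ^ 2)) * (-(1/256000 / l))) := by
          rw [sub_eq_add_neg, Real.rpow_add hX, Real.rpow_one, Real.rpow_def_of_pos hX (-(1/256000 / l))]
      _ ≤ _ := by
          gcongr
          rw [hlogX]
          have : (Real.log 2 + l ^ 2) * (-(1/256000 / l)) = -(Real.log 2 * (1/256000 / l)) - 1/256000 * l := by
            field_simp; ring
          rw [this]
          have : 0 ≤ Real.log 2 * (1/256000 / l) := mul_nonneg (Real.log_nonneg (by norm_num)) hi3.le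
          linarith
  calc _ ≤ (168 * 128000 + C) * l ^ 2 * (4 * (2 * Real.exp (l ^ 2) * Real.exp 2) * Real.exp (-(1/256000 * l)) +
        16 * (2 * Real.exp (l ^ 2) * Real.exp (-(1/256000 * l)))) := by
        rw [div_eq_mul_inv, ← Real.exp_neg]
        gcongr
    _ = _ := by ring

end

section

lemma aux_diff (a : ℕ → ℂ) {B M u H : ℝ} (hu : 1 ≤ u) (hH : 1 ≤ H) (hB : 0 ≤ B)
    (ha : ∀ n : ℕ, (n : ℝ) ≤ u + H → ‖a n‖ ≤ B)
    (h1 : ‖∑ n ∈ Finset.range (⌊u⌋₊ + 1), a n * ((1 - n / u : ℝ) : ℂ)‖ ≤ M)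
    (h2 : ‖∑ n ∈ Finset.range (⌊u + H⌋₊ + 1), a n * ((1 - n / (u + H) : ℝ) : ℂ)‖ ≤ M) :
    H * ‖∑ n ∈ Finset.range (⌊u⌋₊ + 1), a n‖ ≤ 2 * (u + H) * M + H * ((H + 1) * B) := by
  have hM : 0 ≤ M := (norm_nonneg _).trans h1
  have key : ∀ v : ℝ, 1 ≤ v → (v : ℂ) * ∑ n ∈ Finset.range (⌊v⌋₊ + 1), a n * ((1 - n / v : ℝ) : ℂ)
      = ∑ n ∈ Finset.range (⌊v⌋₊ + 1), a n * ((v - n : ℝ) : ℂ) := by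
    intro v hv
    rw [Finset.mul_sum]
    refine Finset.sum_congr rfl fun n _ => ?_
    have hv' : (v : ℂ) ≠ 0 := by exact_mod_cast (by linarith : v ≠ 0)
    push_cast
    field_simp
  have hN : ⌊u⌋₊ + 1 ≤ ⌊u + H⌋₊ + 1 := by
    have := Nat.floor_mono (by linarith : u ≤ u + H)
    omega
  have e1 := key u hu
  have e2 := key (u + H) (by linarith)
  rw [← Finset.sum_range_add_sum_Ico (fun n : ℕ => a n * ((u + H - n : ℝ) : ℂ)) hN] at e2
  have e3 : ∑ n ∈ Finset.range (⌊u⌋₊ + 1), a n * ((u + H - n : ℝ) : ℂ) =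
      ∑ n ∈ Finset.range (⌊u⌋₊ + 1), a n * ((u - n : ℝ) : ℂ) +
      H * ∑ n ∈ Finset.range (⌊u⌋₊ + 1), a n := by
    rw [Finset.mul_sum, ← Finset.sum_add_distrib]
    refine Finset.sum_congr rfl fun n _ => ?_
    push_cast; ring
  have hI : ‖∑ n ∈ Finset.Ico (⌊u⌋₊ + 1) (⌊u + H⌋₊ + 1), a n * ((u + H - n : ℝ) : ℂ)‖ ≤
      (H + 1) * (B * H) := by
    have hc : ((Finset.Ico (⌊u⌋₊ + 1) (⌊u + H⌋₊ + 1)).card : ℝ) ≤ H + 1 := by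
      rw [Nat.card_Ico, Nat.cast_sub hN]
      push_cast
      have := Nat.floor_le (by linarith : 0 ≤ u + H)
      have := Nat.lt_floor_add_one u
      linarith
    refine (norm_sum_le_of_le _ (n := fun _ => B * H) fun n hn => ?_).trans ?_
    · rw [Finset.mem_Ico] at hn
      have g1 : u < n := Nat.lt_of_floor_lt (by omega)
      have g2 : (n : ℝ) ≤ u + H := (Nat.le_floor_iff (by linarith)).mp (by omega)
      rw [norm_mul, Complex.norm_real, Real.norm_of_nonneg (by linarith)]
      have := ha n g2
      gcongr
      linarith
    · rw [Finset.sum_const, nsmul_eq_mul]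
      gcongr
  have e4 : (H : ℂ) * ∑ n ∈ Finset.range (⌊u⌋₊ + 1), a n =
      ((u + H : ℝ) : ℂ) * ∑ n ∈ Finset.range (⌊u + H⌋₊ + 1), a n * ((1 - n / (u + H) : ℝ) : ℂ)
      - (u : ℂ) * ∑ n ∈ Finset.range (⌊u⌋₊ + 1), a n * ((1 - n / u : ℝ) : ℂ)
      - ∑ n ∈ Finset.Ico (⌊u⌋₊ + 1) (⌊u + H⌋₊ + 1), a n * ((u + H - n : ℝ) : ℂ) := by
    rw [e2, e1, e3]; ring
  have e5 := congrArg norm e4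
  rw [norm_mul, Complex.norm_real, Real.norm_of_nonneg (by linarith)] at e5
  rw [e5]
  refine (norm_sub_le _ _).trans ?_
  have := norm_sub_le (((u + H : ℝ) : ℂ) * ∑ n ∈ Finset.range (⌊u + H⌋₊ + 1), a n * ((1 - n / (u + H) : ℝ) : ℂ))
    ((u : ℂ) * ∑ n ∈ Finset.range (⌊u⌋₊ + 1), a n * ((1 - n / u : ℝ) : ℂ))
  rw [norm_mul, norm_mul, Complex.norm_real, Complex.norm_real, Real.norm_of_nonneg (by linarith),
    Real.norm_of_nonneg (by linarith)] at this
  have k1 := mul_le_mul_of_nonneg_left h2 (by linarith : 0 ≤ u + H)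
  have k2 := mul_le_mul_of_nonneg_left h1 (by linarith : 0 ≤ u)
  have k3 : u * M ≤ (u + H) * M := by gcongr; linarith
  nlinarith

lemma aux_abel_bd (a : ℕ → ℂ) (b : ℕ → ℝ) (hb : Antitone b) (hb0 : ∀ n, 0 ≤ b n) {T : ℝ} (N : ℕ)
    (h : ∀ m ≤ N, ‖∑ n ∈ Finset.range m, a n‖ ≤ T) :
    ‖∑ n ∈ Finset.range N, a n * (b n : ℂ)‖ ≤ T * b 0 := by
  rw [aux_abel a (fun n => (b n : ℂ)) N]
  refine (norm_add_le _ _).trans ?_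
  have h1 : ‖(∑ n ∈ Finset.range N, a n) * (b N : ℂ)‖ ≤ T * b N := by
    rw [norm_mul, Complex.norm_real, Real.norm_of_nonneg (hb0 N)]
    exact mul_le_mul_of_nonneg_right (h N le_rfl) (hb0 N)
  have h2 : ‖∑ n ∈ Finset.range N, (∑ k ∈ Finset.range (n + 1), a k) * ((b n : ℂ) - (b (n + 1) : ℂ))‖
      ≤ ∑ n ∈ Finset.range N, T * (b n - b (n + 1)) := by
    refine norm_sum_le_of_le _ fun n hn => ?_
    rw [Finset.mem_range] at hn
    have : 0 ≤ b n - b (n + 1) := sub_nonneg.mpr (hb (Nat.le_succ n))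
    rw [norm_mul, ← Complex.ofReal_sub, Complex.norm_real, Real.norm_of_nonneg this]
    exact mul_le_mul_of_nonneg_right (h _ (by omega)) this
  rw [← Finset.mul_sum, Finset.sum_range_sub'] at h2
  linarith

lemma aux_psi_theta (χ : ℕ → ℂ) (hχ : ∀ n, ‖χ n‖ ≤ 1) {u : ℝ} (hu : 1 ≤ u) :
    ‖∑ n ∈ Finset.range (⌊u⌋₊ + 1), χ n * ((ArithmeticFunction.vonMangoldt n : ℝ) : ℂ) -
      ∑ n ∈ Finset.range (⌊u⌋₊ + 1), (if n.Prime then χ n * ((Real.log n : ℝ) : ℂ) else 0)‖ ≤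
      2 * Real.sqrt u * Real.log u := by
  refine le_trans ?_ ((le_abs_self _).trans (Chebyshev.abs_psi_sub_theta_le_sqrt_mul_log hu))
  rw [Chebyshev.psi_eq_sum_Icc, Chebyshev.theta_eq_sum_Icc, ← Finset.sum_sub_distrib,
    Finset.sum_filter, ← Finset.sum_sub_distrib, ← Nat.range_succ_eq_Icc_zero]
  refine norm_sum_le_of_le _ fun n _ => ?_
  split_ifs with hp
  · rw [ArithmeticFunction.vonMangoldt_apply_prime hp]; simp
  · rw [sub_zero, sub_zero, norm_mul, Complex.norm_real,
      Real.norm_of_nonneg ArithmeticFunction.vonMangoldt_nonneg]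
    exact mul_le_of_le_one_left ArithmeticFunction.vonMangoldt_nonneg (hχ n)

lemma aux_primesum : ∃ c > 0, ∃ C > 0, ∀ᶠ l : ℝ in Filter.atTop, ∀ (E : ℤ), Squarefree E → E ≠ 1 →
    ((4 * E.natAbs : ℕ) : ℝ) ≤ l ^ 4 →
    |∑ p ∈ (Finset.range (⌊Real.exp (l ^ 2)⌋₊ + 1)).filter Nat.Prime, ((auxJ E p : ℤ) : ℝ)| ≤
      C * (Real.exp (l ^ 2) * Real.exp (-(c * l))) := by
  obtain ⟨K, hK, hS⟩ := aux_S1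
  set c : ℝ := 1 / 256000 with hc
  have hc0 : 0 < c := by rw [hc]; norm_num
  have hc1 : c < 1 := by rw [hc]; norm_num
  refine ⟨c / 4, by positivity, 2 * (4 * K + 6) * (32 / c ^ 2), by positivity, ?_⟩
  filter_upwards [hS, Filter.eventually_ge_atTop 2] with l hl hl2 E hE hE1 hq
  have hE0 : E ≠ 0 := hE.ne_zero
  have : NeZero E := ⟨hE0⟩
  set x := Real.exp (l ^ 2) with hx
  have hx0 : 0 < x := Real.exp_pos _
  have hlogx : Real.log x = l ^ 2 := Real.log_exp _
  set H := x * Real.exp (-(c * l / 2)) with hH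
  have hH0 : 0 < H := by positivity
  have hH1 : 1 ≤ H := by
    rw [hH, hx, ← Real.exp_add]
    apply Real.one_le_exp
    nlinarith
  have hHx : H ≤ x := mul_le_of_le_one_right hx0.le (Real.exp_le_one_iff.mpr (by nlinarith))
  have hx1 : 1 ≤ x := hH1.trans hHx
  have hnorm : ∀ n : ℕ, ‖auxChi E n‖ ≤ 1 := fun n => DirichletCharacter.norm_le_one _ _
  set M := K * (l ^ 2 * x * Real.exp (-(c * l))) with hM
  have hψ : ∀ u : ℝ, 1 ≤ u → u ≤ x →
      ‖∑ n ∈ Finset.range (⌊u⌋₊ + 1), auxChi E n * ((ArithmeticFunction.vonMangoldt n : ℝ) : ℂ)‖ ≤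
        (4 * K + 4) * l ^ 2 * H := by
    intro u hu hux
    have h := aux_diff (fun n => auxChi E n * ((ArithmeticFunction.vonMangoldt n : ℝ) : ℂ))
      (B := 2 * l ^ 2) (M := M) hu hH1 (by positivity)
      (by
        intro n hn
        rw [norm_mul, Complex.norm_real, Real.norm_of_nonneg ArithmeticFunction.vonMangoldt_nonneg]
        refine (mul_le_of_le_one_left ArithmeticFunction.vonMangoldt_nonneg (hnorm n)).trans ?_
        refine ArithmeticFunction.vonMangoldt_le_log.trans ?_
        rcases Nat.eq_zero_or_pos n with rfl | hn0
        · simp; positivity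
        · have : Real.log n ≤ Real.log (2 * x) :=
            Real.log_le_log (by exact_mod_cast hn0) (by linarith)
          rw [Real.log_mul (by norm_num) hx0.ne', hlogx] at this
          have := Real.log_two_lt_d9
          nlinarith)
      (hl E hE hE1 hq u hu (by linarith)) (hl E hE hE1 hq (u + H) (by linarith) (by linarith))
    have hM2 : 2 * (u + H) * M ≤ H * (4 * K * l ^ 2 * H) := by
      have : H * H = x * (x * Real.exp (-(c * l))) := by
        have : Real.exp (-(c * l)) = Real.exp (-(c * l / 2)) * Real.exp (-(c * l / 2)) := by
          rw [← Real.exp_add]; ring_nf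
        rw [hH, this]; ring
      calc 2 * (u + H) * M ≤ 2 * (x + x) * M := by
            have : 0 ≤ M := by positivity
            gcongr
        _ = 4 * K * l ^ 2 * (x * (x * Real.exp (-(c * l)))) := by rw [hM]; ring
        _ = _ := by rw [← this]; ring
    have h3 : H * ‖∑ n ∈ Finset.range (⌊u⌋₊ + 1), auxChi E n * ((ArithmeticFunction.vonMangoldt n : ℝ) : ℂ)‖
        ≤ H * ((4 * K + 4) * l ^ 2 * H) := by
      refine h.trans ((add_le_add hM2 (mul_le_mul_of_nonneg_left
        (mul_le_mul_of_nonneg_right (by linarith : H + 1 ≤ 2 * H) (by positivity)) hH0.le)).trans ?_)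
      apply le_of_eq; ring
    exact le_of_mul_le_mul_left h3 hH0
  have hsq : 2 * Real.sqrt x * Real.log x ≤ 2 * l ^ 2 * H := by
    rw [hlogx, hx, ← Real.exp_half, hH, hx, ← Real.exp_add]
    have : Real.exp (l ^ 2 / 2) ≤ Real.exp (l ^ 2 + -(c * l / 2)) := Real.exp_le_exp.mpr (by nlinarith)
    nlinarith [sq_nonneg l]
  have hθ : ∀ m ≤ ⌊x⌋₊ + 1, ‖∑ n ∈ Finset.range m,
      (if n.Prime then auxChi E n * ((Real.log n : ℝ) : ℂ) else 0)‖ ≤ (4 * K + 6) * l ^ 2 * H := by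
    intro m hm
    have hpos : 0 ≤ (4 * K + 6) * l ^ 2 * H := by positivity
    obtain rfl | rfl | ⟨k, rfl⟩ : m = 0 ∨ m = 1 ∨ ∃ k, m = k + 1 + 1 := by
      rcases m with _ | _ | k
      · simp
      · simp
      · exact Or.inr (Or.inr ⟨k, rfl⟩)
    · simpa using hpos
    · simpa using hpos
    have hk1 : (1:ℝ) ≤ ((k + 1 : ℕ) : ℝ) := by push_cast; linarith [(Nat.cast_nonneg k : (0:ℝ) ≤ k)]
    have hkx : ((k + 1 : ℕ) : ℝ) ≤ x := (Nat.le_floor_iff hx0.le).mp (by omega)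
    have a1 := hψ _ hk1 hkx
    have a2 := aux_psi_theta (fun n => auxChi E n) hnorm hk1
    rw [Nat.floor_natCast] at a1 a2
    have a3 : 2 * Real.sqrt ((k + 1 : ℕ) : ℝ) * Real.log ((k + 1 : ℕ) : ℝ) ≤ 2 * Real.sqrt x * Real.log x := by
      gcongr
    have a4 := norm_sub_norm_le
      (∑ n ∈ Finset.range (k + 1 + 1), (if n.Prime then auxChi E n * ((Real.log n : ℝ) : ℂ) else 0))
      (∑ n ∈ Finset.range (k + 1 + 1), auxChi E n * ((ArithmeticFunction.vonMangoldt n : ℝ) : ℂ))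
    rw [norm_sub_rev] at a4
    nlinarith
  have hfin := aux_abel_bd _ (fun n : ℕ => 1 / Real.log (max (n:ℝ) 2))
    (by
      intro i j hij
      have : (i:ℝ) ≤ j := by exact_mod_cast hij
      have h2 : 0 < Real.log (max (i:ℝ) 2) := Real.log_pos (lt_of_lt_of_le one_lt_two (le_max_right _ _))
      refine one_div_le_one_div_of_le h2 (Real.log_le_log ?_ (max_le_max_right _ this))
      exact lt_of_lt_of_le two_pos (le_max_right _ _))
    (by
      intro n
      have h2 : 0 < Real.log (max (n:ℝ) 2) := Real.log_pos (lt_of_lt_of_le one_lt_two (le_max_right _ _))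
      positivity) _ hθ
  have hrew : ∑ n ∈ Finset.range (⌊x⌋₊ + 1), (if n.Prime then auxChi E n * ((Real.log n : ℝ) : ℂ) else 0) *
      ((1 / Real.log (max (n:ℝ) 2) : ℝ) : ℂ) =
      ((∑ p ∈ (Finset.range (⌊x⌋₊ + 1)).filter Nat.Prime, ((auxJ E p : ℤ) : ℝ) : ℝ) : ℂ) := by
    rw [Finset.sum_filter, Complex.ofReal_sum]
    refine Finset.sum_congr rfl fun n _ => ?_
    split_ifs with hp
    · have h2 : (2:ℝ) ≤ n := by exact_mod_cast hp.two_le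
      rw [max_eq_left h2, auxChi_apply hE0, mul_assoc, ← Complex.ofReal_mul,
        mul_one_div_cancel (Real.log_pos (by linarith)).ne']
      simp
    · simp
  rw [hrew, Complex.norm_real, Real.norm_eq_abs] at hfin
  refine hfin.trans ?_
  have hb : 1 / Real.log (max ((0:ℕ):ℝ) 2) ≤ 2 := by
    rw [Nat.cast_zero, max_eq_right (by norm_num : (0:ℝ) ≤ 2), div_le_iff₀ (Real.log_pos (by norm_num))]
    linarith [Real.log_two_gt_d9]
  have hb0 : 0 ≤ 1 / Real.log (max ((0:ℕ):ℝ) 2) := by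
    rw [Nat.cast_zero, max_eq_right (by norm_num : (0:ℝ) ≤ 2)]
    have := Real.log_pos (by norm_num : (1:ℝ) < 2)
    positivity
  have hl2' : l ^ 2 ≤ 32 / c ^ 2 * Real.exp (c * l / 4) := by
    have := Real.quadratic_le_exp_of_nonneg (by positivity : 0 ≤ c * l / 4)
    have h0 : (c * l / 4) ^ 2 / 2 ≤ Real.exp (c * l / 4) := by
      have : 0 ≤ c * l / 4 := by positivity
      linarith
    calc l ^ 2 = 32 / c ^ 2 * ((c * l / 4) ^ 2 / 2) := by field_simp; norm_num
      _ ≤ _ := by gcongr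
  have hHe : H = x * Real.exp (-(c / 4 * l)) * Real.exp (-(c * l / 4)) := by
    have : Real.exp (-(c * l / 2)) = Real.exp (-(c / 4 * l)) * Real.exp (-(c * l / 4)) := by
      rw [← Real.exp_add]; congr 1; ring
    rw [hH, this]; ring
  calc (4 * K + 6) * l ^ 2 * H * (1 / Real.log (max ((0:ℕ):ℝ) 2))
      ≤ (4 * K + 6) * (32 / c ^ 2 * Real.exp (c * l / 4)) * H * 2 := by
        apply mul_le_mul _ hb hb0 (by positivity)
        gcongr
    _ = 2 * (4 * K + 6) * (32 / c ^ 2) * (x * Real.exp (-(c / 4 * l))) *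
        (Real.exp (c * l / 4) * Real.exp (-(c * l / 4))) := by rw [hHe]; ring
    _ = _ := by
        have : Real.exp (c * l / 4) * Real.exp (-(c * l / 4)) = 1 := by
          rw [← Real.exp_add, add_neg_cancel, Real.exp_zero]
        rw [this, mul_one]

end

section

lemma aux_prod_indicator {ι : Type*} (T : Finset ι) (j η : ι → ℤ) (hj : ∀ n ∈ T, j n = 1 ∨ j n = -1)
    (hη : ∀ n, η n = 1 ∨ η n = -1) :
    ((∀ n ∈ T, j n = η n) → ∏ n ∈ T, (1 + η n * j n) = 2 ^ T.card) ∧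
    ((¬ ∀ n ∈ T, j n = η n) → ∏ n ∈ T, (1 + η n * j n) = 0) := by
  constructor
  · intro h
    rw [Finset.prod_congr rfl (g := fun _ => (2:ℤ)), Finset.prod_const]
    intro n hn
    rw [h n hn]
    rcases hη n with h | h <;> rw [h] <;> norm_num
  · intro h
    push Not at h
    obtain ⟨n, hn, hne⟩ := h
    refine Finset.prod_eq_zero hn ?_
    rcases hη n with h1 | h1 <;> rcases hj n hn with h2 | h2 <;> rw [h1, h2] at hne ⊢ <;> norm_num
    · exact hne rfl
    · exact hne rfl

lemma aux_prod_bound {ι : Type*} (T : Finset ι) (j η : ι → ℤ) (hj : ∀ n, j n = 0 ∨ j n = 1 ∨ j n = -1)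
    (hη : ∀ n, η n = 1 ∨ η n = -1) :
    0 ≤ ∏ n ∈ T, (1 + η n * j n) ∧ ∏ n ∈ T, (1 + η n * j n) ≤ 2 ^ T.card := by
  have h : ∀ n, 0 ≤ 1 + η n * j n ∧ 1 + η n * j n ≤ 2 := by
    intro n
    rcases hη n with h | h <;> rcases hj n with h' | h' | h' <;> rw [h, h'] <;> norm_num
  refine ⟨Finset.prod_nonneg fun n _ => (h n).1, ?_⟩
  rw [← Finset.prod_const]
  exact Finset.prod_le_prod (fun n _ => (h n).1) (fun n _ => (h n).2)

def auxGg (n : ℕ) : ℤ := if n = 1 then -1 else n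

lemma auxGg_natAbs (n : ℕ) : (auxGg n).natAbs = n := by
  unfold auxGg
  split_ifs with h
  · subst h; rfl
  · simp

lemma auxJ_prod (S : Finset ℕ) (p : ℕ) (hp : Odd p) :
    auxJ (∏ n ∈ S, auxGg n) p = ∏ n ∈ S, auxJ (auxGg n) p := by
  induction S using Finset.induction_on with
  | empty => simp [auxJ, hp]
  | insert a s ha ih => rw [Finset.prod_insert ha, Finset.prod_insert ha, auxJ_mul_left, ih]

lemma aux_D (Y : ℕ) (S : Finset ℕ) (hS : S ⊆ insert 1 ((Finset.range (Y + 1)).filter Nat.Prime))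
    (hne : S.Nonempty) :
    Squarefree (∏ n ∈ S, auxGg n) ∧ ∏ n ∈ S, auxGg n ≠ 1 ∧ (∏ n ∈ S, auxGg n).natAbs ≤ primorial Y := by
  have hm : ∀ n ∈ S, n = 1 ∨ n.Prime := by
    intro n hn
    have := hS hn
    rw [Finset.mem_insert, Finset.mem_filter] at this
    tauto
  have hna : (∏ n ∈ S, auxGg n).natAbs = ∏ n ∈ S, n := by
    rw [← Int.natAbsHom_apply, map_prod]
    exact Finset.prod_congr rfl fun n _ => auxGg_natAbs n
  refine ⟨?_, ?_, ?_⟩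
  · rw [← Int.squarefree_natAbs, hna]
    refine Finset.squarefree_prod_of_pairwise_isCoprime ?_ ?_
    · intro a ha b hb hab
      rw [Function.onFun, ← Nat.coprime_iff_isRelPrime]
      rcases hm a ha with rfl | h1
      · simp
      rcases hm b hb with rfl | h2
      · simp
      exact (Nat.coprime_primes h1 h2).mpr hab
    · intro n hn
      rcases hm n hn with rfl | h
      · exact squarefree_one
      · exact h.prime.squarefree
  · intro h1
    rw [h1] at hna
    by_cases hp : ∃ n ∈ S, n ≠ 1
    · obtain ⟨n, hn, hn1⟩ := hp
      have : n ∣ ∏ n ∈ S, n := Finset.dvd_prod_of_mem _ hn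
      rw [← hna] at this
      simp at this
      exact hn1 this
    · push Not at hp
      have hS1 : S = {1} := Finset.eq_singleton_iff_nonempty_unique_mem.mpr ⟨hne, hp⟩
      rw [hS1] at h1
      simp [auxGg] at h1
  · rw [hna]
    have h1 : ∏ n ∈ S, n ≤ ∏ n ∈ insert 1 ((Finset.range (Y + 1)).filter Nat.Prime), n := by
      refine Finset.prod_le_prod_of_subset_of_one_le' hS fun i hi _ => ?_
      rw [Finset.mem_insert, Finset.mem_filter] at hi
      rcases hi with rfl | ⟨-, h⟩
      · exact le_rfl
      · exact h.one_le
    rw [Finset.prod_insert (by simp [Nat.not_prime_one]), one_mul] at h1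
    exact h1

lemma aux_comb (N Y : ℕ) (hY : 3 ≤ Y) (ε : ℕ → ℤ) (hε : ∀ q, ε q = 1 ∨ ε q = -1) (a : ℕ)
    (ha : a = 1 ∨ a = 3) (A : Finset ℕ)
    (hA : ∀ p, p ∈ A ↔ p ∈ Finset.range (N + 1) ∧ p.Prime ∧ p % 4 = a ∧
      ∀ q ∈ Finset.range (Y + 1), Nat.Prime q → jacobiSym (q : ℤ) p = ε q)
    (B : ℝ) (hB : 0 ≤ B) (h : ∀ E : ℤ, Squarefree E → E ≠ 1 → E.natAbs ≤ primorial Y →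
      |∑ p ∈ (Finset.range (N + 1)).filter Nat.Prime, ((auxJ E p : ℤ) : ℝ)| ≤ B) :
    |(A.card : ℝ) - (Nat.primeCounting N : ℝ) / 2 ^ (Nat.primeCounting Y + 1)| ≤ Y + 3 + B := by
  classical
  set Q := (Finset.range (N + 1)).filter Nat.Prime with hQ
  set P := (Finset.range (Y + 1)).filter Nat.Prime with hP
  set T := insert 1 P with hT
  have hQc : Nat.primeCounting N = Q.card := by
    rw [Nat.primeCounting, Nat.primeCounting', Nat.count_eq_card_filter_range]
  have hPc : Nat.primeCounting Y = P.card := by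
    rw [Nat.primeCounting, Nat.primeCounting', Nat.count_eq_card_filter_range]
  have h1P : 1 ∉ P := by simp [hP, Nat.not_prime_one]
  have hTc : T.card = Nat.primeCounting Y + 1 := by rw [hT, Finset.card_insert_of_notMem h1P, hPc]
  rw [← hTc, hQc]
  set η : ℕ → ℤ := fun n => if n = 1 then (if a = 1 then 1 else -1) else ε n with hη
  have hη1 : ∀ n, η n = 1 ∨ η n = -1 := by
    intro n
    simp only [hη]
    split_ifs
    · exact Or.inl rfl
    · exact Or.inr rfl
    · exact hε n
  set F : ℕ → ℤ := fun p => ∏ n ∈ T, (1 + η n * auxJ (auxGg n) p) with hF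
  have hFb : ∀ p, 0 ≤ F p ∧ F p ≤ 2 ^ T.card := fun p =>
    aux_prod_bound T (fun n => auxJ (auxGg n) p) η (fun n => auxJ_trichotomy _ _) hη1
  have hAQ : A ⊆ Q := by
    intro p hp
    rw [hA] at hp
    exact Finset.mem_filter.mpr ⟨hp.1, hp.2.1⟩
  have hind : ∀ p ∈ Q, Y < p → F p = if p ∈ A then 2 ^ T.card else 0 := by
    intro p hp hYp
    have hpp : p.Prime := (Finset.mem_filter.mp hp).2
    have hodd : Odd p := hpp.odd_of_ne_two (by omega)
    have hT1 : ∀ n ∈ T, n = 1 ∨ (n.Prime ∧ n ≤ Y) := by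
      intro n hn
      rw [hT, Finset.mem_insert, hP, Finset.mem_filter, Finset.mem_range] at hn
      rcases hn with h | h
      · exact Or.inl h
      · exact Or.inr ⟨h.2, by omega⟩
    have hj : ∀ n ∈ T, auxJ (auxGg n) p = 1 ∨ auxJ (auxGg n) p = -1 := by
      intro n hn
      rw [auxJ, if_pos hodd]
      apply jacobiSym.eq_one_or_neg_one
      rw [Int.gcd, auxGg_natAbs, Int.natAbs_natCast]
      rcases hT1 n hn with rfl | ⟨h1, h2⟩
      · simp
      · exact (Nat.coprime_primes h1 hpp).mpr (by omega)
    have hiff : p ∈ A ↔ ∀ n ∈ T, auxJ (auxGg n) p = η n := by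
      rw [hA, hT, Finset.forall_mem_insert]
      have e1 : auxJ (auxGg 1) p = η 1 ↔ p % 4 = a := by
        have h4 : p % 4 = 1 ∨ p % 4 = 3 := Nat.odd_mod_four_iff.mp (Nat.odd_iff.mp hodd)
        simp only [auxJ, if_pos hodd, auxGg, if_true, hη]
        rw [jacobiSym.at_neg_one hodd]
        rcases h4 with h4 | h4
        · rw [ZMod.χ₄_nat_one_mod_four h4, h4]
          rcases ha with rfl | rfl <;> simp
        · rw [ZMod.χ₄_nat_three_mod_four h4, h4]
          rcases ha with rfl | rfl <;> simp
      have e2 : (∀ n ∈ P, auxJ (auxGg n) p = η n) ↔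
          ∀ q ∈ Finset.range (Y + 1), Nat.Prime q → jacobiSym (q : ℤ) p = ε q := by
        simp only [hP, Finset.mem_filter, and_imp]
        refine forall_congr' fun n => forall_congr' fun _ => forall_congr' fun hn => ?_
        simp only [auxJ, if_pos hodd, auxGg, hη, if_neg hn.ne_one]
      rw [e1, e2]
      have := (Finset.mem_filter.mp hp).1
      tauto
    have := aux_prod_indicator T (fun n => auxJ (auxGg n) p) η hj hη1
    split_ifs with hpA
    · exact this.1 (hiff.mp hpA)
    · exact this.2 fun hh => hpA (hiff.mpr hh)
  have h2T : (0:ℝ) < 2 ^ T.card := by positivity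
  -- comparison of counts
  have hcmp : |2 ^ T.card * (A.card : ℝ) - ∑ p ∈ Q, (F p : ℝ)| ≤ 2 ^ T.card * (Y + 1) := by
    have e1 : 2 ^ T.card * (A.card : ℝ) = ∑ p ∈ Q, if p ∈ A then (2:ℝ) ^ T.card else 0 := by
      rw [← Finset.sum_filter, Finset.sum_const, nsmul_eq_mul, Finset.filter_mem_eq_inter,
        Finset.inter_eq_right.mpr hAQ, mul_comm]
    rw [e1, ← Finset.sum_sub_distrib]
    refine (Finset.abs_sum_le_sum_abs _ _).trans ?_
    have e2 : ∀ p ∈ Q, |(if p ∈ A then (2:ℝ) ^ T.card else 0) - (F p : ℝ)| ≤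
        if p ∈ Finset.range (Y + 1) then (2:ℝ) ^ T.card else 0 := by
      intro p hp
      split_ifs with h1 h2 h2
      · have := hFb p
        have g1 : (0:ℝ) ≤ F p := by exact_mod_cast this.1
        have g2 : (F p : ℝ) ≤ 2 ^ T.card := by exact_mod_cast this.2
        rw [abs_le]; constructor <;> linarith
      · rw [hind p hp (by rw [Finset.mem_range] at h2; omega), if_pos h1]; simp
      · have := hFb p
        have g1 : (0:ℝ) ≤ F p := by exact_mod_cast this.1
        have g2 : (F p : ℝ) ≤ 2 ^ T.card := by exact_mod_cast this.2
        rw [abs_le]; constructor <;> linarith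
      · rw [hind p hp (by rw [Finset.mem_range] at h2; omega), if_neg h1]; simp
    refine (Finset.sum_le_sum e2).trans ?_
    rw [← Finset.sum_filter, Finset.sum_const, nsmul_eq_mul, mul_comm]
    gcongr
    have : (Q.filter (· ∈ Finset.range (Y + 1))).card ≤ (Finset.range (Y + 1)).card :=
      Finset.card_le_card fun p hp => (Finset.mem_filter.mp hp).2
    rw [Finset.card_range] at this
    exact_mod_cast this
  -- expansion
  have hexp : ∀ p, Odd p → (F p : ℝ) = 1 + ∑ S ∈ T.powerset.erase ∅,
      ((∏ n ∈ S, η n : ℤ) : ℝ) * ((auxJ (∏ n ∈ S, auxGg n) p : ℤ) : ℝ) := by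
    intro p hp
    have : F p = 1 + ∑ S ∈ T.powerset.erase ∅, (∏ n ∈ S, η n) * auxJ (∏ n ∈ S, auxGg n) p := by
      simp only [hF]
      rw [Finset.prod_one_add, ← Finset.add_sum_erase _ _ (Finset.empty_mem_powerset T), Finset.prod_empty]
      congr 1
      refine Finset.sum_congr rfl fun S _ => ?_
      rw [Finset.prod_mul_distrib, auxJ_prod S p hp]
    rw [this]; push_cast; rfl
  have hF2 : ∀ p ∈ Q, |(F p : ℝ) - (1 + ∑ S ∈ T.powerset.erase ∅,
      ((∏ n ∈ S, η n : ℤ) : ℝ) * ((auxJ (∏ n ∈ S, auxGg n) p : ℤ) : ℝ))| ≤ if p = 2 then 2 ^ T.card else 0 := by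
    intro p hp
    have hpp : p.Prime := (Finset.mem_filter.mp hp).2
    split_ifs with h2
    · subst h2
      have hz : ∀ E, auxJ E 2 = 0 := fun E => by rw [auxJ, if_neg (by decide)]
      have : F 2 = 1 := by simp [hF, hz]
      simp [this, hz]
    · rw [hexp p (hpp.odd_of_ne_two h2), sub_self, abs_zero]
  have hsum : |∑ p ∈ Q, (F p : ℝ) - (Q.card : ℝ)| ≤ 2 ^ T.card * (1 + B) := by
    have e1 : ∑ p ∈ Q, (F p : ℝ) - (Q.card : ℝ) =
        ∑ p ∈ Q, ((F p : ℝ) - (1 + ∑ S ∈ T.powerset.erase ∅,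
          ((∏ n ∈ S, η n : ℤ) : ℝ) * ((auxJ (∏ n ∈ S, auxGg n) p : ℤ) : ℝ))) +
        ∑ S ∈ T.powerset.erase ∅, ((∏ n ∈ S, η n : ℤ) : ℝ) *
          ∑ p ∈ Q, ((auxJ (∏ n ∈ S, auxGg n) p : ℤ) : ℝ) := by
      rw [Finset.sum_sub_distrib, Finset.sum_add_distrib, Finset.sum_comm]
      simp only [Finset.mul_sum, Finset.sum_const, nsmul_eq_mul, mul_one]
      ring
    rw [e1]
    refine (abs_add_le _ _).trans ?_
    have e2 : |∑ p ∈ Q, ((F p : ℝ) - (1 + ∑ S ∈ T.powerset.erase ∅,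
          ((∏ n ∈ S, η n : ℤ) : ℝ) * ((auxJ (∏ n ∈ S, auxGg n) p : ℤ) : ℝ)))| ≤ 2 ^ T.card := by
      refine (Finset.abs_sum_le_sum_abs _ _).trans ((Finset.sum_le_sum hF2).trans ?_)
      rw [Finset.sum_ite_eq']
      split_ifs
      · exact le_rfl
      · positivity
    have e3 : |∑ S ∈ T.powerset.erase ∅, ((∏ n ∈ S, η n : ℤ) : ℝ) *
          ∑ p ∈ Q, ((auxJ (∏ n ∈ S, auxGg n) p : ℤ) : ℝ)| ≤ 2 ^ T.card * B := by
      refine (Finset.abs_sum_le_sum_abs _ _).trans ?_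
      refine (Finset.sum_le_sum (g := fun _ => B) fun S hS => ?_).trans ?_
      · rw [Finset.mem_erase, Finset.mem_powerset] at hS
        obtain ⟨d1, d2, d3⟩ := aux_D Y S hS.2 (Finset.nonempty_iff_ne_empty.mpr hS.1)
        rw [abs_mul]
        have : |((∏ n ∈ S, η n : ℤ) : ℝ)| = 1 := by
          have : |∏ n ∈ S, η n| = 1 := by
            rw [Finset.abs_prod]
            refine Finset.prod_eq_one fun n _ => ?_
            rcases hη1 n with h | h <;> rw [h] <;> rfl
          exact_mod_cast this
        rw [this, one_mul]
        exact h _ d1 d2 d3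
      · rw [Finset.sum_const, nsmul_eq_mul]
        gcongr
        have := Finset.card_le_card (Finset.erase_subset ∅ T.powerset)
        rw [Finset.card_powerset] at this
        exact_mod_cast this
    linarith
  have hfin : |2 ^ T.card * (A.card : ℝ) - (Q.card : ℝ)| ≤ 2 ^ T.card * (Y + 3 + B) := by
    have := abs_add_le (2 ^ T.card * (A.card : ℝ) - ∑ p ∈ Q, (F p : ℝ)) (∑ p ∈ Q, (F p : ℝ) - (Q.card : ℝ))
    rw [sub_add_sub_cancel] at this
    nlinarith
  have e : (A.card : ℝ) - (Q.card : ℝ) / 2 ^ T.card = (2 ^ T.card * (A.card : ℝ) - (Q.card : ℝ)) / 2 ^ T.card := by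
    field_simp
  rw [e, abs_div, abs_of_pos h2T, div_le_iff₀ h2T, mul_comm _ ((2:ℝ) ^ T.card)]
  exact hfin

lemma aux_mem_filter (s : Finset ℕ) (P : ℕ → Prop) (inst : DecidablePred P) (p : ℕ) :
    p ∈ @Finset.filter ℕ P inst s ↔ p ∈ s ∧ P p := Finset.mem_filter


end

open scoped Classical
/-- Prescribing Legendre symbols at all primes `q ≤ y ≤ log log x` together with a
congruence class `a mod 4`: the number of primes `p ≤ x` with `p ≡ a (mod 4)` and
`(q/p) = ε_q` for all primes `q ≤ y` equals `π(x)/2^{π(y)+1} + O(x e^{-c√(log x)})`. -/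
theorem stmt_12 :
    ∃ c > 0, ∃ C > 0, ∃ x₀ : ℝ, ∀ (x y : ℝ), x₀ ≤ x → 3 ≤ y →
      y ≤ Real.log (Real.log x) →
      ∀ (ε : ℕ → ℤ), (∀ q, ε q = 1 ∨ ε q = -1) →
      ∀ a : ℕ, (a = 1 ∨ a = 3) →
      |(((Finset.range (⌊x⌋₊ + 1)).filter (fun p : ℕ => p.Prime ∧ p % 4 = a ∧
            ∀ q ∈ Finset.range (⌊y⌋₊ + 1), Nat.Prime q → jacobiSym (q : ℤ) p = ε q)).card
          : ℝ) - (Nat.primeCounting ⌊x⌋₊ : ℝ) / 2 ^ (Nat.primeCounting ⌊y⌋₊ + 1)| ≤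
        C * x * Real.exp (-c * Real.sqrt (Real.log x)) := by
  obtain ⟨c, hc, C, hC, hps⟩ := aux_primesum
  obtain ⟨l₀, hl₀⟩ := Filter.eventually_atTop.mp hps
  refine ⟨min c 1, by positivity, C + 1, by positivity, Real.exp ((max l₀ 4) ^ 2), ?_⟩
  intro x y hx hy hyx ε hε a ha
  have hm4 : (4:ℝ) ≤ max l₀ 4 := le_max_right _ _
  have hx0 : 0 < x := (Real.exp_pos _).trans_le hx
  have hlog : (max l₀ 4) ^ 2 ≤ Real.log x := (Real.le_log_iff_exp_le hx0).mpr hx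
  set l := Real.sqrt (Real.log x) with hl
  have hlm : max l₀ 4 ≤ l := Real.le_sqrt_of_sq_le hlog
  have hl4 : 4 ≤ l := hm4.trans hlm
  have hl2 : l ^ 2 = Real.log x := Real.sq_sqrt ((sq_nonneg _).trans hlog)
  have hxl : Real.exp (l ^ 2) = x := by rw [hl2, Real.exp_log hx0]
  have hB := hl₀ l ((le_max_left _ _).trans hlm)
  rw [hxl] at hB
  have hloglog : Real.log (Real.log x) = 2 * Real.log l := by
    rw [← hl2, Real.log_pow]; norm_num
  have hlogl : Real.log l ≤ l - 1 := Real.log_le_sub_one_of_pos (by linarith)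
  have hlogl0 : 0 ≤ Real.log l := Real.log_nonneg (by linarith)
  have hYy : (⌊y⌋₊ : ℝ) ≤ y := Nat.floor_le (by linarith)
  have hY3 : 3 ≤ ⌊y⌋₊ := Nat.le_floor (by exact_mod_cast hy)
  have hprim : 4 * (primorial ⌊y⌋₊ : ℝ) ≤ l ^ 4 := by
    have h1 : (primorial ⌊y⌋₊ : ℝ) ≤ 4 ^ ⌊y⌋₊ := by exact_mod_cast primorial_le_four_pow _
    have h2 : (4:ℝ) ^ ⌊y⌋₊ ≤ l ^ 3 := by
      rw [← Real.exp_log (show (0:ℝ) < 4 ^ ⌊y⌋₊ by positivity), Real.log_pow,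
        ← Real.exp_log (show (0:ℝ) < l ^ 3 by positivity), Real.log_pow]
      apply Real.exp_le_exp.mpr
      have h4 : Real.log 4 ≤ 3 / 2 := by
        rw [show (4:ℝ) = 2 ^ 2 by norm_num, Real.log_pow]
        push_cast
        linarith [Real.log_two_lt_d9]
      calc (⌊y⌋₊ : ℝ) * Real.log 4 ≤ (2 * Real.log l) * (3 / 2) := by
            apply mul_le_mul _ h4 (Real.log_nonneg (by norm_num)) (by positivity)
            linarith
        _ = _ := by push_cast; ring
    calc 4 * (primorial ⌊y⌋₊ : ℝ) ≤ l * l ^ 3 := by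
          apply mul_le_mul hl4 (h1.trans h2) (by positivity) (by linarith)
      _ = l ^ 4 := by ring
  have key := fun A hA => aux_comb ⌊x⌋₊ ⌊y⌋₊ hY3 ε hε a ha A hA
    (C * (x * Real.exp (-(c * l)))) (by positivity)
    (fun E h1 h2 h3 => hB E h1 h2 (by
      refine le_trans ?_ hprim
      push_cast
      have : (E.natAbs : ℝ) ≤ primorial ⌊y⌋₊ := by exact_mod_cast h3
      simpa using this))
  refine le_trans (key _ ?_) ?_
  · intro p
    exact aux_mem_filter _ _ _ _
  have hmin : Real.exp (-(c * l)) ≤ Real.exp (-(min c 1) * l) := by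
    apply Real.exp_le_exp.mpr
    have : min c 1 ≤ c := min_le_left _ _
    nlinarith
  have hsmall : (⌊y⌋₊ : ℝ) + 3 ≤ x * Real.exp (-(min c 1) * l) := by
    have h1 : Real.exp l ≤ x * Real.exp (-(min c 1) * l) := by
      rw [← hxl, ← Real.exp_add]
      apply Real.exp_le_exp.mpr
      have : min c 1 ≤ 1 := min_le_right _ _
      nlinarith
    have := Real.quadratic_le_exp_of_nonneg (show 0 ≤ l by linarith)
    nlinarith
  calc (⌊y⌋₊ : ℝ) + 3 + C * (x * Real.exp (-(c * l)))
      ≤ x * Real.exp (-(min c 1) * l) + C * (x * Real.exp (-(min c 1) * l)) := by gcongr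
    _ = _ := by ring
end
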